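/- arXiv:1712.07456 — 6 statements merged into one kernel-verified Lean document; each statement's English description precedes it below -/
import Mathlib

section
/- For every real number $b > 0$, $\sum_{n=0}^{\infty} \frac{(-1)^n}{n!} \cdot \frac{\left|\Gamma\big(b - \omega(n+b)\big)\right|^2}{n+b} = \frac{1}{3}\,\Gamma(b)^3$, where $\omega = e^{2\pi i/3}$ and $|\cdot|$ denotes the complex absolute value. -/
/-!
Write `aₖ = (k + b)³`. Lagrange interpolation of the constant `1` at the nodes `a₀, …, a_N`,
evaluated at `0`, is the finite identity
`∑_{n ≤ N} ∏_{k ≤ N, k ≠ n} aₖ / (aₖ - aₙ) = 1` (`sum_prod_erase_eq_one`).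
The series is its limit as `N → ∞`. Indeed
`(k+b)³ - (n+b)³ = (k - n) |b - ω(n+b) + k|²`, so Euler's limit formula for `Γ(b - ω(n+b))` and for
`Γ(b)` shows that the `n`-th Lagrange weight tends to `3 / Γ(b)³` times the `n`-th term of the series
(`lagrangeWeight_tendsto`); the powers of `N` cancel because the nodes are cubes and
`1 + ω + ω² = 0`.

The passage to the limit is dominated convergence for series. For fixed `n` the absolute value of
the weight increases with `N`, since each new factor `aₖ / (aₖ - aₙ)` with `k > n` exceeds `1`; hence
the weights are dominated by their own limits. These are absolutely summable by
`|Γ(s)| ≤ Γ(Re s)`, the log-convexity of `Γ` and the ratio test (`summable_term`).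
-/

open Filter Topology

theorem norm_Gamma_le_Gamma_re {s : ℂ} (hs : 0 < s.re) :
    ‖Complex.Gamma s‖ ≤ Real.Gamma s.re := by
  rw [Complex.Gamma_eq_integral hs, Real.Gamma_eq_integral hs, Complex.GammaIntegral]
  refine (MeasureTheory.norm_integral_le_integral_norm _).trans_eq ?_
  refine MeasureTheory.setIntegral_congr_fun measurableSet_Ioi fun x hx => ?_
  have hx' : 0 < x := hx
  simp [Complex.norm_cpow_eq_rpow_re_of_pos hx', Complex.norm_exp]

/-- Midpoint log-convexity of `Γ` between `x` and `x + 1`. -/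
theorem Gamma_add_half_sq_le {x : ℝ} (hx : 0 < x) :
    Real.Gamma (x + 1 / 2) ^ 2 ≤ x * Real.Gamma x ^ 2 := by
  have h := Real.Gamma_mul_add_mul_le_rpow_Gamma_mul_rpow_Gamma hx (by linarith : 0 < x + 1)
    (by norm_num : (0:ℝ) < 1 / 2) (by norm_num : (0:ℝ) < 1 / 2) (by norm_num)
  have hG := Real.Gamma_pos_of_pos hx
  rw [Real.Gamma_add_one hx.ne', ← Real.mul_rpow hG.le (by positivity), ← Real.sqrt_eq_rpow,
    show 1 / 2 * x + 1 / 2 * (x + 1) = x + 1 / 2 by ring] at h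
  have hp : 0 < Real.Gamma (x + 1 / 2) := Real.Gamma_pos_of_pos (by linarith)
  calc _ ≤ (√(Real.Gamma x * (x * Real.Gamma x))) ^ 2 := by gcongr
    _ = _ := by rw [Real.sq_sqrt (by positivity)]; ring

/-- By `Gamma_add_half_sq_le` the ratio of consecutive terms is at most `(n + 3b) / (2(n + 1))`,
which tends to `1 / 2`. -/
theorem summable_Gamma_sq_div_factorial {b : ℝ} (hb : 0 < b) :
    Summable fun n : ℕ => Real.Gamma ((n + 3 * b) / 2) ^ 2 / n.factorial := by
  refine summable_of_ratio_norm_eventually_le (r := 3 / 4) (by norm_num) ?_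
  filter_upwards [eventually_ge_atTop ⌈6 * b⌉₊] with n hn
  have hn' : 6 * b ≤ n := Nat.ceil_le.mp hn
  have h := Gamma_add_half_sq_le (x := (n + 3 * b) / 2) (by positivity)
  rw [Real.norm_of_nonneg (by positivity), Real.norm_of_nonneg (by positivity),
    Nat.factorial_succ, div_le_iff₀ (by positivity)]
  push_cast
  rw [show ((n:ℝ) + 1 + 3 * b) / 2 = (n + 3 * b) / 2 + 1 / 2 by ring]
  refine h.trans ?_
  have : (n + 3 * b) / 2 ≤ 3 / 4 * ((n:ℝ) + 1) := by linarith
  calc _ ≤ 3 / 4 * ((n:ℝ) + 1) * Real.Gamma ((n + 3 * b) / 2) ^ 2 := by gcongr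
    _ = _ := by field_simp

/-- The Lagrange basis polynomials at `a₀, …, a_N` sum to `1`; this is that identity at `0`. -/
theorem sum_prod_erase_eq_one {a : ℕ → ℝ} (ha : Function.Injective a) (N : ℕ) :
    ∑ n ∈ Finset.range (N + 1), ∏ k ∈ (Finset.range (N + 1)).erase n, a k / (a k - a n) = 1 := by
  have h := congrArg (Polynomial.eval 0) (Lagrange.sum_basis (s := Finset.range (N + 1)) (v := a)
    ha.injOn ⟨0, by simp⟩)
  rw [Polynomial.eval_finsetSum, Polynomial.eval_one] at h
  rw [← h]
  refine Finset.sum_congr rfl fun n _ => ?_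
  rw [Lagrange.basis, Polynomial.eval_prod]
  refine Finset.prod_congr rfl fun k hk => ?_
  have : a k - a n ≠ 0 := sub_ne_zero.mpr (ha.ne (Finset.ne_of_mem_erase hk))
  have h2 : a n - a k ≠ 0 := sub_ne_zero.mpr (ha.ne (Finset.ne_of_mem_erase hk).symm)
  simp [Lagrange.basisDivisor]
  field_simp
  ring

theorem prod_erase_sub (n m : ℕ) :
    ∏ k ∈ (Finset.range (n + m + 1)).erase n, ((k : ℝ) - n) =
      (-1) ^ n * n.factorial * m.factorial := by
  have key : ∏ k ∈ Finset.range n, ((k : ℝ) - n) = (-1) ^ n * n.factorial := by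
    rw [← Finset.prod_range_reflect, ← Finset.prod_range_add_one_eq_factorial]
    push_cast
    rw [← Finset.card_range n, ← Finset.prod_const, Finset.card_range, ← Finset.prod_mul_distrib]
    refine Finset.prod_congr rfl fun k hk => ?_
    have := Finset.mem_range.mp hk
    rw [Nat.sub_sub, Nat.cast_sub (by omega)]
    push_cast; ring
  induction m with
  | zero => simp [Finset.range_add_one, key]
  | succ m ih =>
    rw [show n + (m + 1) + 1 = (n + m + 1) + 1 by ring, Finset.range_add_one,
      Finset.erase_insert_of_ne (by omega), Finset.prod_insert (by simp), ih, Nat.factorial_succ]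
    push_cast; ring

/-- The point `b - ω(n + b)`, with `ω = e^{2πi/3}`, at which `Γ` is evaluated in the `n`-th term. -/
noncomputable def rotatedPoint (b : ℝ) (n : ℕ) : ℂ :=
  b - Complex.exp (2 * Real.pi * Complex.I / 3) * (n + b)

theorem exp_two_pi_I_div_three :
    Complex.exp (2 * Real.pi * Complex.I / 3) = ⟨-1 / 2, √3 / 2⟩ := by
  have h : (2 * Real.pi * Complex.I / 3 : ℂ) = ((Real.pi - Real.pi / 3 : ℝ) : ℂ) * Complex.I := by
    push_cast; ring
  rw [h]
  apply Complex.ext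
  · rw [Complex.exp_ofReal_mul_I_re, Real.cos_pi_sub, Real.cos_pi_div_three]; norm_num
  · rw [Complex.exp_ofReal_mul_I_im, Real.sin_pi_sub, Real.sin_pi_div_three]

theorem rotatedPoint_re (b : ℝ) (n : ℕ) : (rotatedPoint b n).re = (n + 3 * b) / 2 := by
  rw [rotatedPoint, exp_two_pi_I_div_three]
  simp
  ring

/-- The right-hand side is the cofactor of `k - n` in `(k + b)³ - (n + b)³`. -/
theorem norm_rotatedPoint_add_sq (b : ℝ) (n k : ℕ) :
    ‖rotatedPoint b n + k‖ ^ 2 = (k + b) ^ 2 + (k + b) * (n + b) + (n + b) ^ 2 := by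
  rw [rotatedPoint, exp_two_pi_I_div_three, ← Complex.normSq_eq_norm_sq, Complex.normSq_apply]
  have h3 : √3 ^ 2 = (3 : ℝ) := Real.sq_sqrt (by norm_num)
  simp
  linear_combination ((n + b) ^ 2 / 4) * h3

/-- The power of `N` is `N ^ (2 Re s) = N ^ (3b + n)` for `s = b - ω(n + b)`. -/
theorem norm_GammaSeq_sq {b : ℝ} (n : ℕ) {N : ℕ} (hN : 0 < N) :
    ‖Complex.GammaSeq (rotatedPoint b n) N‖ ^ 2 =
      ((N : ℝ) ^ b) ^ 3 * (N : ℝ) ^ n * (N.factorial : ℝ) ^ 2 /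
        ∏ k ∈ Finset.range (N + 1), (((k : ℝ) + b) ^ 2 + (k + b) * (n + b) + (n + b) ^ 2) := by
  have hN' : (0 : ℝ) < N := by exact_mod_cast hN
  have hpow : ((N : ℝ) ^ (rotatedPoint b n).re) ^ 2 = ((N : ℝ) ^ b) ^ 3 * (N : ℝ) ^ n := by
    rw [rotatedPoint_re, ← Real.rpow_mul_natCast hN'.le, ← Real.rpow_mul_natCast hN'.le,
      ← Real.rpow_add_natCast hN'.ne']
    congr 1
    push_cast; ring
  rw [Complex.GammaSeq, norm_div, norm_mul, Complex.norm_natCast_cpow_of_pos hN,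
    Complex.norm_natCast, norm_prod, div_pow, mul_pow, hpow, ← Finset.prod_pow]
  simp_rw [norm_rotatedPoint_add_sq]

/-- The Lagrange weights at the nodes `(k + b)³`, in terms of the Euler sequences that converge to
`Γ(b - ω(n + b))` and `Γ(b)`. The last factor tends to `1`. -/
theorem prod_erase_eq_GammaSeq {b : ℝ} (hb : 0 < b) {n N : ℕ} (hN : 0 < N) (hn : n ≤ N) :
    ∏ k ∈ (Finset.range (N + 1)).erase n,
        ((k : ℝ) + b) ^ 3 / (((k : ℝ) + b) ^ 3 - ((n : ℝ) + b) ^ 3) =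
      3 * ((-1) ^ n / n.factorial * ‖Complex.GammaSeq (rotatedPoint b n) N‖ ^ 2 / (n + b)) /
        Real.GammaSeq b N ^ 3 * (N.descFactorial n / (N : ℝ) ^ n) := by
  have hN' : (0 : ℝ) < N := by exact_mod_cast hN
  have hmem : n ∈ Finset.range (N + 1) := Finset.mem_range.mpr (by omega)
  obtain ⟨m, rfl⟩ := Nat.exists_eq_add_of_le hn
  have hsub := prod_erase_sub n m
  have hdesc : ((n + m).descFactorial n : ℝ) = (n + m).factorial / m.factorial := by
    rw [eq_div_iff (by positivity), mul_comm]
    have := Nat.factorial_mul_descFactorial hn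
    rw [Nat.add_sub_cancel_left] at this
    exact_mod_cast this
  have hterm : ∀ k : ℕ, ((k : ℝ) + b) ^ 3 - ((n : ℝ) + b) ^ 3 =
      (((k : ℝ) + b) ^ 2 + (k + b) * (n + b) + (n + b) ^ 2) * (k - n) := fun k => by ring
  -- In the full Euler products the factors at `k = n` are `n + b` and `3(n + b)²`: split them off.
  have hA := Finset.mul_prod_erase _ (fun k : ℕ => (k : ℝ) + b) hmem
  have hQ := Finset.mul_prod_erase _
    (fun k : ℕ => ((k : ℝ) + b) ^ 2 + (k + b) * (n + b) + (n + b) ^ 2) hmem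
  have hA0 : 0 < ∏ k ∈ (Finset.range (n + m + 1)).erase n, ((k : ℝ) + b) :=
    Finset.prod_pos fun k _ => by positivity
  have hQ0 : 0 < ∏ k ∈ (Finset.range (n + m + 1)).erase n,
      (((k : ℝ) + b) ^ 2 + (k + b) * (n + b) + (n + b) ^ 2) :=
    Finset.prod_pos fun k _ => by positivity
  rw [norm_GammaSeq_sq n hN, Real.GammaSeq, Finset.prod_div_distrib, Finset.prod_pow, hdesc]
  simp_rw [hterm]
  rw [Finset.prod_mul_distrib, hsub, ← hQ]
  simp_rw [add_comm b]
  rw [← hA]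
  have hr : (0 : ℝ) < ((n + m : ℕ) : ℝ) ^ b := by positivity
  have hnb : (0 : ℝ) < n + b := by positivity
  have hsign : ((-1 : ℝ) ^ n) * (-1) ^ n = 1 := by rw [← mul_pow]; norm_num
  have hs0 : ((-1 : ℝ) ^ n) ≠ 0 := by positivity
  have hf0 : ((n + m).factorial : ℝ) ≠ 0 := by positivity
  generalize ∏ k ∈ (Finset.range (n + m + 1)).erase n, ((k : ℝ) + b) = A at *
  generalize ∏ k ∈ (Finset.range (n + m + 1)).erase n,
      (((k : ℝ) + b) ^ 2 + (k + b) * (n + b) + (n + b) ^ 2) = Q at *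
  generalize ((n + m : ℕ) : ℝ) ^ b = r at *
  generalize ((-1 : ℝ) ^ n) = e at *
  generalize ((n + m).factorial : ℝ) = F at *
  generalize ((n + m : ℕ) : ℝ) = M at *
  generalize (n : ℝ) + b = a at *
  have he : e ^ 2 = 1 := by rw [sq, hsign]
  field_simp
  rw [he]
  ring

/-- The value at `0` of the `n`-th Lagrange basis polynomial for the nodes `(k + b)³`, `k ≤ N`,
extended by `0` to `n > N`. -/
noncomputable def lagrangeWeight (b : ℝ) (N n : ℕ) : ℝ :=
  if n ≤ N then ∏ k ∈ (Finset.range (N + 1)).erase n,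
    ((k : ℝ) + b) ^ 3 / (((k : ℝ) + b) ^ 3 - ((n : ℝ) + b) ^ 3) else 0

/-- Passing from `N` to `N + 1 > n` multiplies the weight by `a / (a - c) ≥ 1`, where
`a = (N + 1 + b)³` and `c = (n + b)³`. -/
theorem abs_lagrangeWeight_monotone {b : ℝ} (hb : 0 < b) (n : ℕ) :
    Monotone fun N => |lagrangeWeight b N n| := by
  refine monotone_nat_of_le_succ fun N => ?_
  by_cases hn : n ≤ N
  · rw [lagrangeWeight, lagrangeWeight, if_pos hn, if_pos (by omega), Finset.range_add_one (n := N + 1),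
      Finset.erase_insert_of_ne (by omega), Finset.prod_insert (by simp), abs_mul]
    refine le_mul_of_one_le_left (abs_nonneg _) ?_
    have h : ((n : ℝ) + b) ^ 3 < (((N + 1 : ℕ) : ℝ) + b) ^ 3 := by
      have : (n : ℝ) < ((N + 1 : ℕ) : ℝ) := by exact_mod_cast Nat.lt_succ_of_le hn
      gcongr
    have h0 : 0 < ((n : ℝ) + b) ^ 3 := by positivity
    rw [abs_of_pos (div_pos (by linarith) (by linarith)), one_le_div (by linarith)]
    linarith
  · rw [lagrangeWeight, if_neg hn, abs_zero]
    exact abs_nonneg _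

theorem lagrangeWeight_tendsto {b : ℝ} (hb : 0 < b) (n : ℕ) :
    Tendsto (fun N => lagrangeWeight b N n) atTop
      (𝓝 (3 * ((-1) ^ n / n.factorial * ‖Complex.Gamma (rotatedPoint b n)‖ ^ 2 / (n + b)) /
        Real.Gamma b ^ 3)) := by
  have hdesc : Tendsto (fun N : ℕ => (N.descFactorial n : ℝ) / (N : ℝ) ^ n) atTop (𝓝 1) := by
    refine (Asymptotics.isEquivalent_iff_tendsto_one ?_).mp (isEquivalent_descFactorial n)
    filter_upwards [eventually_gt_atTop 0] with N hN
    positivity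
  have hG : Real.Gamma b ^ 3 ≠ 0 := pow_ne_zero _ (Real.Gamma_pos_of_pos hb).ne'
  have h := ((((((Complex.GammaSeq_tendsto_Gamma (rotatedPoint b n)).norm.pow 2).const_mul
    ((-1 : ℝ) ^ n / n.factorial)).div_const ((n : ℝ) + b)).const_mul 3).div
    ((Real.GammaSeq_tendsto_Gamma b).pow 3) hG).mul hdesc
  rw [mul_one] at h
  refine h.congr' ?_
  filter_upwards [eventually_ge_atTop n, eventually_gt_atTop 0] with N hn hN
  rw [lagrangeWeight, if_pos hn, prod_erase_eq_GammaSeq hb hN hn, Pi.div_apply]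

theorem tsum_lagrangeWeight {b : ℝ} (hb : 0 < b) (N : ℕ) : ∑' n, lagrangeWeight b N n = 1 := by
  have hinj : Function.Injective fun k : ℕ => ((k : ℝ) + b) ^ 3 := by
    refine StrictMono.injective fun i j hij => ?_
    have : (i : ℝ) < j := by exact_mod_cast hij
    gcongr
  rw [tsum_eq_sum (s := Finset.range (N + 1)), ← sum_prod_erase_eq_one hinj N]
  · refine Finset.sum_congr rfl fun n hn => ?_
    rw [lagrangeWeight, if_pos (Nat.lt_succ_iff.mp (Finset.mem_range.mp hn))]
  · intro n hn
    rw [lagrangeWeight, if_neg]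
    simpa [Nat.lt_succ_iff] using hn

theorem summable_term {b : ℝ} (hb : 0 < b) :
    Summable fun n : ℕ => (-1 : ℝ) ^ n / n.factorial *
      ‖Complex.Gamma (rotatedPoint b n)‖ ^ 2 / (n + b) := by
  refine Summable.of_norm_bounded ((summable_Gamma_sq_div_factorial hb).div_const b) fun n => ?_
  have hre := rotatedPoint_re b n
  have h := norm_Gamma_le_Gamma_re (s := rotatedPoint b n) (by rw [hre]; positivity)
  rw [hre] at h
  have hnb : b ≤ n + b := le_add_of_nonneg_left n.cast_nonneg
  rw [norm_div, norm_mul, norm_div, norm_pow, norm_neg, norm_one, one_pow, Real.norm_natCast,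
    norm_pow, norm_norm, Real.norm_of_nonneg (by positivity : (0 : ℝ) ≤ n + b), one_div_mul_eq_div]
  gcongr

/-- For every real `b > 0`,
`∑_{n=0}^∞ (-1)^n/n! · |Γ(b - ω(n+b))|² / (n+b) = Γ(b)³/3`, where `ω = e^{2πi/3}`. -/
theorem stmt_1 (b : ℝ) (hb : 0 < b) :
    HasSum (fun n : ℕ => (-1 : ℝ) ^ n / n.factorial *
        ‖Complex.Gamma (b - Complex.exp (2 * Real.pi * Complex.I / 3) * (n + b))‖ ^ 2 /
        (n + b))
      (Real.Gamma b ^ 3 / 3) := by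
  have hs := summable_term hb
  have hlim := tendsto_tsum_of_dominated_convergence
    ((hs.mul_left 3).div_const (Real.Gamma b ^ 3)).abs (lagrangeWeight_tendsto hb)
    (Eventually.of_forall fun N n =>
      (abs_lagrangeWeight_monotone hb n).ge_of_tendsto (lagrangeWeight_tendsto hb n).abs N)
  simp_rw [tsum_lagrangeWeight hb] at hlim
  have h := tendsto_nhds_unique hlim tendsto_const_nhds
  rw [tsum_div_const, tsum_mul_left] at h
  have hG : Real.Gamma b ^ 3 ≠ 0 := pow_ne_zero _ (Real.Gamma_pos_of_pos hb).ne'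
  rw [div_eq_one_iff_eq hG] at h
  rw [← h, mul_div_cancel_left₀ _ three_ne_zero]
  exact hs.hasSum
end

section
/- For every real number $b > 0$, $\int_{-\infty}^{\infty} \frac{e^{i b\sqrt{3}\, x}}{\cosh^{3b} x}\; \sum_{n=0}^{\infty} \frac{(b)_n (3b)_n}{(b+1)_n\, n!} \left(-\frac{e^{i\sqrt{3}x}}{2\cosh x}\right)^n dx = 2^{3b-1}\, \frac{b}{3}\, \frac{\Gamma(b)^3}{\Gamma(3b)}$, where $(a)_n = a(a+1)\cdots(a+n-1)$ denotes the Pochhammer symbol and $\cosh^{3b} x = (\cosh x)^{3b}$ is the real power of the positive real number $\cosh x$. -/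
/-!
Put `phi(β, γ) = e^{b(β+γ)} (1 + e^β + e^γ)^{-3b}` and `ω = e^{2πi/3}`. Euler's integral for
`₂F₁(b, 3b; b+1; z)` turns the integrand at `x` into `b 2^{3b} ∫₀^∞ phi(-R, ω R - s) ds` with
`R = 2x` (`hyp_eq_integral`, `integrand_eq`). The integrand at `-x` is the complex conjugate, so
the integral over the line is `b 2^{3b} Re I(ω)`, where
`I(κ) = ∫₀^∞ ∫₀^∞ phi(-R, κ R - s) ds dR` (`tailI`, `integral_hypIntegrand`).

The key point is that `Re I(κ)` is constant as `κ` moves along the unit circle from `ω` to `-1`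
(`tailI_re`). The derivative of `I(e^{iψ})` is `i κ ∫₀^∞ R phi(-R, κ R) dR`, an integral over a
single ray. By holomorphy, the ray may be rotated: `∫₀^∞ l² R phi(-R l, κ R l) dR` does not depend
on `l` (`rot_deriv`). Taking `l = -conj κ` turns the pair of directions `(-1, κ)` into
`(conj κ, -1)`, which is its conjugate with the entries exchanged. As `phi` is symmetric and real on
real arguments, `κ ∫ R phi(-R, κ R) dR` is real (`ray_real`), and the derivative of `I` is purely
imaginary. All points met stay in a sector where `1 + e^β + e^γ` has positive real part (`base_re`),
so no branch cut is crossed.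

Finally, `I(-1)` is the integral of `phi` over the real chamber `γ < β < 0`. Expressing `Γ(b)³` as a
triple integral, cutting it into the six orderings of the variables (`chamber_sum`) and integrating
out the translation in the direction `(1, 1, 1)`, which gives `Γ(3b)`, yields
`I(-1) = Γ(b)³ / (6 Γ(3b))` (`chamber_eval`, `tailI_neg_one`).
-/

namespace HypIntegral

open MeasureTheory Set Filter Topology

/-! ### The kernel and its domain of holomorphy -/

/-- The kernel `e^{b(β+γ)} (1 + e^β + e^γ)^{-3b}`, with the principal branch of the power. It is the
function `e^{b(α+β+γ)} (e^α + e^β + e^γ)^{-3b}` of three variables, which is symmetric and invariant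
under diagonal translations, restricted to `α = 0`. -/
noncomputable def phi (b : ℝ) (β γ : ℂ) : ℂ :=
  Complex.exp (b * (β + γ)) * (1 + Complex.exp β + Complex.exp γ) ^ ((-(3 * b) : ℝ) : ℂ)

/-- The open sector `|Im z| < -2 Re z` around the negative real axis. For `β`, `γ` in it,
`1 + e^β + e^γ` stays in the right half-plane, so that `phi b` is holomorphic on `cone × cone`. -/
def cone : Set ℂ := {z | |z.im| < -2 * z.re}

lemma cone_re {z : ℂ} (hz : z ∈ cone) : z.re < 0 := by
  have h : |z.im| < -2 * z.re := hz
  linarith [abs_nonneg z.im]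

lemma exp_re_gt {z : ℂ} (hz : z ∈ cone) : -0.48 ≤ (Complex.exp z).re := by
  have h0 := cone_re hz
  have h : |z.im| < -2 * z.re := hz
  rcases le_total |z.im| (Real.pi / 2) with h1 | h1
  · rw [Complex.exp_re]
    have := Real.cos_nonneg_of_mem_Icc (x := z.im) ⟨by linarith [(abs_le.1 h1).1], (abs_le.1 h1).2⟩
    have := mul_nonneg (Real.exp_pos z.re).le this
    linarith
  -- here `Re z < -π / 4`, and `e^{-π/4} < 0.48`
  · have h2 : 0.785 ≤ -z.re := by
      have := Real.pi_gt_d2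
      linarith
    have h3 : Real.exp z.re ≤ 0.48 := by
      have h4 := Real.quadratic_le_exp_of_nonneg (x := -z.re) (by linarith)
      rw [Real.exp_neg] at h4
      have h5 : (1 / 0.48 : ℝ) ≤ (Real.exp z.re)⁻¹ := by
        refine le_trans ?_ h4
        nlinarith
      have h6 := Real.exp_pos z.re
      rw [← one_div, div_le_div_iff₀ (by norm_num) h6] at h5
      linarith
    have h7 := (abs_le.1 (Complex.abs_re_le_norm (Complex.exp z))).1
    rw [Complex.norm_exp] at h7
    linarith

lemma base_re {β γ : ℂ} (hβ : β ∈ cone) (hγ : γ ∈ cone) :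
    0.04 ≤ (1 + Complex.exp β + Complex.exp γ).re := by
  have := exp_re_gt hβ
  have := exp_re_gt hγ
  simp only [Complex.add_re, Complex.one_re]
  linarith

lemma base_slit {β γ : ℂ} (hβ : β ∈ cone) (hγ : γ ∈ cone) :
    1 + Complex.exp β + Complex.exp γ ∈ Complex.slitPlane :=
  Or.inl (by linarith [base_re hβ hγ])

lemma norm_base_cpow_le {β γ : ℂ} (hβ : β ∈ cone) (hγ : γ ∈ cone) {r : ℝ} (hr : r ≤ 0) :
    ‖(1 + Complex.exp β + Complex.exp γ) ^ (r : ℂ)‖ ≤ (0.04 : ℝ) ^ r := by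
  rw [Complex.norm_cpow_real]
  exact Real.rpow_le_rpow_of_nonpos (by norm_num)
    ((base_re hβ hγ).trans (Complex.re_le_norm _)) hr

lemma norm_phi_le {b : ℝ} (hb : 0 < b) {β γ : ℂ} (hβ : β ∈ cone) (hγ : γ ∈ cone) :
    ‖phi b β γ‖ ≤ (0.04 : ℝ) ^ (-(3 * b)) * Real.exp (b * (β.re + γ.re)) := by
  rw [phi, norm_mul, Complex.norm_exp, mul_comm]
  have := norm_base_cpow_le hβ hγ (r := -(3 * b)) (by linarith)
  simp only [Complex.re_ofReal_mul, Complex.add_re]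
  gcongr

lemma phi_symm (b : ℝ) (β γ : ℂ) : phi b β γ = phi b γ β := by
  rw [phi, phi, add_comm β γ, add_right_comm]

lemma phi_conj {b : ℝ} {β γ : ℂ} (hβ : β ∈ cone) (hγ : γ ∈ cone) :
    phi b (starRingEnd ℂ β) (starRingEnd ℂ γ) = starRingEnd ℂ (phi b β γ) := by
  have h := Complex.conj_cpow (1 + Complex.exp β + Complex.exp γ) ((-(3 * b) : ℝ) : ℂ)
    (Complex.mem_slitPlane_iff_arg.1 (base_slit hβ hγ)).1
  rw [Complex.conj_ofReal] at h
  rw [phi, phi, map_mul, ← h, ← Complex.exp_conj]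
  simp only [map_add, map_mul, map_one, Complex.conj_ofReal, ← Complex.exp_conj]

@[fun_prop]
lemma measurable_phi {α : Type*} [MeasurableSpace α] (b : ℝ) {f g : α → ℂ} (hf : Measurable f)
    (hg : Measurable g) : Measurable fun a => phi b (f a) (g a) := by
  unfold phi
  fun_prop

/-- The partial derivative of `phi b` in its first variable; since `phi b` is symmetric, the
partial derivative in the second one is `dphi b γ β`. -/
noncomputable def dphi (b : ℝ) (β γ : ℂ) : ℂ :=
  b * phi b β γ - 3 * b * Complex.exp (b * (β + γ)) *
    (1 + Complex.exp β + Complex.exp γ) ^ ((-(3 * b) - 1 : ℝ) : ℂ) * Complex.exp β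

@[fun_prop]
lemma measurable_dphi {α : Type*} [MeasurableSpace α] (b : ℝ) {f g : α → ℂ} (hf : Measurable f)
    (hg : Measurable g) : Measurable fun a => dphi b (f a) (g a) := by
  unfold dphi
  fun_prop

lemma hasDerivAt_phi (b : ℝ) {u v : ℂ → ℂ} {u' v' z : ℂ} (hu : HasDerivAt u u' z)
    (hv : HasDerivAt v v' z) (hβ : u z ∈ cone) (hγ : v z ∈ cone) :
    HasDerivAt (fun z => phi b (u z) (v z))
      (u' * dphi b (u z) (v z) + v' * dphi b (v z) (u z)) z := by
  have h1 := ((hu.add hv).const_mul (b : ℂ)).cexp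
  have h2 := ((hu.cexp.const_add 1).add hv.cexp).cpow_const (c := ((-(3 * b) : ℝ) : ℂ))
    (base_slit hβ hγ)
  refine (h1.mul h2).congr_deriv ?_
  simp only [dphi, phi, add_comm (v z) (u z), add_right_comm 1 (Complex.exp (v z)), Pi.add_apply]
  push_cast
  ring

/-- A common majorant for `phi` and `dphi` on `cone × cone`, used to dominate all the parameter
integrals below. -/
lemma norm_dphi_le {b : ℝ} (hb : 0 < b) : ∃ C : ℝ, 0 ≤ C ∧ ∀ β ∈ cone, ∀ γ ∈ cone,
    ‖phi b β γ‖ ≤ C * Real.exp (b * (β.re + γ.re)) ∧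
    ‖dphi b β γ‖ ≤ C * Real.exp (b * (β.re + γ.re)) := by
  set D := (0.04 : ℝ) ^ (-(3 * b)) with hD
  set D' := (0.04 : ℝ) ^ (-(3 * b) - 1) with hD'
  have hD0 : 0 < D := by positivity
  have hD0' : 0 < D' := by positivity
  refine ⟨D + b * D + 3 * b * D', by positivity, fun β hβ γ hγ => ?_⟩
  have hp := norm_phi_le hb hβ hγ
  have he := Real.exp_pos (b * (β.re + γ.re))
  set e := Real.exp (b * (β.re + γ.re)) with he'
  constructor
  · refine hp.trans ?_
    gcongr
    have : 0 < b * D := by positivity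
    have : 0 < 3 * b * D' := by positivity
    linarith
  · have h1 := norm_base_cpow_le hβ hγ (r := -(3 * b) - 1) (by linarith)
    have h2 : ‖Complex.exp β‖ ≤ 1 := by
      rw [Complex.norm_exp]; exact Real.exp_le_one_iff.2 (cone_re hβ).le
    have h3 : ‖Complex.exp (b * (β + γ))‖ = e := by
      rw [Complex.norm_exp]; simp [he']
    calc ‖dphi b β γ‖ ≤ ‖(b : ℂ) * phi b β γ‖ + ‖3 * b * Complex.exp (b * (β + γ)) *
    (1 + Complex.exp β + Complex.exp γ) ^ ((-(3 * b) - 1 : ℝ) : ℂ) * Complex.exp β‖ :=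
          norm_sub_le _ _
      _ ≤ b * (D * e) + 3 * b * e * D' * 1 := by
          simp only [norm_mul, h3, Complex.norm_real, Real.norm_of_nonneg hb.le]
          norm_num only [RCLike.norm_ofNat]
          gcongr
      _ ≤ _ := by
          have : 0 < D * e := by positivity
          nlinarith

lemma cone_smul {z : ℂ} (hz : z ∈ cone) {R : ℝ} (hR : 0 < R) : (R : ℂ) * z ∈ cone := by
  have h : |z.im| < -2 * z.re := hz
  change |((R : ℂ) * z).im| < -2 * ((R : ℂ) * z).re
  rw [Complex.re_ofReal_mul, Complex.im_ofReal_mul, abs_mul, abs_of_pos hR]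
  nlinarith

lemma cone_sub {z : ℂ} (hz : z ∈ cone) {s : ℝ} (hs : 0 ≤ s) : z - s ∈ cone := by
  have h : |z.im| < -2 * z.re := hz
  change |(z - s).im| < -2 * (z - s).re
  simp only [Complex.sub_re, Complex.sub_im, Complex.ofReal_re, Complex.ofReal_im, sub_zero]
  linarith

lemma isOpen_cone : IsOpen cone :=
  isOpen_lt (by fun_prop) (by fun_prop)

lemma neg_mem_cone {R : ℝ} (hR : 0 < R) : -(R : ℂ) ∈ cone := by
  change |(-(R : ℂ)).im| < -2 * (-(R : ℂ)).re
  simp [hR]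

lemma convex_cone : Convex ℝ cone := by
  intro x hx y hy a c ha hc hac
  have h1 : |x.im| < -2 * x.re := hx
  have h2 : |y.im| < -2 * y.re := hy
  change |(a • x + c • y).im| < -2 * (a • x + c • y).re
  simp only [Complex.add_re, Complex.add_im, Complex.real_smul, Complex.re_ofReal_mul,
    Complex.im_ofReal_mul]
  rw [abs_lt] at *
  rcases ha.eq_or_lt with rfl | ha
  · have : c = 1 := by linarith
    subst this; constructor <;> linarith
  · constructor <;> nlinarith

/-! ### Primitives and rotation of rays -/

lemma integrableOn_exp_neg {b : ℝ} (hb : 0 < b) (C : ℝ) :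
    IntegrableOn (fun s : ℝ => C * Real.exp (-(b * s))) (Ioi 0) := by
  simpa only [neg_mul, IntegrableOn] using (exp_neg_integrableOn_Ioi 0 hb).const_mul C

lemma integrableOn_pow_exp_neg {b : ℝ} (hb : 0 < b) (C : ℝ) (n : ℕ) :
    IntegrableOn (fun s : ℝ => C * (s ^ n * Real.exp (-(b * s)))) (Ioi 0) := by
  have := (integrableOn_rpow_mul_exp_neg_mul_rpow (p := 1) (s := n) (b := b)
    (by have : (0 : ℝ) ≤ n := Nat.cast_nonneg n
        linarith) one_pos hb).const_mul C
  simpa only [neg_mul, Real.rpow_one, Real.rpow_natCast, IntegrableOn] using this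

/-- The tail integral `∫₀^∞ phi β (Y - s) ds` is a primitive of `phi β` in `Y`. -/
lemma hasDerivAt_tail {b : ℝ} (hb : 0 < b) {β Y : ℂ} (hβ : β ∈ cone) (hY : Y ∈ cone) :
    HasDerivAt (fun Y : ℂ => ∫ s in Ioi (0 : ℝ), phi b β (Y - s)) (phi b β Y) Y := by
  obtain ⟨C, hC0, hC⟩ := norm_dphi_le hb
  have hexp : ∀ Z ∈ cone, ∀ s : ℝ, Real.exp (b * (β.re + (Z - s).re)) ≤ Real.exp (-(b * s)) := by
    intro Z hZ s
    rw [Real.exp_le_exp, Complex.sub_re, Complex.ofReal_re]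
    nlinarith [cone_re hβ, cone_re hZ]
  have hm : ∀ Z : ℂ, Measurable fun s : ℝ => phi b β (Z - s) := fun Z => by fun_prop
  have hm' : ∀ Z : ℂ, Measurable fun s : ℝ => dphi b (Z - s) β := fun Z => by fun_prop
  have hi : IntegrableOn (fun s : ℝ => phi b β (Y - s)) (Ioi 0) := by
    refine (integrableOn_exp_neg hb C).mono' (hm Y).aestronglyMeasurable ?_
    refine (ae_restrict_mem measurableSet_Ioi).mono fun s hs => ?_
    have hs0 : 0 ≤ s := (mem_Ioi.1 hs).le
    exact (hC _ hβ _ (cone_sub hY hs0)).1.trans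
      (mul_le_mul_of_nonneg_left (hexp Y hY s) hC0)
  have key := hasDerivAt_integral_of_dominated_loc_of_deriv_le
    (μ := volume.restrict (Ioi (0 : ℝ))) (F := fun (Z : ℂ) (s : ℝ) => phi b β (Z - s))
    (F' := fun (Z : ℂ) (s : ℝ) => dphi b (Z - s) β) (x₀ := Y)
    (isOpen_cone.mem_nhds hY) (Eventually.of_forall fun Z => (hm Z).aestronglyMeasurable) hi
    (hm' Y).aestronglyMeasurable (bound := fun s => C * Real.exp (-(b * s)))
    ((ae_restrict_mem measurableSet_Ioi).mono fun s hs Z hZ => by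
      have hs0 : 0 ≤ s := (mem_Ioi.1 hs).le
      have h := (hC _ (cone_sub hZ hs0) _ hβ).2
      rw [add_comm (Z - (s : ℂ)).re] at h
      exact h.trans (mul_le_mul_of_nonneg_left (hexp Z hZ s) hC0))
    (integrableOn_exp_neg hb C)
    ((ae_restrict_mem measurableSet_Ioi).mono fun s hs Z hZ => by
      have hs0 : 0 ≤ s := (mem_Ioi.1 hs).le
      have := hasDerivAt_phi b (hasDerivAt_const Z β) ((hasDerivAt_id Z).sub_const (s : ℂ)) hβ
        (cone_sub hZ hs0)
      simpa using this)
  refine key.2.congr_deriv ?_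
  -- The derivative under the integral sign is itself a total derivative in `s`.
  have hd : ∀ s : ℝ, 0 ≤ s →
      HasDerivAt (fun s : ℝ => - phi b β (Y - s)) (dphi b (Y - s) β) s := by
    intro s hs
    have := (hasDerivAt_phi b (hasDerivAt_const (s : ℂ) β) ((hasDerivAt_id (s : ℂ)).const_sub Y) hβ
        (cone_sub hY hs)).comp_ofReal.neg
    simp only [id] at this
    exact this.congr_deriv (by simp)
  have h0 := integral_Ioi_of_hasDerivAt_of_tendsto' (a := 0) (m := 0)
    (fun s hs => hd s hs) key.1
    (tendsto_zero_of_hasDerivAt_of_integrableOn_Ioi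
      (fun s hs => hd s (mem_Ioi.1 hs).le) key.1 hi.neg)
  simpa using h0

/-- Along a complex ray in the direction `(-1, κ)`, the integral of `R phi(-R, κ R)` does not
depend on the direction `l` in which the variable `R` runs: substituting `R l` for `R` gives an
integral with zero derivative in `l`. -/
lemma rot_deriv {b : ℝ} (hb : 0 < b) (κ : ℂ) {l : ℂ} (h1 : -l ∈ cone) (h2 : κ * l ∈ cone) :
    HasDerivAt (fun l : ℂ => ∫ R in Ioi (0 : ℝ), l ^ 2 * R * phi b (R * -l) (R * (κ * l))) 0 l := by
  obtain ⟨C, hC0, hC⟩ := norm_dphi_le hb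
  have hl0 : 0 < l.re := by simpa using cone_re h1
  have hlne : l ≠ 0 := fun h => by simp [h] at hl0
  set c := l.re / 2 with hc
  set M := ‖l‖ + 1 with hM
  have hc0 : 0 < c := by positivity
  have hM0 : 0 < M := by positivity
  set S : Set ℂ := {z | -z ∈ cone ∧ κ * z ∈ cone ∧ c < z.re ∧ ‖z‖ < M} with hS
  have hSo : IsOpen S := by
    refine (isOpen_cone.preimage continuous_neg).inter
      ((isOpen_cone.preimage (continuous_const_mul κ)).inter ?_)
    exact (isOpen_lt continuous_const Complex.continuous_re).inter
      (isOpen_lt continuous_norm continuous_const)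
  have hlS : l ∈ S := ⟨h1, h2, by linarith, by linarith⟩
  have hbd : ∀ z ∈ S, ∀ R : ℝ, 0 < R →
      ‖phi b (R * -z) (R * (κ * z))‖ ≤ C * Real.exp (-(b * c * R)) ∧
      ‖dphi b (R * -z) (R * (κ * z))‖ ≤ C * Real.exp (-(b * c * R)) ∧
      ‖dphi b (R * (κ * z)) (R * -z)‖ ≤ C * Real.exp (-(b * c * R)) := by
    intro z hz R hR
    have k1 := cone_smul hz.1 hR
    have k2 := cone_smul hz.2.1 hR
    have he : Real.exp (b * ((R * -z : ℂ).re + (R * (κ * z) : ℂ).re))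
        ≤ Real.exp (-(b * c * R)) := by
      rw [Real.exp_le_exp]
      have e1 := cone_re k2
      have e2 : (R * -z : ℂ).re = -(R * z.re) := by simp
      have e3 : R * c < R * z.re := mul_lt_mul_of_pos_left hz.2.2.1 hR
      rw [e2]
      nlinarith
    have he' := mul_le_mul_of_nonneg_left he hC0
    refine ⟨(hC _ k1 _ k2).1.trans he', (hC _ k1 _ k2).2.trans he', ?_⟩
    have := (hC _ k2 _ k1).2
    rw [add_comm] at this
    exact this.trans he'
  have hm : ∀ z : ℂ, Measurable fun R : ℝ => phi b (R * -z) (R * (κ * z)) := fun z => by fun_prop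
  have hm1 : ∀ z : ℂ, Measurable fun R : ℝ => dphi b (R * -z) (R * (κ * z)) := fun z => by fun_prop
  have hm2 : ∀ z : ℂ, Measurable fun R : ℝ => dphi b (R * (κ * z)) (R * -z) := fun z => by fun_prop
  have hn : ∀ n : ℕ, ∀ R : ℝ, 0 < R → ‖(l ^ 2 * R ^ n * phi b (R * -l) (R * (κ * l)))‖ ≤
      M ^ 2 * C * (R ^ n * Real.exp (-(b * c * R))) := by
    intro n R hR
    rw [norm_mul, norm_mul, norm_pow, norm_pow, Complex.norm_real, Real.norm_of_nonneg hR.le]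
    calc _ ≤ M ^ 2 * R ^ n * (C * Real.exp (-(b * c * R))) := by
          gcongr
          · exact hlS.2.2.2.le
          · exact (hbd l hlS R hR).1
      _ = _ := by ring
  have hi : ∀ n : ℕ, IntegrableOn (fun R : ℝ => l ^ 2 * R ^ n * phi b (R * -l) (R * (κ * l)))
      (Ioi 0) := by
    intro n
    refine (integrableOn_pow_exp_neg (mul_pos hb hc0) (M ^ 2 * C) n).mono' ?_ ?_
    · have := hm l
      exact Measurable.aestronglyMeasurable (by fun_prop)
    · exact (ae_restrict_mem measurableSet_Ioi).mono fun R hR => hn n R hR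
  have key := hasDerivAt_integral_of_dominated_loc_of_deriv_le
    (μ := volume.restrict (Ioi (0 : ℝ)))
    (F := fun (z : ℂ) (R : ℝ) => z ^ 2 * R * phi b (R * -z) (R * (κ * z)))
    (F' := fun (z : ℂ) (R : ℝ) => 2 * z * R * phi b (R * -z) (R * (κ * z)) +
      z ^ 2 * R * (-R * dphi b (R * -z) (R * (κ * z)) + R * κ * dphi b (R * (κ * z)) (R * -z)))
    (x₀ := l) (hSo.mem_nhds hlS)
    (Eventually.of_forall fun z => by
      have := hm z
      exact Measurable.aestronglyMeasurable (by fun_prop))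
    (by simpa using! hi 1)
    (by
      have := hm l
      have := hm1 l
      have := hm2 l
      exact Measurable.aestronglyMeasurable (by fun_prop))
    (bound := fun R => 2 * M * C * (R ^ 1 * Real.exp (-(b * c * R))) +
      M ^ 2 * (1 + ‖κ‖) * C * (R ^ 2 * Real.exp (-(b * c * R))))
    ((ae_restrict_mem measurableSet_Ioi).mono fun R hR z hz => by
      have hR0 : 0 < R := hR
      obtain ⟨q1, q2, q3⟩ := hbd z hz R hR0
      have hzM : ‖z‖ ≤ M := hz.2.2.2.le
      set e := Real.exp (-(b * c * R))
      calc _ ≤ ‖2 * z * R * phi b (R * -z) (R * (κ * z))‖ +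
            ‖z ^ 2 * R‖ * (‖-R * dphi b (R * -z) (R * (κ * z))‖ +
              ‖R * κ * dphi b (R * (κ * z)) (R * -z)‖) := by
            refine (norm_add_le _ _).trans ?_
            gcongr
            rw [norm_mul]
            gcongr
            exact norm_add_le _ _
        _ ≤ 2 * M * R * (C * e) + M ^ 2 * R * (R * (C * e) + R * ‖κ‖ * (C * e)) := by
            simp only [norm_mul, norm_pow, norm_neg, Complex.norm_real, Real.norm_of_nonneg hR0.le,
              RCLike.norm_ofNat]
            gcongr
        _ = _ := by ring)
    (Integrable.add (integrableOn_pow_exp_neg (mul_pos hb hc0) (2 * M * C) 1)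
      (integrableOn_pow_exp_neg (mul_pos hb hc0) (M ^ 2 * (1 + ‖κ‖) * C) 2))
    ((ae_restrict_mem measurableSet_Ioi).mono fun R hR z hz => by
      have hR0 : 0 < R := hR
      have d1 := hasDerivAt_phi b ((hasDerivAt_id z).neg.const_mul (R : ℂ))
        (((hasDerivAt_id z).const_mul κ).const_mul (R : ℂ)) (cone_smul hz.1 hR0)
        (cone_smul hz.2.1 hR0)
      have d2 := ((hasDerivAt_pow 2 z).mul_const (R : ℂ)).mul d1
      refine d2.congr_deriv ?_
      simp only [id, Pi.neg_apply]
      push_cast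
      ring)
  refine key.2.congr_deriv ?_
  -- By homogeneity, `l` times the derivative in `l` is a total derivative in `R`.
  have hd : ∀ R ∈ Ioi (0 : ℝ),
      HasDerivAt (fun R : ℝ => l ^ 2 * R ^ 2 * phi b (R * -l) (R * (κ * l)))
        (l * (2 * l * R * phi b (R * -l) (R * (κ * l)) +
      l ^ 2 * R * (-R * dphi b (R * -l) (R * (κ * l)) + R * κ * dphi b (R * (κ * l)) (R * -l)))) R := by
    intro R hR
    have d1 := hasDerivAt_phi b ((hasDerivAt_id (R : ℂ)).mul_const (-l))
        ((hasDerivAt_id (R : ℂ)).mul_const (κ * l)) (cone_smul h1 hR)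
        (cone_smul h2 hR)
    have d2 := (((hasDerivAt_pow 2 (R : ℂ)).const_mul (l ^ 2)).mul d1).comp_ofReal
    refine d2.congr_deriv ?_
    simp only [id]
    push_cast
    ring
  have hint := key.1.const_mul l
  have hcont : ContinuousWithinAt (fun R : ℝ => l ^ 2 * R ^ 2 * phi b (R * -l) (R * (κ * l)))
      (Ici 0) 0 := by
    unfold ContinuousWithinAt
    have hlim : Tendsto (fun R : ℝ => M ^ 2 * C * (R ^ 2 * Real.exp (-(b * c * R)))) (𝓝[≥] 0)
        (𝓝 0) := by
      have : Continuous (fun R : ℝ => M ^ 2 * C * (R ^ 2 * Real.exp (-(b * c * R)))) := by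
        fun_prop
      have := this.tendsto 0
      simp only [ne_eq, OfNat.ofNat_ne_zero, not_false_eq_true, zero_pow, zero_mul, mul_zero] at this
      exact this.mono_left nhdsWithin_le_nhds
    have : l ^ 2 * ((0 : ℝ) : ℂ) ^ 2 * phi b (((0 : ℝ) : ℂ) * -l) (((0 : ℝ) : ℂ) * (κ * l)) = 0 := by simp
    simp only [this]
    refine squeeze_zero_norm' ?_ hlim
    filter_upwards [self_mem_nhdsWithin] with R hR
    rcases (mem_Ici.1 hR).eq_or_lt with h | h
    · rw [← h]; simp
    · exact hn 2 R h
  have h0 := integral_Ioi_of_hasDerivAt_of_tendsto (a := 0) (m := 0) hcont hd hint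
    (tendsto_zero_of_hasDerivAt_of_integrableOn_Ioi hd hint (hi 2))
  rw [integral_const_mul] at h0
  simp only [Complex.ofReal_zero, ne_eq, OfNat.ofNat_ne_zero, not_false_eq_true, zero_pow,
    mul_zero, zero_mul, sub_zero] at h0
  exact ((mul_eq_zero.1 h0).resolve_left hlne)

/-! ### Deforming the ray to the real chamber -/

/-- Rotating the ray by `-conj κ` exchanges the two directions `-1` and `κ` up to complex
conjugation; the symmetry of `phi` then makes `κ ∫ R phi(-R, κ R) dR` equal to its own conjugate. -/
lemma ray_real {b : ℝ} (hb : 0 < b) {κ : ℂ} (hκ : κ ∈ cone) (h1 : ‖κ‖ = 1) :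
    (κ * ∫ R in Ioi (0 : ℝ), R * phi b (R * -1) (R * κ)).im = 0 := by
  set S : Set ℂ := {z | -z ∈ cone ∧ κ * z ∈ cone} with hS
  have hSo : IsOpen S := (isOpen_cone.preimage continuous_neg).inter
      (isOpen_cone.preimage (continuous_const_mul κ))
  have hSc : Convex ℝ S := by
    have e : S = (-LinearMap.id : ℂ →ₗ[ℝ] ℂ) ⁻¹' cone ∩ (LinearMap.mulLeft ℝ κ) ⁻¹' cone := rfl
    rw [e]
    exact (convex_cone.linear_preimage _).inter (convex_cone.linear_preimage _)
  have hcc : κ * starRingEnd ℂ κ = 1 := by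
    rw [Complex.mul_conj, Complex.normSq_eq_norm_sq, h1]; simp
  have hn1 : (-1 : ℂ) ∈ cone := by simpa using neg_mem_cone one_pos
  have hκc : starRingEnd ℂ κ ∈ cone := by
    have h : |κ.im| < -2 * κ.re := hκ
    change |(starRingEnd ℂ κ).im| < -2 * (starRingEnd ℂ κ).re
    simpa using h
  have hd : ∀ l ∈ S, HasDerivAt (fun l : ℂ => ∫ R in Ioi (0 : ℝ),
      l ^ 2 * R * phi b (R * -l) (R * (κ * l))) 0 l := fun l hl => rot_deriv hb κ hl.1 hl.2
  -- Compare the values at `l = 1` and `l = -conj κ` of the constant of `rot_deriv`.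
  have hconst := hSo.is_const_of_deriv_eq_zero hSc.isPreconnected
    (fun l hl => (hd l hl).differentiableAt.differentiableWithinAt)
    (fun l hl => (hd l hl).deriv) (x := 1) (y := -starRingEnd ℂ κ)
    ⟨hn1, by simpa using hκ⟩ ⟨by simpa using hκc, by rw [mul_neg, hcc]; exact hn1⟩
  have e1 : ∀ R ∈ Ioi (0 : ℝ), (-starRingEnd ℂ κ) ^ 2 * (R : ℂ) *
      phi b (R * - -starRingEnd ℂ κ) (R * (κ * -starRingEnd ℂ κ)) =
      (starRingEnd ℂ κ) ^ 2 * starRingEnd ℂ (R * phi b (R * -1) (R * κ)) := by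
    intro R hR
    rw [map_mul, ← phi_conj (cone_smul hn1 hR) (cone_smul hκ hR), phi_symm, mul_neg, hcc]
    simp only [map_mul, map_neg, map_one, Complex.conj_ofReal, neg_neg]
    ring
  rw [setIntegral_congr_fun measurableSet_Ioi e1, integral_const_mul, integral_conj] at hconst
  simp only [one_pow, one_mul, mul_one] at hconst
  set G := ∫ R in Ioi (0 : ℝ), R * phi b (R * -1) (R * κ) with hG
  have h3 : starRingEnd ℂ (κ * G) = κ * G := by
    rw [map_mul]
    nth_rewrite 2 [hconst]
    linear_combination (-starRingEnd ℂ κ * starRingEnd ℂ G) * hcc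
  exact Complex.conj_eq_iff_im.1 h3

/-- The integral of `phi b` over the two-dimensional chain `β = -R`, `γ = κ R - s` with `R, s > 0`,
with respect to `dR ds`. For `κ = -1` this is the real chamber `γ < β < 0`. -/
noncomputable def tailI (b : ℝ) (κ : ℂ) : ℂ :=
  ∫ R in Ioi (0 : ℝ), ∫ s in Ioi (0 : ℝ), phi b (R * -1) (R * κ - s)

lemma norm_phi_ray_le {b : ℝ} (hb : 0 < b) : ∃ C : ℝ, 0 ≤ C ∧ ∀ κ ∈ cone, ∀ R > (0 : ℝ),
    ∀ s ≥ (0 : ℝ), ‖phi b (R * -1) (R * κ - s)‖ ≤ C * Real.exp (-(b * R)) * Real.exp (-(b * s)) := by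
  obtain ⟨C, hC0, hC⟩ := norm_dphi_le hb
  refine ⟨C, hC0, fun κ hκ R hR s hs => ?_⟩
  have hn1 : (-1 : ℂ) ∈ cone := by simpa using neg_mem_cone one_pos
  refine (hC _ (cone_smul hn1 hR) _ (cone_sub (cone_smul hκ hR) hs)).1.trans ?_
  rw [mul_assoc, ← Real.exp_add]
  gcongr
  have := cone_re (cone_smul hκ hR)
  simp only [Complex.sub_re, Complex.ofReal_re, Complex.re_ofReal_mul, Complex.neg_re,
    Complex.one_re] at *
  nlinarith

lemma integrable_phi_ray {b : ℝ} (hb : 0 < b) {κ : ℂ} (hκ : κ ∈ cone) :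
    Integrable (fun p : ℝ × ℝ => phi b (p.1 * -1) (p.1 * κ - p.2))
      ((volume.restrict (Ioi 0)).prod (volume.restrict (Ioi 0))) := by
  obtain ⟨C, hC0, hC⟩ := norm_phi_ray_le hb
  have hi := (integrableOn_exp_neg hb C).mul_prod (integrableOn_exp_neg hb 1)
  refine Integrable.mono' hi (Measurable.aestronglyMeasurable (by fun_prop)) ?_
  rw [Measure.prod_restrict]
  refine (ae_restrict_mem (measurableSet_Ioi.prod measurableSet_Ioi)).mono fun p hp => ?_
  simpa using hC κ hκ p.1 hp.1 p.2 (mem_Ioi.1 hp.2).le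

/-- Turning the edge `κ = e^{iψ}` changes `tailI` by an integral over that edge alone, since the
inner integral is a primitive of `phi` (`hasDerivAt_tail`). -/
lemma hasDerivAt_tailI {b : ℝ} (hb : 0 < b) {ψ : ℝ} (hψ : Complex.exp (ψ * Complex.I) ∈ cone) :
    HasDerivAt (fun ψ : ℝ => tailI b (Complex.exp (ψ * Complex.I)))
      (∫ R in Ioi (0 : ℝ), R * (Complex.I * Complex.exp (ψ * Complex.I)) *
        phi b (R * -1) (R * Complex.exp (ψ * Complex.I))) ψ := by
  obtain ⟨C, hC0, hC⟩ := norm_phi_ray_le hb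
  have hn1 : (-1 : ℂ) ∈ cone := by simpa using neg_mem_cone one_pos
  set S : Set ℝ := {ψ | Complex.exp (ψ * Complex.I) ∈ cone} with hS
  have hSo : IsOpen S := isOpen_cone.preimage (by fun_prop)
  unfold tailI
  refine (hasDerivAt_integral_of_dominated_loc_of_deriv_le
    (μ := volume.restrict (Ioi (0 : ℝ)))
    (F := fun (t : ℝ) (R : ℝ) => ∫ s in Ioi (0 : ℝ),
      phi b (R * -1) (R * Complex.exp (t * Complex.I) - s))
    (F' := fun (t : ℝ) (R : ℝ) => R * (Complex.I * Complex.exp (t * Complex.I)) *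
        phi b (R * -1) (R * Complex.exp (t * Complex.I))) (x₀ := ψ)
    (hSo.mem_nhds hψ)
    ((hSo.eventually_mem hψ).mono fun t ht => (integrable_phi_ray hb ht).integral_prod_left.1)
    (integrable_phi_ray hb hψ).integral_prod_left
    (Measurable.aestronglyMeasurable (by fun_prop))
    (bound := fun R => C * (R ^ 1 * Real.exp (-(b * R))))
    ((ae_restrict_mem measurableSet_Ioi).mono fun R hR t ht => ?_)
    (integrableOn_pow_exp_neg hb C 1)
    ((ae_restrict_mem measurableSet_Ioi).mono fun R hR t ht => ?_)).2
  · have hR0 : 0 < R := hR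
    have h := hC _ ht R hR 0 le_rfl
    simp only [Complex.ofReal_zero, sub_zero, mul_zero, neg_zero, Real.exp_zero, mul_one] at h
    rw [norm_mul, norm_mul, norm_mul, Complex.norm_exp_ofReal_mul_I, Complex.norm_I,
      Complex.norm_real, Real.norm_of_nonneg hR0.le]
    calc _ ≤ R * (1 * 1) * (C * Real.exp (-(b * R))) := by
          gcongr
      _ = _ := by ring
  · have hd := hasDerivAt_tail hb (cone_smul hn1 hR) (cone_smul (z := Complex.exp (t * Complex.I)) ht hR)
    have hi : HasDerivAt (fun z : ℂ => (R : ℂ) * Complex.exp (z * Complex.I))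
        (R * (Complex.exp (t * Complex.I) * (1 * Complex.I))) (t : ℂ) :=
      (((hasDerivAt_id (t : ℂ)).mul_const Complex.I).cexp).const_mul (R : ℂ)
    have := (HasDerivAt.comp (t : ℂ) hd hi).comp_ofReal
    refine this.congr_deriv ?_
    ring

lemma cexp_mem_cone {ψ : ℝ} (h : ψ ∈ Icc (2 * Real.pi / 3) Real.pi) :
    Complex.exp (ψ * Complex.I) ∈ cone := by
  change |(Complex.exp (ψ * Complex.I)).im| < -2 * (Complex.exp (ψ * Complex.I)).re
  rw [Complex.exp_ofReal_mul_I_re, Complex.exp_ofReal_mul_I_im]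
  have hpi := Real.pi_pos
  have hc : Real.cos ψ ≤ -(1 / 2) := by
    have := Real.cos_le_cos_of_nonneg_of_le_pi (by positivity) h.2 h.1
    have e : Real.cos (2 * Real.pi / 3) = -(1 / 2) := by
      rw [show 2 * Real.pi / 3 = Real.pi - Real.pi / 3 by ring, Real.cos_pi_sub, Real.cos_pi_div_three]
    linarith
  have := Real.sin_sq_add_cos_sq ψ
  rw [abs_lt]
  constructor <;> nlinarith

/-- The derivative of `tailI` in the angle is `i` times the real number of `ray_real`, so the real
part does not change while the edge turns from `e^{2πi/3}` to `-1`. -/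
lemma tailI_re {b : ℝ} (hb : 0 < b) :
    (tailI b (Complex.exp ((2 * Real.pi / 3 : ℝ) * Complex.I))).re = (tailI b (-1)).re := by
  have hd : ∀ ψ ∈ Icc (2 * Real.pi / 3) Real.pi,
      HasDerivAt (fun ψ : ℝ => (tailI b (Complex.exp (ψ * Complex.I))).re) 0 ψ := by
    intro ψ hψ
    have hc := cexp_mem_cone hψ
    have h := hasDerivAt_tailI hb hc
    have h2 := (Complex.reCLM.hasFDerivAt.comp_hasDerivAt ψ h)
    refine h2.congr_deriv ?_
    have hr := ray_real hb hc (Complex.norm_exp_ofReal_mul_I ψ)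
    have : ∀ R : ℝ, R * (Complex.I * Complex.exp (ψ * Complex.I)) *
        phi b (R * -1) (R * Complex.exp (ψ * Complex.I)) =
        Complex.I * Complex.exp (ψ * Complex.I) *
        (R * phi b (R * -1) (R * Complex.exp (ψ * Complex.I))) := fun R => by ring
    simp only [this]
    rw [integral_const_mul, mul_assoc, Complex.reCLM_apply, Complex.I_mul_re, hr, neg_zero]
  have := constant_of_has_deriv_right_zero
    (fun ψ hψ => (hd ψ hψ).continuousAt.continuousWithinAt)
    (fun ψ hψ => (hd ψ (Ico_subset_Icc_self hψ)).hasDerivWithinAt) Real.pi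
    (right_mem_Icc.2 (by linarith [Real.pi_pos]))
  rw [← this, Complex.exp_pi_mul_I]

/-! ### The integral over the real chamber -/

/-- Euler's integral for `Γ` in the logarithmic variable. -/
lemma lintegral_exp_gamma {r c : ℝ} (hr : 0 < r) (hc : 0 < c) :
    ∫⁻ a : ℝ, ENNReal.ofReal (Real.exp (r * a - c * Real.exp a)) =
      ENNReal.ofReal (c ^ (-r) * Real.Gamma r) := by
  have h1 := lintegral_image_eq_lintegral_abs_deriv_mul (s := univ) (f := Real.exp)
    (f' := Real.exp) MeasurableSet.univ (fun x _ => (Real.hasDerivAt_exp x).hasDerivWithinAt)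
    Real.exp_injective.injOn
    (fun t => ENNReal.ofReal (t ^ (r - 1) * Real.exp (-(c * t))))
  rw [image_univ, Real.range_exp, Measure.restrict_univ] at h1
  have h2 : ∀ a : ℝ, ENNReal.ofReal |Real.exp a| *
      ENNReal.ofReal (Real.exp a ^ (r - 1) * Real.exp (-(c * Real.exp a))) =
      ENNReal.ofReal (Real.exp (r * a - c * Real.exp a)) := by
    intro a
    rw [← ENNReal.ofReal_mul (abs_nonneg _), abs_of_pos (Real.exp_pos a), ← Real.exp_mul,
      ← Real.exp_add, ← Real.exp_add]
    congr 2
    ring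
  simp only [h2] at h1
  rw [← h1, ← ofReal_integral_eq_lintegral_ofReal, Real.integral_rpow_mul_exp_neg_mul_Ioi hr hc,
    one_div, Real.inv_rpow hc.le, Real.rpow_neg hc.le]
  · have := integrableOn_rpow_mul_exp_neg_mul_rpow (p := 1) (s := r - 1) (b := c)
      (by linarith) one_pos hc
    simpa only [neg_mul, Real.rpow_one, IntegrableOn] using this
  · refine (ae_restrict_mem measurableSet_Ioi).mono fun t ht => ?_
    have : 0 < t := ht
    positivity

lemma triple_swap₁ {W : ℝ → ℝ → ℝ → ENNReal}
    (hW : Measurable fun p : ℝ × ℝ × ℝ => W p.1 p.2.1 p.2.2) :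
    ∫⁻ a, ∫⁻ b, ∫⁻ c, W a b c = ∫⁻ a, ∫⁻ b, ∫⁻ c, W a c b := by
  refine lintegral_congr fun a => ?_
  refine lintegral_lintegral_swap (Measurable.aemeasurable ?_)
  exact hW.comp (by fun_prop : Measurable fun p : ℝ × ℝ => (a, p.1, p.2))

lemma triple_swap₂ {W : ℝ → ℝ → ℝ → ENNReal}
    (hW : Measurable fun p : ℝ × ℝ × ℝ => W p.1 p.2.1 p.2.2) :
    ∫⁻ a, ∫⁻ b, ∫⁻ c, W a b c = ∫⁻ a, ∫⁻ b, ∫⁻ c, W b a c := by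
  refine lintegral_lintegral_swap (Measurable.aemeasurable ?_)
  have : Measurable fun q : (ℝ × ℝ) × ℝ => W q.1.1 q.1.2 q.2 :=
    hW.comp (by fun_prop : Measurable fun q : (ℝ × ℝ) × ℝ => (q.1.1, q.1.2, q.2))
  exact this.lintegral_prod_right'

lemma triple_add {V W : ℝ → ℝ → ℝ → ENNReal}
    (hV : Measurable fun p : ℝ × ℝ × ℝ => V p.1 p.2.1 p.2.2) :
    ∫⁻ a, ∫⁻ b, ∫⁻ c, (V a b c + W a b c) =
      (∫⁻ a, ∫⁻ b, ∫⁻ c, V a b c) + ∫⁻ a, ∫⁻ b, ∫⁻ c, W a b c := by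
  have h1 : Measurable fun q : (ℝ × ℝ) × ℝ => V q.1.1 q.1.2 q.2 :=
    hV.comp (by fun_prop : Measurable fun q : (ℝ × ℝ) × ℝ => (q.1.1, q.1.2, q.2))
  have h2 := h1.lintegral_prod_right' (ν := volume)
  have h3 := h2.lintegral_prod_right' (ν := volume)
  rw [← lintegral_add_left h3]
  refine lintegral_congr fun a => ?_
  have h4 : Measurable fun b => ∫⁻ c, V a b c :=
    h2.comp (by fun_prop : Measurable fun b : ℝ => (a, b))
  rw [← lintegral_add_left h4]
  refine lintegral_congr fun b => ?_
  have h5 : Measurable fun c => V a b c :=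
    h1.comp (by fun_prop : Measurable fun c : ℝ => ((a, b), c))
  rw [← lintegral_add_left h5]

/-- The indicator function of the positive half-line, with values in `[0, ∞]`. -/
noncomputable def posInd : ℝ → ENNReal := (Ioi 0).indicator 1

lemma measurable_posInd : Measurable posInd := measurable_one.indicator measurableSet_Ioi

/-- The indicators of the six orderings of three distinct reals sum to one. -/
lemma six_chambers {a b c : ℝ} (hab : b ≠ a) (hac : c ≠ a) (hbc : c ≠ b) :
    posInd (a - b) * posInd (b - c) + posInd (a - c) * posInd (c - b) +
      posInd (b - a) * posInd (a - c) + posInd (b - c) * posInd (c - a) +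
      posInd (c - a) * posInd (a - b) + posInd (c - b) * posInd (b - a) = 1 := by
  have h : ∀ x y : ℝ, posInd (x - y) = if y < x then 1 else 0 := by
    intro x y
    simp [posInd, indicator_apply]
  simp only [h]
  rcases lt_or_gt_of_ne hab with h1 | h1 <;> rcases lt_or_gt_of_ne hac with h2 | h2 <;>
    rcases lt_or_gt_of_ne hbc with h3 | h3 <;>
    simp [h1, h2, h3, h1.not_gt, h2.not_gt, h3.not_gt] <;> linarith

/-- The cube of an integral is six times the integral of the triple product over `c < b < a`. -/
lemma chamber_sum {p : ℝ → ENNReal} (hp : Measurable p) :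
    (∫⁻ a, p a) ^ 3 =
      6 * ∫⁻ a, ∫⁻ b, ∫⁻ c, posInd (a - b) * posInd (b - c) * (p a * p b * p c) := by
  have hθ := measurable_posInd
  have h0 : (∫⁻ a, p a) ^ 3 = ∫⁻ a, ∫⁻ b, ∫⁻ c, p a * p b * p c := by
    simp only [lintegral_const_mul _ hp]
    rw [pow_three]
    have : ∀ a, Measurable fun b => p a * p b := fun a => by fun_prop
    simp only [lintegral_mul_const _ (this _), lintegral_const_mul _ hp]
    rw [lintegral_mul_const _ (by fun_prop), lintegral_mul_const _ hp]
    ring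
  set W : ℝ → ℝ → ℝ → ENNReal :=
    fun a b c => posInd (a - b) * posInd (b - c) * (p a * p b * p c) with hW
  have m1 : Measurable fun q : ℝ × ℝ × ℝ => W q.1 q.2.1 q.2.2 := by simp only [hW]; fun_prop
  have m2 : Measurable fun q : ℝ × ℝ × ℝ => W q.1 q.2.2 q.2.1 := by simp only [hW]; fun_prop
  have m3 : Measurable fun q : ℝ × ℝ × ℝ => W q.2.1 q.1 q.2.2 := by simp only [hW]; fun_prop
  have m4 : Measurable fun q : ℝ × ℝ × ℝ => W q.2.1 q.2.2 q.1 := by simp only [hW]; fun_prop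
  have m5 : Measurable fun q : ℝ × ℝ × ℝ => W q.2.2 q.1 q.2.1 := by simp only [hW]; fun_prop
  have m6 : Measurable fun q : ℝ × ℝ × ℝ => W q.2.2 q.2.1 q.1 := by simp only [hW]; fun_prop
  have h1 : ∫⁻ a, ∫⁻ b, ∫⁻ c, p a * p b * p c = ∫⁻ a, ∫⁻ b, ∫⁻ c,
      (W a b c + (W a c b + (W b a c + (W b c a + (W c a b + W c b a))))) := by
    refine lintegral_congr fun a => ?_
    refine lintegral_congr_ae ?_
    filter_upwards [Measure.ae_ne volume a] with b hb
    refine lintegral_congr_ae ?_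
    filter_upwards [Measure.ae_ne volume a, Measure.ae_ne volume b] with c hca hcb
    have := six_chambers hb hca hcb
    calc p a * p b * p c = 1 * (p a * p b * p c) := (one_mul _).symm
      _ = _ := by rw [← this]; simp only [hW]; ring
  rw [h0, h1, triple_add m1, triple_add m2, triple_add m3, triple_add m4, triple_add m5]
  have e2 : ∫⁻ a, ∫⁻ b, ∫⁻ c, W a c b = ∫⁻ a, ∫⁻ b, ∫⁻ c, W a b c := (triple_swap₁ m1).symm
  have e3 : ∫⁻ a, ∫⁻ b, ∫⁻ c, W b a c = ∫⁻ a, ∫⁻ b, ∫⁻ c, W a b c := (triple_swap₂ m1).symm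
  have e4 : ∫⁻ a, ∫⁻ b, ∫⁻ c, W b c a = ∫⁻ a, ∫⁻ b, ∫⁻ c, W a b c :=
    (triple_swap₂ (W := fun a b c => W a c b) m2).symm.trans e2
  have e5 : ∫⁻ a, ∫⁻ b, ∫⁻ c, W c a b = ∫⁻ a, ∫⁻ b, ∫⁻ c, W a b c :=
    (triple_swap₁ (W := fun a b c => W b a c) m3).symm.trans e3
  have e6 : ∫⁻ a, ∫⁻ b, ∫⁻ c, W c b a = ∫⁻ a, ∫⁻ b, ∫⁻ c, W a b c :=
    (triple_swap₁ (W := fun a b c => W b c a) m4).symm.trans e4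
  rw [e2, e3, e4, e5, e6]
  ring

/-- Writing `Γ(b)³` as a triple integral of `exp (b(α+β+γ) - e^α - e^β - e^γ)` and integrating out
the common translation of `α, β, γ`, which contributes `Γ(3b)`, leaves the integral over the chamber
`γ < β < α` with coordinates `u = α - β` and `s = β - γ`. -/
lemma chamber_eval {b : ℝ} (hb : 0 < b) :
    ENNReal.ofReal (Real.Gamma b) ^ 3 = 6 * (ENNReal.ofReal (Real.Gamma (3 * b)) *
      ∫⁻ u in Ioi (0 : ℝ), ∫⁻ s in Ioi (0 : ℝ), ENNReal.ofReal (Real.exp (-(b * (2 * u + s))) *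
        (1 + Real.exp (-u) + Real.exp (-u - s)) ^ (-(3 * b)))) := by
  have hθ := measurable_posInd
  set p : ℝ → ENNReal := fun a => ENNReal.ofReal (Real.exp (b * a - Real.exp a)) with hp
  have hpm : Measurable p := by simp only [hp]; fun_prop
  have h0 : ∫⁻ a, p a = ENNReal.ofReal (Real.Gamma b) := by
    simpa using lintegral_exp_gamma hb one_pos
  rw [← h0, chamber_sum hpm]
  congr 1
  have h1 : ∀ a : ℝ, ∫⁻ x, ∫⁻ y, posInd (a - x) * posInd (x - y) * (p a * p x * p y) =
      ∫⁻ u, ∫⁻ s, posInd u * posInd s * (p a * p (a - u) * p (a - u - s)) := by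
    intro a
    -- substitute `x = a - u` and then `y = a - u - s`
    rw [← lintegral_sub_left_eq_self _ a]
    refine lintegral_congr fun u => ?_
    rw [← lintegral_sub_left_eq_self _ (a - u)]
    simp only [sub_sub_cancel]
  simp only [h1]
  rw [triple_swap₂ (W := fun a u s => posInd u * posInd s * (p a * p (a - u) * p (a - u - s)))
    (by fun_prop), triple_swap₁
    (W := fun u a s => posInd u * posInd s * (p a * p (a - u) * p (a - u - s))) (by fun_prop)]
  have h2 : ∀ u s : ℝ, ∫⁻ a, posInd u * posInd s * (p a * p (a - u) * p (a - u - s)) =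
      posInd u * (posInd s * (ENNReal.ofReal (Real.Gamma (3 * b)) *
        ENNReal.ofReal (Real.exp (-(b * (2 * u + s))) *
        (1 + Real.exp (-u) + Real.exp (-u - s)) ^ (-(3 * b))))) := by
    intro u s
    have hc : 0 < 1 + Real.exp (-u) + Real.exp (-u - s) := by positivity
    have h3 : ∀ a : ℝ, p a * p (a - u) * p (a - u - s) =
        ENNReal.ofReal (Real.exp (-(b * (2 * u + s)))) * ENNReal.ofReal (Real.exp
          (3 * b * a - (1 + Real.exp (-u) + Real.exp (-u - s)) * Real.exp a)) := by
      intro a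
      simp only [hp]
      rw [← ENNReal.ofReal_mul (by positivity), ← ENNReal.ofReal_mul (by positivity),
        ← ENNReal.ofReal_mul (by positivity), ← Real.exp_add, ← Real.exp_add, ← Real.exp_add]
      congr 2
      have e1 : Real.exp (a - u) = Real.exp (-u) * Real.exp a := by rw [← Real.exp_add]; ring_nf
      have e2 : Real.exp (a - u - s) = Real.exp (-u - s) * Real.exp a := by
        rw [← Real.exp_add]; ring_nf
      rw [e1, e2]
      ring
    simp only [h3]
    rw [lintegral_const_mul _ (by fun_prop), lintegral_const_mul _ (by fun_prop),
      lintegral_exp_gamma (by positivity) hc, ENNReal.ofReal_mul (by positivity),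
      ENNReal.ofReal_mul (by positivity)]
    ring
  simp only [h2]
  have h4 : ∀ f : ℝ → ENNReal, ∫⁻ u, posInd u * f u = ∫⁻ u in Ioi (0 : ℝ), f u := by
    intro f
    rw [← lintegral_indicator measurableSet_Ioi]
    refine lintegral_congr fun u => ?_
    by_cases hu : u ∈ Ioi (0 : ℝ) <;> simp [posInd, hu]
  have h5 : Measurable fun q : ℝ × ℝ => ENNReal.ofReal (Real.exp (-(b * (2 * q.1 + q.2))) *
        (1 + Real.exp (-q.1) + Real.exp (-q.1 - q.2)) ^ (-(3 * b))) := by fun_prop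
  have h6 : ∀ u : ℝ, Measurable fun s : ℝ => ENNReal.ofReal (Real.exp (-(b * (2 * u + s))) *
        (1 + Real.exp (-u) + Real.exp (-u - s)) ^ (-(3 * b))) := fun u => by fun_prop
  have h7 : ∀ u : ℝ, ∫⁻ s, posInd u * (posInd s * (ENNReal.ofReal (Real.Gamma (3 * b)) *
        ENNReal.ofReal (Real.exp (-(b * (2 * u + s))) *
        (1 + Real.exp (-u) + Real.exp (-u - s)) ^ (-(3 * b))))) =
      posInd u * (ENNReal.ofReal (Real.Gamma (3 * b)) * ∫⁻ s in Ioi (0 : ℝ),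
        ENNReal.ofReal (Real.exp (-(b * (2 * u + s))) *
        (1 + Real.exp (-u) + Real.exp (-u - s)) ^ (-(3 * b)))) := by
    intro u
    rw [lintegral_const_mul _ (by fun_prop), h4, lintegral_const_mul _ (by fun_prop)]
  simp only [h7]
  rw [h4, lintegral_const_mul _ h5.lintegral_prod_right']

lemma tailI_neg_one {b : ℝ} (hb : 0 < b) :
    tailI b (-1) = ((Real.Gamma b ^ 3 / (6 * Real.Gamma (3 * b)) : ℝ) : ℂ) := by
  set f : ℝ × ℝ → ℝ := fun q => Real.exp (-(b * (2 * q.1 + q.2))) *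
        (1 + Real.exp (-q.1) + Real.exp (-q.1 - q.2)) ^ (-(3 * b)) with hf
  have hphi : ∀ q : ℝ × ℝ, phi b (q.1 * -1) (q.1 * -1 - q.2) = (f q : ℂ) := by
    intro q
    have hpos : 0 ≤ 1 + Real.exp (-q.1) + Real.exp (-q.1 - q.2) := by positivity
    simp only [phi, hf]
    rw [Complex.ofReal_mul, Complex.ofReal_cpow hpos]
    push_cast
    congr 2 <;> ring_nf
  have hn1 : (-1 : ℂ) ∈ cone := by simpa using neg_mem_cone one_pos
  have hint := integrable_phi_ray hb hn1
  simp only [hphi] at hint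
  have hintR : Integrable f ((volume.restrict (Ioi 0)).prod (volume.restrict (Ioi 0))) := by
    simpa using hint.re
  have hpos : ∀ q, 0 ≤ f q := fun q => by simp only [hf]; positivity
  have h1 : tailI b (-1) = ((∫ q, f q ∂((volume.restrict (Ioi 0)).prod (volume.restrict (Ioi 0)))
      : ℝ) : ℂ) := by
    rw [tailI, ← integral_complex_ofReal, integral_prod _ hint]
    refine integral_congr_ae (Eventually.of_forall fun R => ?_)
    exact integral_congr_ae (Eventually.of_forall fun s => hphi (R, s))
  have h2 := ofReal_integral_eq_lintegral_ofReal hintR (Eventually.of_forall hpos)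
  rw [lintegral_prod _ (by simp only [hf]; fun_prop)] at h2
  have h3 := chamber_eval hb
  rw [h1]
  set Q := ∫ q, f q ∂((volume.restrict (Ioi 0)).prod (volume.restrict (Ioi 0)))
  have hQ : 0 ≤ Q := integral_nonneg hpos
  have hG3 := Real.Gamma_pos_of_pos (show 0 < 3 * b by positivity)
  have hG := Real.Gamma_pos_of_pos hb
  simp only [hf] at h2
  rw [← h2, ← ENNReal.ofReal_pow hG.le, ← ENNReal.ofReal_mul hG3.le,
    show (6 : ENNReal) = ENNReal.ofReal 6 by simp, ← ENNReal.ofReal_mul (by norm_num),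
    ENNReal.ofReal_eq_ofReal_iff (by positivity) (by positivity)] at h3
  congr 1
  rw [eq_div_iff (by positivity), h3]
  ring

/-! ### Euler integral for the hypergeometric series -/

lemma hasSum_binomial {r : ℝ} {w : ℂ} (hw : ‖w‖ < 1) :
    HasSum (fun n : ℕ => (∏ i ∈ Finset.range n, ((r : ℂ) + i)) / (n.factorial : ℂ) * w ^ n)
      ((1 - w) ^ ((-r : ℝ) : ℂ)) := by
  have h := (Complex.one_div_one_sub_cpow_hasFPowerSeriesOnBall_zero (r : ℂ)).hasSum
    (y := w) (by simpa [enorm_eq_nnnorm] using! hw)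
  rw [zero_add, one_div, ← Complex.cpow_neg] at h
  have e : ∀ n : ℕ, Ring.choose ((r : ℂ) + n - 1) n =
      (∏ i ∈ Finset.range n, ((r : ℂ) + i)) / (n.factorial : ℂ) := by
    intro n
    rw [← Ring.multichoose_eq, eq_div_iff (by exact_mod_cast n.factorial_ne_zero), mul_comm,
      ← nsmul_eq_mul, Ring.factorial_nsmul_multichoose_eq_ascPochhammer]
    induction n with
    | zero => simp
    | succ n ih =>
      rw [Finset.prod_range_succ, ← ih, ascPochhammer_succ_right]
      simp [Polynomial.smeval_mul, Polynomial.smeval_add, Polynomial.smeval_natCast]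
  push_cast
  simpa [FormalMultilinearSeries.ofScalars, e] using h

/-- The Pochhammer quotient `(b)_n / (b+1)_n` is `b / (b + n)`. -/
lemma prod_ratio (b : ℝ) (n : ℕ) :
    (∏ i ∈ Finset.range n, ((b : ℂ) + i)) * (b + n) =
      b * ∏ i ∈ Finset.range n, ((b : ℂ) + 1 + i) := by
  induction n with
  | zero => simp
  | succ n ih =>
    rw [Finset.prod_range_succ, Finset.prod_range_succ, ← mul_assoc, ← ih]
    push_cast
    ring

/-- Euler's integral for `₂F₁(b, 3b; b+1; z)`, in the variable `t = e^{-s}`: expand the binomial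
series under the integral sign and use `∫ e^{-(b+n)s} ds = 1 / (b + n)`. -/
lemma hyp_eq_integral {b : ℝ} (hb : 0 < b) {z : ℂ} (hz : ‖z‖ < 1) :
    ∑' n : ℕ,
          (∏ i ∈ Finset.range n, ((b : ℂ) + i)) * (∏ i ∈ Finset.range n, (3 * (b : ℂ) + i)) /
            ((∏ i ∈ Finset.range n, ((b : ℂ) + 1 + i)) * (n.factorial : ℂ)) * z ^ n =
      b * ∫ s in Ioi (0 : ℝ), Complex.exp (-(b * s)) *
        (1 - z * Complex.exp (-s)) ^ ((-(3 * b) : ℝ) : ℂ) := by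
  set c : ℕ → ℂ := fun n => (∏ i ∈ Finset.range n, (((3 * b : ℝ) : ℂ) + i)) / (n.factorial : ℂ)
    with hc
  have hs : Summable fun n => ‖c n * z ^ n‖ := (hasSum_binomial hz).summable.norm
  have hre : ∀ n : ℕ, (-((b : ℂ) + n)).re < 0 := by
    intro n
    have : (0 : ℝ) ≤ n := n.cast_nonneg
    simp
    linarith
  have hF : ∀ n : ℕ, IntegrableOn (fun s : ℝ => c n * z ^ n * Complex.exp (-((b : ℂ) + n) * s))
      (Ioi 0) := fun n => (integrableOn_exp_mul_complex_Ioi (hre n) 0).const_mul _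
  have hI : ∀ n : ℕ, ∫ s in Ioi (0 : ℝ), c n * z ^ n * Complex.exp (-((b : ℂ) + n) * s) =
      c n * z ^ n * (1 / (b + n)) := by
    intro n
    rw [integral_const_mul, integral_exp_mul_complex_Ioi (hre n)]
    rw [Complex.ofReal_zero, mul_zero, Complex.exp_zero, neg_div_neg_eq]
  have hN : Summable fun n : ℕ =>
      ∫ s in Ioi (0 : ℝ), ‖c n * z ^ n * Complex.exp (-((b : ℂ) + n) * s)‖ := by
    refine (hs.mul_right (1 / b)).of_nonneg_of_le
      (fun n => integral_nonneg fun s => norm_nonneg _) fun n => ?_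
    simp only [norm_mul (c n * z ^ n), Complex.norm_exp]
    rw [integral_const_mul]
    gcongr
    have hn : 0 < b + n := by positivity
    have e : ∀ s : ℝ, (-((b : ℂ) + n) * s).re = -(b + n) * s := by intro s; simp
    simp only [e]
    rw [integral_exp_mul_Ioi (by linarith)]
    rw [mul_zero, Real.exp_zero, neg_div_neg_eq]
    gcongr
    simp
  have key := hasSum_integral_of_summable_integral_norm hF hN
  have hsum : ∀ s ∈ Ioi (0 : ℝ), ∑' n : ℕ, c n * z ^ n * Complex.exp (-((b : ℂ) + n) * s) =
      Complex.exp (-(b * s)) * (1 - z * Complex.exp (-s)) ^ ((-(3 * b) : ℝ) : ℂ) := by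
    intro s hs0
    have hs1 : 0 < s := hs0
    have hw : ‖z * Complex.exp (-s)‖ < 1 := by
      rw [norm_mul, Complex.norm_exp]
      have : Real.exp ((-s : ℂ)).re ≤ 1 := by
        rw [Real.exp_le_one_iff]; simpa using hs1.le
      nlinarith [norm_nonneg z]
    rw [← (hasSum_binomial (r := 3 * b) hw).tsum_eq, ← tsum_mul_left]
    refine tsum_congr fun n => ?_
    rw [mul_pow, ← Complex.exp_nat_mul,
      show -((b : ℂ) + n) * s = -(b * s) + n * -s by ring, Complex.exp_add]
    simp only [hc]
    ring
  rw [setIntegral_congr_fun measurableSet_Ioi hsum] at key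
  rw [← key.tsum_eq, ← tsum_mul_left]
  refine tsum_congr fun n => ?_
  rw [hI]
  have h1 : (b : ℂ) + n ≠ 0 := by
    intro h
    have := congrArg Complex.re h
    have h2 : (0 : ℝ) ≤ n := n.cast_nonneg
    simp at this
    linarith
  have h2 : (∏ i ∈ Finset.range n, ((b : ℂ) + 1 + i)) ≠ 0 := by
    refine Finset.prod_ne_zero_iff.2 fun i _ h => ?_
    have := congrArg Complex.re h
    have h2 : (0 : ℝ) ≤ i := i.cast_nonneg
    simp at this
    linarith
  have h3 : (n.factorial : ℂ) ≠ 0 := by exact_mod_cast n.factorial_ne_zero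
  have h4 := prod_ratio b n
  simp only [hc]
  push_cast
  generalize (∏ i ∈ Finset.range n, (3 * (b : ℂ) + i)) = P
  field_simp
  linear_combination P * z ^ n * h4

/-- The integrand of the theorem: the hypergeometric series times `e^{ib√3x} / cosh^{3b} x`. -/
noncomputable def hypIntegrand (b x : ℝ) : ℂ :=
  Complex.exp (Complex.I * b * Real.sqrt 3 * x) / ((Real.cosh x ^ (3 * b) : ℝ) : ℂ) *
        ∑' n : ℕ,
          (∏ i ∈ Finset.range n, ((b : ℂ) + i)) * (∏ i ∈ Finset.range n, (3 * (b : ℂ) + i)) /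
            ((∏ i ∈ Finset.range n, ((b : ℂ) + 1 + i)) * (n.factorial : ℂ)) *
            (-(Complex.exp (Complex.I * Real.sqrt 3 * x) / (2 * Real.cosh x))) ^ n

lemma norm_arg_lt (x : ℝ) :
    ‖-(Complex.exp (Complex.I * Real.sqrt 3 * x) / (2 * Real.cosh x))‖ < 1 := by
  have h := Real.one_le_cosh x
  rw [norm_neg, norm_div, Complex.norm_exp]
  have e : (Complex.I * Real.sqrt 3 * x).re = 0 := by simp
  rw [e, Real.exp_zero, norm_mul, Complex.norm_real, Real.norm_of_nonneg (by linarith),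
    div_lt_one (by simp; linarith)]
  simp; linarith

lemma hypIntegrand_neg (b x : ℝ) :
    hypIntegrand b (-x) = starRingEnd ℂ (hypIntegrand b x) := by
  simp only [hypIntegrand, map_mul, map_div₀, Complex.conj_ofReal, Complex.conj_tsum, map_prod,
    map_add, map_natCast, map_neg, map_pow, ← Complex.exp_conj, Complex.conj_I, Real.cosh_neg,
    Complex.ofReal_neg, map_one, map_ofNat, neg_mul, mul_neg]

/-- The primitive cube root of unity `e^{2πi/3}`. -/
noncomputable def om : ℂ := Complex.exp ((2 * Real.pi / 3 : ℝ) * Complex.I)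

lemma two_mul_om (x : ℝ) : ((2 * x : ℝ) : ℂ) * om = -x + Complex.I * Real.sqrt 3 * x := by
  have e1 : Real.cos (2 * Real.pi / 3) = -(1 / 2) := by
    rw [show 2 * Real.pi / 3 = Real.pi - Real.pi / 3 by ring, Real.cos_pi_sub,
      Real.cos_pi_div_three]
  have e2 : Real.sin (2 * Real.pi / 3) = Real.sqrt 3 / 2 := by
    rw [show 2 * Real.pi / 3 = Real.pi - Real.pi / 3 by ring, Real.sin_pi_sub,
      Real.sin_pi_div_three]
  rw [om, Complex.exp_mul_I, ← Complex.ofReal_cos, ← Complex.ofReal_sin, e1, e2]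
  push_cast
  ring

lemma ofReal_mul_cpow {L : ℝ} (hL : 0 < L) {B : ℂ} (hB : B ≠ 0) (r : ℝ) :
    ((L : ℂ) * B) ^ (r : ℂ) = ((L ^ r : ℝ) : ℂ) * B ^ (r : ℂ) := by
  have hL' : (L : ℂ) ≠ 0 := by exact_mod_cast hL.ne'
  rw [Complex.cpow_def_of_ne_zero (mul_ne_zero hL' hB), Complex.cpow_def_of_ne_zero hB,
    Complex.log_ofReal_mul hL hB, Complex.ofReal_cpow hL.le, Complex.cpow_def_of_ne_zero hL',
    ← Complex.exp_add, ← add_mul, Complex.ofReal_log hL.le]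

/-- The integrand at `x` is the inner integral of `tailI b e^{2πi/3}` at `R = 2x`, because
`1 + e^{-2x} + e^{-x + i√3x - s} = 2 e^{-x} cosh x (1 + e^{i√3x - s} / (2 cosh x))`. -/
lemma integrand_eq {b : ℝ} (hb : 0 < b) (x : ℝ) :
    hypIntegrand b x = b * ((2 ^ (3 * b) : ℝ) : ℂ) *
      ∫ s in Ioi (0 : ℝ), phi b ((2 * x : ℝ) * -1) ((2 * x : ℝ) * om - s) := by
  rw [hypIntegrand, hyp_eq_integral hb (norm_arg_lt x), mul_left_comm,
    mul_assoc (b : ℂ)]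
  congr 1
  rw [← integral_const_mul, ← integral_const_mul]
  refine setIntegral_congr_fun measurableSet_Ioi fun s hs => ?_
  have hch := Real.cosh_pos x
  have hL : (0 : ℝ) < Real.exp (-x) * (2 * Real.cosh x) := by positivity
  set B : ℂ := 1 - -(Complex.exp (Complex.I * Real.sqrt 3 * x) / (2 * Real.cosh x)) *
    Complex.exp (-s) with hB
  have hbase : 1 + Complex.exp ((2 * x : ℝ) * -1) + Complex.exp ((2 * x : ℝ) * om - s) =
      ((Real.exp (-x) * (2 * Real.cosh x) : ℝ) : ℂ) * B := by
    have h2 : Complex.exp (-x) * (2 * Real.cosh x) = 1 + Complex.exp ((2 * x : ℝ) * -1) := by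
      rw [Complex.ofReal_cosh, Complex.two_cosh, mul_add, ← Complex.exp_add, ← Complex.exp_add]
      push_cast
      ring_nf
      simp
    have hne : Complex.cosh x ≠ 0 := by rw [← Complex.ofReal_cosh]; exact_mod_cast hch.ne'
    have h3 : Complex.exp ((2 * x : ℝ) * om - s) =
        Complex.exp (-x) * (Complex.exp (Complex.I * Real.sqrt 3 * x) * Complex.exp (-s)) := by
      rw [two_mul_om, ← Complex.exp_add, ← Complex.exp_add]
      ring_nf
    rw [← h2, h3, hB]
    push_cast
    field_simp
    ring
  have hE : Complex.exp (b * ((2 * x : ℝ) * -1 + ((2 * x : ℝ) * om - s))) =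
      Complex.exp (Complex.I * b * Real.sqrt 3 * x) * Complex.exp (-(b * s)) *
      ((Real.exp (-(3 * b * x)) : ℝ) : ℂ) := by
    rw [two_mul_om, Complex.ofReal_exp, ← Complex.exp_add, ← Complex.exp_add]
    push_cast
    ring_nf
  simp only [phi]
  have hB0 : B ≠ 0 := by
    intro h
    have h1 : -(Complex.exp (Complex.I * Real.sqrt 3 * x) / (2 * Real.cosh x)) *
        Complex.exp (-s) = 1 := by rw [hB, sub_eq_zero] at h; exact h.symm
    have h2 := congrArg norm h1
    have h3 : Real.exp ((-s : ℂ)).re ≤ 1 := by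
      rw [Real.exp_le_one_iff]; simpa using (mem_Ioi.1 hs).le
    rw [norm_mul, Complex.norm_exp (-s : ℂ), norm_one] at h2
    nlinarith [norm_arg_lt x, Real.exp_pos ((-s : ℂ)).re]
  rw [hbase, hE, ofReal_mul_cpow hL hB0]
  have hR : (Real.cosh x ^ (3 * b))⁻¹ = 2 ^ (3 * b) *
      (Real.exp (-(3 * b * x)) * (Real.exp (-x) * (2 * Real.cosh x)) ^ (-(3 * b))) := by
    rw [Real.mul_rpow (Real.exp_pos _).le (by positivity), Real.mul_rpow two_pos.le hch.le,
      ← Real.exp_mul, Real.rpow_neg two_pos.le, Real.rpow_neg hch.le, ← mul_assoc (Real.exp _),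
      ← Real.exp_add, show -(3 * b * x) + -x * -(3 * b) = 0 by ring, Real.exp_zero]
    have : (0 : ℝ) < 2 ^ (3 * b) := by positivity
    field_simp
  rw [div_eq_mul_inv, ← Complex.ofReal_inv, hR]
  push_cast
  ring

lemma om_mem : om ∈ cone :=
  cexp_mem_cone ⟨le_rfl, by linarith [Real.pi_pos]⟩

/-- Only positive `x` need be considered: the integrand at `-x` is the conjugate of that at `x`. -/
lemma integral_hypIntegrand {b : ℝ} (hb : 0 < b) :
    ∫ x : ℝ, hypIntegrand b x =
      ((b * 2 ^ (3 * b) * (tailI b om).re : ℝ) : ℂ) := by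
  set K : ℂ := b * ((2 ^ (3 * b) : ℝ) : ℂ) with hK
  set g : ℝ → ℂ := fun R => ∫ s in Ioi (0 : ℝ), phi b (R * -1) (R * om - s) with hg
  have hgi : IntegrableOn g (Ioi 0) := (integrable_phi_ray hb om_mem).integral_prod_left
  have hgi2 : IntegrableOn (fun x => K * g (2 * x)) (Ioi 0) := by
    have := (integrableOn_Ioi_comp_mul_left_iff g 0 two_pos).2 (by simpa using hgi)
    exact this.const_mul K
  have heq : ∀ x ∈ Ioi (0 : ℝ), hypIntegrand b x = K * g (2 * x) := fun x _ =>
    integrand_eq hb x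
  have hpos : IntegrableOn (hypIntegrand b) (Ioi 0) :=
    hgi2.congr_fun (fun x hx => (heq x hx).symm) measurableSet_Ioi
  have hneg : IntegrableOn (hypIntegrand b) (Iic 0) := by
    have h1 : IntegrableOn (fun x => hypIntegrand b (-x)) (Ioi 0) := by
      simp only [hypIntegrand_neg]
      exact (LinearIsometryEquiv.integrable_comp_iff Complex.conjLIE).2 hpos
    rw [integrableOn_Iic_iff_integrableOn_Iio]
    have := h1.comp_neg
    simpa using this
  have hI : ∫ x in Ioi (0 : ℝ), hypIntegrand b x = K * (1 / 2) * tailI b om := by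
    rw [setIntegral_congr_fun measurableSet_Ioi heq, integral_const_mul,
      integral_comp_mul_left_Ioi g 0 two_pos, mul_zero, tailI, mul_assoc]
    rw [hK, Complex.real_smul]
    push_cast
    ring
  have hI2 : ∫ x in Iic (0 : ℝ), hypIntegrand b x =
      starRingEnd ℂ (∫ x in Ioi (0 : ℝ), hypIntegrand b x) := by
    rw [← integral_conj]
    have := integral_comp_neg_Ioi 0 (hypIntegrand b)
    rw [neg_zero] at this
    rw [← this]
    simp only [hypIntegrand_neg]
  rw [← setIntegral_univ, ← Iic_union_Ioi (a := (0 : ℝ)), setIntegral_union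
    (Iic_disjoint_Ioi le_rfl) measurableSet_Ioi hneg hpos, hI2, hI, add_comm, Complex.add_conj]
  congr 1
  have : K * (1 / 2) * tailI b om = ((b * 2 ^ (3 * b) * (1 / 2) : ℝ) : ℂ) * tailI b om := by
    rw [hK]; push_cast; ring
  rw [this, Complex.re_ofReal_mul]
  ring

end HypIntegral

/-- For every real `b > 0`,
`∫_{-∞}^∞ e^{ib√3 x}/cosh^{3b} x · ₂F₁(b, 3b; b+1; -e^{i√3x}/(2 cosh x)) dx
  = 2^{3b-1} · (b/3) · Γ(b)³/Γ(3b)`,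
where the hypergeometric series is written via Pochhammer symbols
`(a)_n = a(a+1)⋯(a+n-1)` and `cosh^{3b} x` is the real power of `cosh x > 0`. -/
theorem stmt_2 (b : ℝ) (hb : 0 < b) :
    ∫ x : ℝ,
        Complex.exp (Complex.I * b * Real.sqrt 3 * x) / ((Real.cosh x ^ (3 * b) : ℝ) : ℂ) *
        ∑' n : ℕ,
          (∏ i ∈ Finset.range n, ((b : ℂ) + i)) * (∏ i ∈ Finset.range n, (3 * (b : ℂ) + i)) /
            ((∏ i ∈ Finset.range n, ((b : ℂ) + 1 + i)) * (n.factorial : ℂ)) *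
            (-(Complex.exp (Complex.I * Real.sqrt 3 * x) / (2 * Real.cosh x))) ^ n
      = (((2 : ℝ) ^ (3 * b - 1) * (b / 3) * Real.Gamma b ^ 3 / Real.Gamma (3 * b) : ℝ) : ℂ) := by
  refine (HypIntegral.integral_hypIntegrand hb).trans ?_
  congr 1
  rw [HypIntegral.om, HypIntegral.tailI_re hb, HypIntegral.tailI_neg_one hb, Complex.ofReal_re,
    Real.rpow_sub_one two_ne_zero]
  have := Real.Gamma_pos_of_pos (show 0 < 3 * b by positivity)
  field_simp
  norm_num
end

section
/- $\int_{-\infty}^{\infty} \frac{\operatorname{sech} x \; e^{\frac{i\sqrt{3}}{2} x}}{\sqrt{e^{x} + e^{-x} + e^{i\sqrt{3} x}}}\, dx = \frac{\pi}{3}$, where the square root is the principal branch of the complex square root (well defined since $e^{x} + e^{-x} + e^{i\sqrt{3}x}$ has real part at least $1$ for all real $x$). -/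
/-!
Write `F` for the integrand. Since `F (-x)` is the conjugate of `F x`, the integral equals
`2 Re ∫₀^∞ F`. The exponents `1, -1, i√3` are the vertices of an equilateral triangle, and the ray
of argument `π/6` is a symmetry axis of that triangle; there the radicand, divided by `eᶻ`, becomes
the positive real function `q t = 1 + 2 e^{-√3 t} cos t`.

After pulling `eᶻ` out of the root, `F` extends to a function `g` that is holomorphic on the sector
`0 ≤ arg z ≤ π/6` (the rescaled radicand `Q` has real part bounded below there, `sector_bounds`)
and satisfies `‖g z‖ ≤ 20 e^{-Re z}` (`norm_g_le`). Cauchy's theorem therefore moves the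
integral from the positive real axis to the ray `t w₀`, `w₀ = e^{iπ/6}`. In the coordinate
`z = eʷ` the sector is the strip `0 ≤ Im w ≤ π/6`, and the theorem is applied to rectangles.

On the ray `Re (g (t w₀) w₀)` is an exact derivative, that of `arctan (e^{√3 t} √(q t))`
(`hasDerivAt_arctan_v`). Hence `Re ∫₀^∞ F = π/2 - arctan √3 = π/6`.
-/

namespace SechSqrt

open Complex Filter Topology MeasureTheory

/-! ### The holomorphic extension on the sector -/

/-- The radicand `eᶻ + e⁻ᶻ + e^{i√3 z}` divided by `eᶻ`. -/
noncomputable def Q (z : ℂ) : ℂ :=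
  1 + exp (-2 * z) + exp ((I * Real.sqrt 3 - 1) * z)

/-- The integrand, rewritten with the factor `e^{z/2}` taken out of the square root. The principal
branch of `Q z ^ (1/2)` is holomorphic on the sector `0 ≤ arg z ≤ π/6`, since `Q` has positive real
part there. -/
noncomputable def g (z : ℂ) : ℂ :=
  2 * exp ((I * Real.sqrt 3 - 3) / 2 * z) / ((1 + exp (-2 * z)) * Q z ^ ((1 : ℂ) / 2))

lemma exp_neg_two_le : Real.exp (-2) ≤ 0.14 := by
  have h := Real.exp_neg_one_lt_d9
  have : Real.exp (-2) = Real.exp (-1) * Real.exp (-1) := by rw [← Real.exp_add]; norm_num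
  rw [this]; nlinarith [Real.exp_pos (-1)]

lemma exp_neg_two_ge : 1 / 8 ≤ Real.exp (-2) := by
  have h := Real.exp_neg_one_gt_d9
  have : Real.exp (-2) = Real.exp (-1) * Real.exp (-1) := by rw [← Real.exp_add]; norm_num
  rw [this]; nlinarith [Real.exp_pos (-1)]

/-- On the sector `0 ≤ arg z ≤ π/6` both factors of the denominator of `g` have real part bounded
away from `0`. For `Re z ≤ 1` the angle `2 Im z` is at most `2/√3 < π/2`, so `e^{-2z}` has positive
real part and compensates for the third term of `Q`, whose modulus is at most `1`; for `Re z ≥ 1`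
both exponentials are small. -/
lemma sector_bounds {z : ℂ} (h0 : 0 ≤ z.im) (h1 : Real.sqrt 3 * z.im ≤ z.re) :
    1 / 25 ≤ (Q z).re ∧ 1 / 2 ≤ (1 + exp (-2 * z)).re := by
  have hs : Real.sqrt 3 ^ 2 = 3 := Real.sq_sqrt (by norm_num)
  have hs0 : 0 ≤ Real.sqrt 3 := Real.sqrt_nonneg 3
  have hY : 0 ≤ Real.sqrt 3 * z.im := by positivity
  have e1 : (exp (-2 * z)).re = Real.exp (-2 * z.re) * Real.cos (2 * z.im) := by
    rw [exp_re]; simp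
  have e2 : (exp ((I * Real.sqrt 3 - 1) * z)).re =
      Real.exp (-z.re - Real.sqrt 3 * z.im) * Real.cos (Real.sqrt 3 * z.re - z.im) := by
    rw [exp_re]; congr 2 <;> simp
    ring
  have hQ : (Q z).re = 1 + (exp (-2 * z)).re + (exp ((I * Real.sqrt 3 - 1) * z)).re := by
    simp [Q]
  have hP : (1 + exp (-2 * z)).re = 1 + (exp (-2 * z)).re := by simp
  rw [hQ, hP, e1, e2]
  have c1 := Real.neg_one_le_cos (2 * z.im)
  have c2 := Real.neg_one_le_cos (Real.sqrt 3 * z.re - z.im)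
  have p1 := Real.exp_pos (-2 * z.re)
  have p2 := Real.exp_pos (-z.re - Real.sqrt 3 * z.im)
  rcases le_total z.re 1 with hX | hX
  · have hc := Real.one_sub_sq_div_two_le_cos (x := 2 * z.im)
    have hy2 : 3 * z.im ^ 2 ≤ 1 := by
      have : (Real.sqrt 3 * z.im) ^ 2 ≤ 1 := by
        apply pow_le_one₀ hY; linarith
      rw [mul_pow, hs] at this; exact this
    have hc' : 1 / 3 ≤ Real.cos (2 * z.im) := by nlinarith
    have b1 : 1 / 8 ≤ Real.exp (-2 * z.re) :=
      exp_neg_two_ge.trans (Real.exp_le_exp.2 (by linarith))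
    have b2 : Real.exp (-z.re - Real.sqrt 3 * z.im) ≤ 1 := Real.exp_le_one_iff.2 (by linarith)
    constructor <;> nlinarith
  · have b1 : Real.exp (-2 * z.re) ≤ 0.14 :=
      (Real.exp_le_exp.2 (by linarith)).trans exp_neg_two_le
    have b2 : Real.exp (-z.re - Real.sqrt 3 * z.im) ≤ 0.37 :=
      (Real.exp_le_exp.2 (by linarith)).trans
        (Real.exp_neg_one_lt_d9.le.trans (by norm_num))
    constructor <;> nlinarith

lemma norm_g_le {z : ℂ} (h0 : 0 ≤ z.im) (h1 : Real.sqrt 3 * z.im ≤ z.re) :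
    ‖g z‖ ≤ 20 * Real.exp (-z.re) := by
  obtain ⟨hQ, hP⟩ := sector_bounds h0 h1
  have hY : 0 ≤ Real.sqrt 3 * z.im := by positivity
  have hQ' : 1 / 25 ≤ ‖Q z‖ := hQ.trans (re_le_norm _)
  have hP' : 1 / 2 ≤ ‖1 + exp (-2 * z)‖ := hP.trans (re_le_norm _)
  have hQ0 : Q z ≠ 0 := by rw [← norm_pos_iff]; linarith
  have hr : 1 / 5 ≤ ‖Q z ^ ((1 : ℂ) / 2)‖ := by
    have : ‖Q z ^ ((1 : ℂ) / 2)‖ = Real.sqrt ‖Q z‖ := by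
      rw [norm_cpow_of_ne_zero hQ0, Real.sqrt_eq_rpow]; simp
    rw [this]
    apply Real.le_sqrt_of_sq_le; linarith
  have hn : ‖exp ((I * Real.sqrt 3 - 3) / 2 * z)‖ ≤ Real.exp (-z.re) := by
    rw [norm_exp]
    apply Real.exp_le_exp.2
    have : ((I * Real.sqrt 3 - 3) / 2 * z).re = - (Real.sqrt 3 * z.im) / 2 - 3 / 2 * z.re := by
      have : ((I * Real.sqrt 3 - 3) / 2 * z) = (I * Real.sqrt 3 - 3) * z * ((1/2 : ℝ) : ℂ) := by
        push_cast; ring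
      rw [this, re_mul_ofReal]; simp; ring
    rw [this]; linarith
  rw [g, norm_div, norm_mul, norm_mul, div_le_iff₀ (by nlinarith)]
  have : 1 / 2 * (1 / 5) ≤ ‖1 + exp (-2 * z)‖ * ‖Q z ^ ((1 : ℂ) / 2)‖ := by gcongr
  have e := Real.exp_pos (-z.re)
  simp only [Complex.norm_ofNat]
  nlinarith

lemma differentiableAt_g {z : ℂ} (h0 : 0 ≤ z.im) (h1 : Real.sqrt 3 * z.im ≤ z.re) :
    DifferentiableAt ℂ g z := by
  obtain ⟨hQ, hP⟩ := sector_bounds h0 h1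
  have hs : Q z ∈ slitPlane := Or.inl (by linarith)
  have hP0 : 1 + exp (-2 * z) ≠ 0 := by
    intro h; rw [h] at hP; norm_num at hP
  have hdQ : DifferentiableAt ℂ Q z := by unfold Q; fun_prop
  have hr0 : Q z ^ ((1 : ℂ) / 2) ≠ 0 := by
    rw [Ne, cpow_eq_zero_iff]; intro h; exact slitPlane_ne_zero hs h.1
  unfold g
  refine DifferentiableAt.div (by fun_prop) (DifferentiableAt.mul (by fun_prop) ?_)
    (mul_ne_zero hP0 hr0)
  exact hdQ.cpow_const hs

/-! ### The ray of argument `π/6` -/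

/-- The rescaled radicand on the ray: `q t = Q (t w₀)`, see `Q_top`. -/
noncomputable def q (t : ℝ) : ℝ := 1 + 2 * Real.exp (-(Real.sqrt 3 * t)) * Real.cos t

/-- The function `e^{√3 t} √(q t)`, whose arctangent is a primitive of the real part of the form
`g dz` on the ray. -/
noncomputable def v (t : ℝ) : ℝ := Real.exp (Real.sqrt 3 * t) * Real.sqrt (q t)

/-- The direction `e^{iπ/6}` of the symmetry axis, in Cartesian form. -/
noncomputable def w₀ : ℂ := Real.sqrt 3 / 2 + I / 2

lemma w₀_re : w₀.re = Real.sqrt 3 / 2 := by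
  have : w₀ = ⟨Real.sqrt 3 / 2, 1 / 2⟩ := by
    rw [Complex.mk_eq_add_mul_I, w₀]; push_cast; ring
  rw [this]

lemma w₀_im : w₀.im = 1 / 2 := by
  have : w₀ = ⟨Real.sqrt 3 / 2, 1 / 2⟩ := by
    rw [Complex.mk_eq_add_mul_I, w₀]; push_cast; ring
  rw [this]

lemma sqrt3C : (Real.sqrt 3 : ℂ) ^ 2 = 3 := by
  rw [← ofReal_pow, Real.sq_sqrt (by norm_num)]; norm_num

lemma exp_top1 (t : ℝ) : exp (-2 * (t * w₀)) =
    (Real.exp (-(Real.sqrt 3 * t)) : ℂ) * (Real.cos t - Real.sin t * I) := by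
  have : -2 * (t * w₀) = ((-(Real.sqrt 3 * t) : ℝ) : ℂ) + ((-t : ℝ) : ℂ) * I := by
    rw [w₀]; push_cast; ring
  rw [this, exp_add, exp_mul_I, ofReal_exp]
  push_cast; rw [Complex.cos_neg, Complex.sin_neg]; ring

lemma exp_top2 (t : ℝ) : exp ((I * Real.sqrt 3 - 1) * (t * w₀)) =
    (Real.exp (-(Real.sqrt 3 * t)) : ℂ) * (Real.cos t + Real.sin t * I) := by
  have : (I * Real.sqrt 3 - 1) * (t * w₀) =
      ((-(Real.sqrt 3 * t) : ℝ) : ℂ) + (t : ℂ) * I := by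
    rw [w₀]; push_cast
    linear_combination (t * I / 2 : ℂ) * sqrt3C + (t * Real.sqrt 3 / 2 : ℂ) * I_sq
  rw [this, exp_add, exp_mul_I, ofReal_exp]
  push_cast; ring

lemma exp_top3 (t : ℝ) : exp ((I * Real.sqrt 3 - 3) / 2 * (t * w₀)) =
    (Real.exp (-(Real.sqrt 3 * t)) : ℂ) := by
  rw [ofReal_exp]; congr 1
  rw [w₀]; push_cast
  linear_combination (t * I / 4 : ℂ) * sqrt3C + (t * Real.sqrt 3 / 4 : ℂ) * I_sq

lemma Q_top (t : ℝ) : Q (t * w₀) = (q t : ℂ) := by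
  rw [Q, exp_top1, exp_top2, q]; push_cast; ring

lemma top_sector {t : ℝ} (ht : 0 ≤ t) : 0 ≤ ((t : ℂ) * w₀).im ∧
    Real.sqrt 3 * ((t : ℂ) * w₀).im ≤ ((t : ℂ) * w₀).re := by
  rw [re_ofReal_mul, im_ofReal_mul, w₀_re, w₀_im]
  exact ⟨by positivity, by linarith⟩

lemma q_pos {t : ℝ} (ht : 0 ≤ t) : 1 / 25 ≤ q t := by
  have h := (sector_bounds (top_sector ht).1 (top_sector ht).2).1
  rwa [Q_top, ofReal_re] at h

/-- With `β = e^{-√3 t} e^{-it}` one has `g (t w₀) w₀ = 2 e^{-√3 t} w₀ / ((1 + β) √(q t))`, and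
`|1 + β|² = q t + e^{-2√3 t}` is proportional to `1 + (v t)²`. Taking real parts
gives the derivative of `arctan v`. -/
lemma hasDerivAt_arctan_v {t : ℝ} (ht : 0 ≤ t) :
    HasDerivAt (fun t => Real.arctan (v t)) (g (t * w₀) * w₀).re t := by
  have hq := q_pos ht
  have hq0 : 0 < q t := by linarith
  have hs : Real.sqrt 3 ^ 2 = 3 := Real.sq_sqrt (by norm_num)
  have hP := (sector_bounds (top_sector ht).1 (top_sector ht).2).2
  have hdE : HasDerivAt (fun t : ℝ => Real.exp (-(Real.sqrt 3 * t)))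
      (Real.exp (-(Real.sqrt 3 * t)) * -(Real.sqrt 3 * 1)) t :=
    (((hasDerivAt_id t).const_mul _).neg).exp
  have hdE' : HasDerivAt (fun t : ℝ => Real.exp (Real.sqrt 3 * t))
      (Real.exp (Real.sqrt 3 * t) * (Real.sqrt 3 * 1)) t :=
    ((hasDerivAt_id t).const_mul _).exp
  have hdq : HasDerivAt q _ t :=
    ((hdE.const_mul 2).mul (Real.hasDerivAt_cos t)).const_add 1
  have hdv : HasDerivAt v _ t := hdE'.mul (hdq.sqrt hq0.ne')
  convert hdv.arctan using 1
  have hr : Q (t * w₀) ^ ((1 : ℂ) / 2) = (Real.sqrt (q t) : ℂ) := by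
    rw [Q_top, Real.sqrt_eq_rpow, ofReal_cpow hq0.le]; norm_num
  rw [g, hr, exp_top3, exp_top1]
  rw [exp_top1] at hP
  have hr2 := Real.sq_sqrt hq0.le
  have hr0 := Real.sqrt_pos.2 hq0
  rw [v]
  have hEE : Real.exp (Real.sqrt 3 * t) = (Real.exp (-(Real.sqrt 3 * t)))⁻¹ := by
    rw [Real.exp_neg, inv_inv]
  rw [hEE]
  have hqd : q t = 1 + 2 * Real.exp (-(Real.sqrt 3 * t)) * Real.cos t := rfl
  have hE0 := Real.exp_pos (-(Real.sqrt 3 * t))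
  have hcs := Real.sin_sq_add_cos_sq t
  set E := Real.exp (-(Real.sqrt 3 * t))
  set r := Real.sqrt (q t)
  set c := Real.cos t
  set s := Real.sin t
  have hP1 : 1 / 2 ≤ 1 + E * c := by simpa using hP
  have hw : w₀ = ⟨Real.sqrt 3 / 2, 1 / 2⟩ := by
    rw [Complex.mk_eq_add_mul_I, w₀]; push_cast; ring
  have e1 : 2 * (E : ℂ) / ((1 + E * (c - s * I)) * r) * w₀ =
      (⟨E * Real.sqrt 3, E⟩ : ℂ) / ⟨(1 + E * c) * r, -(E * s * r)⟩ := by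
    rw [hw]; simp only [Complex.mk_eq_add_mul_I]; push_cast; ring
  rw [e1, Complex.div_re]
  simp only [normSq_mk]
  -- `|1 + β|² = q + E²`, the source of the denominator `1 + v²`
  have hn : (1 + E * c) * r * ((1 + E * c) * r) + -(E * s * r) * -(E * s * r)
      = r ^ 2 * (E ^ 2 + r ^ 2) := by
    linear_combination r ^ 2 * E ^ 2 * hcs - r ^ 2 * hr2 - r ^ 2 * hqd
  rw [hn]
  field_simp
  linear_combination -Real.sqrt 3 * (hr2 + hqd)

/-! ### The integrand on the real line -/

/-- The integrand of the theorem. -/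
noncomputable def F (x : ℝ) : ℂ :=
  (1 / Real.cosh x : ℂ) * exp (I * Real.sqrt 3 / 2 * x) /
    (exp x + exp (-x) + exp (I * Real.sqrt 3 * x)) ^ ((1 : ℂ) / 2)

lemma radicand_re (x : ℝ) : 1 ≤ (exp x + exp (-x) + exp (I * Real.sqrt 3 * x)).re := by
  have e1 : (exp (-x : ℂ)).re = Real.exp (-x) := by rw [← ofReal_neg, exp_ofReal_re]
  have e2 : (exp (I * Real.sqrt 3 * x)).re = Real.cos (Real.sqrt 3 * x) := by
    rw [exp_re]; simp
  rw [add_re, add_re, exp_ofReal_re, e1, e2]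
  linarith [Real.add_one_le_exp x, Real.add_one_le_exp (-x),
    Real.neg_one_le_cos (Real.sqrt 3 * x)]

lemma radicand_mem (x : ℝ) : exp x + exp (-x) + exp (I * Real.sqrt 3 * x) ∈ slitPlane :=
  Or.inl (by linarith [radicand_re x])

lemma continuous_F : Continuous F := by
  unfold F
  refine Continuous.div ?_ ?_ ?_
  · refine Continuous.mul (Continuous.div continuous_const (by fun_prop) ?_) (by fun_prop)
    intro x; exact ofReal_ne_zero.2 (Real.cosh_pos x).ne'
  · exact Continuous.cpow (by fun_prop) continuous_const radicand_mem
  · intro x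
    rw [Ne, cpow_eq_zero_iff]
    exact fun h => slitPlane_ne_zero (radicand_mem x) h.1

lemma F_neg (x : ℝ) : F (-x) = (starRingEnd ℂ) (F x) := by
  have h := conj_cpow _ ((1 : ℂ) / 2) (slitPlane_arg_ne_pi (radicand_mem x))
  have h2 : (starRingEnd ℂ) ((1 : ℂ) / 2) = 1 / 2 := by
    rw [map_div₀, map_one, map_ofNat]
  rw [h2] at h
  rw [F, F, map_div₀, map_mul, ← h]
  simp only [map_add, ← exp_conj, map_mul, map_div₀, map_neg, conj_ofReal, conj_I, map_one,
    map_ofNat, Real.cosh_neg, ofReal_neg, neg_neg]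
  congr 2
  · congr 1; ring
  · rw [add_comm (exp (-(x : ℂ)))]; congr 2; ring

lemma F_eq_g {x : ℝ} (hx : 0 ≤ x) : F x = g x := by
  have hQ0 : Q x ≠ 0 := by
    have h := (sector_bounds (z := (x : ℂ)) (by simp) (by simpa using hx)).1
    intro h0; rw [h0] at h; norm_num at h
  have e1 : exp x + exp (-x) + exp (I * Real.sqrt 3 * x) = (Real.exp x : ℂ) * Q x := by
    rw [Q, ofReal_exp, mul_add, mul_add, ← exp_add, ← exp_add, mul_one]
    congr 3 <;> ring
  have e2 : ((Real.exp x : ℂ) * Q x) ^ ((1 : ℂ) / 2) = exp (x / 2) * Q x ^ ((1 : ℂ) / 2) := by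
    rw [cpow_def_of_ne_zero (mul_ne_zero (ofReal_ne_zero.2 (Real.exp_pos x).ne') hQ0),
      cpow_def_of_ne_zero hQ0, log_ofReal_mul (Real.exp_pos x) hQ0, Real.log_exp, ← exp_add]
    congr 1; ring
  have e3 : (Real.cosh x : ℂ) = exp x * (1 + exp (-2 * x)) / 2 := by
    rw [ofReal_cosh, Complex.cosh, mul_add, ← exp_add, mul_one]
    congr 3; ring
  have e4 : exp (I * Real.sqrt 3 / 2 * x) =
      exp ((I * Real.sqrt 3 - 3) / 2 * x) * (exp x * exp (x / 2)) := by
    rw [← exp_add, ← exp_add]; congr 1; ring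
  rw [F, g, e1, e2, e3, e4]
  have n1 := exp_ne_zero (x : ℂ)
  have n2 := exp_ne_zero (x / 2 : ℂ)
  field_simp

lemma norm_F_le {x : ℝ} (hx : 0 ≤ x) : ‖F x‖ ≤ 20 * Real.exp (-x) := by
  rw [F_eq_g hx]
  simpa using norm_g_le (z := (x : ℂ)) (by simp) (by simpa using hx)

lemma integrableOn_F_Ioi : IntegrableOn F (Set.Ioi 0) := by
  refine Integrable.mono' ((integrableOn_exp_neg_Ioi 0).const_mul 20)
    continuous_F.aestronglyMeasurable ?_
  filter_upwards [ae_restrict_mem measurableSet_Ioi] with x hx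
  exact norm_F_le (le_of_lt hx)

lemma integrableOn_F_Iic : IntegrableOn F (Set.Iic 0) := by
  have h : IntegrableOn (fun x => F (-x)) (Set.Ici 0) := by
    rw [integrableOn_Ici_iff_integrableOn_Ioi]
    refine Integrable.mono' ((integrableOn_exp_neg_Ioi 0).const_mul 20)
      (continuous_F.comp continuous_neg).aestronglyMeasurable ?_
    filter_upwards [ae_restrict_mem measurableSet_Ioi] with x hx
    rw [F_neg, RCLike.norm_conj]
    exact norm_F_le (le_of_lt hx)
  have h' := IntegrableOn.comp_neg_Iic (c := (0 : ℝ)) (f := fun x => F (-x)) (by simpa using h)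
  simpa using h'

lemma integral_F : ∫ x, F x = ((2 * (∫ x in Set.Ioi 0, F x).re : ℝ) : ℂ) := by
  rw [← intervalIntegral.integral_Iic_add_Ioi integrableOn_F_Iic integrableOn_F_Ioi]
  have h := integral_comp_neg_Ioi 0 F
  rw [neg_zero] at h
  rw [← h]
  simp_rw [F_neg]
  rw [integral_conj, add_comm, add_conj]

/-! ### Rotating the contour -/

/-- The form `g z dz` in the logarithmic coordinate `z = eʷ`, which turns the sector into the strip
`0 ≤ Im w ≤ π/6`. -/
noncomputable def H (w : ℂ) : ℂ := g (exp w) * exp w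

lemma strip_sector {w : ℂ} (h0 : 0 ≤ w.im) (h1 : w.im ≤ Real.pi / 6) :
    0 ≤ (exp w).im ∧ Real.sqrt 3 * (exp w).im ≤ (exp w).re ∧
      Real.exp w.re / 2 ≤ (exp w).re := by
  have hs : Real.sqrt 3 ^ 2 = 3 := Real.sq_sqrt (by norm_num)
  have hs1 : 1 ≤ Real.sqrt 3 := Real.one_le_sqrt.2 (by norm_num)
  have hpi := Real.pi_pos
  have a : 0 ≤ Real.sin w.im := Real.sin_nonneg_of_nonneg_of_le_pi h0 (by linarith)
  have b : Real.sin w.im ≤ 1 / 2 := by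
    rw [← Real.sin_pi_div_six]
    exact Real.sin_le_sin_of_le_of_le_pi_div_two (by linarith) (by linarith) h1
  have c : Real.sqrt 3 / 2 ≤ Real.cos w.im := by
    rw [← Real.cos_pi_div_six]
    exact Real.cos_le_cos_of_nonneg_of_le_pi h0 (by linarith) h1
  have e := Real.exp_pos w.re
  rw [exp_re, exp_im]
  refine ⟨by positivity, ?_, ?_⟩
  · have : Real.sqrt 3 * Real.sin w.im ≤ Real.cos w.im := by nlinarith
    calc _ = Real.exp w.re * (Real.sqrt 3 * Real.sin w.im) := by ring
      _ ≤ _ := by gcongr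
  · rw [div_eq_mul_inv]; gcongr; linarith

lemma norm_H_le {w : ℂ} (h0 : 0 ≤ w.im) (h1 : w.im ≤ Real.pi / 6) :
    ‖H w‖ ≤ 20 * (Real.exp w.re * Real.exp (-(Real.exp w.re / 2))) := by
  obtain ⟨a, b, c⟩ := strip_sector h0 h1
  rw [H, norm_mul, norm_exp]
  calc _ ≤ 20 * Real.exp (-(exp w).re) * Real.exp w.re := by gcongr; exact norm_g_le a b
    _ ≤ 20 * Real.exp (-(Real.exp w.re / 2)) * Real.exp w.re := by gcongr
    _ = _ := by ring

lemma differentiableAt_H {w : ℂ} (h0 : 0 ≤ w.im) (h1 : w.im ≤ Real.pi / 6) :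
    DifferentiableAt ℂ H w := by
  obtain ⟨a, b, _⟩ := strip_sector h0 h1
  exact ((differentiableAt_g a b).comp w differentiableAt_exp).mul differentiableAt_exp

/-- A vertical side of the rectangle contributes nothing in the limit as soon as the bound of
`norm_H_le` tends to `0` along it. -/
lemma tendsto_side {l : Filter ℝ} {s : ℝ → ℝ}
    (hs : Tendsto (fun R => 20 * (Real.exp (s R) * Real.exp (-(Real.exp (s R) / 2)))) l (𝓝 0)) :
    Tendsto (fun R => ∫ y in (0 : ℝ)..(Real.pi / 6), H (s R + y * I)) l (𝓝 0) := by
  refine squeeze_zero_norm (a := fun R =>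
    20 * (Real.exp (s R) * Real.exp (-(Real.exp (s R) / 2))) * |Real.pi / 6 - 0|) (fun R => ?_)
    (by simpa using hs.mul_const |Real.pi / 6 - 0|)
  refine intervalIntegral.norm_integral_le_of_norm_le_const fun y hy => ?_
  rw [Set.uIoc_of_le (by positivity)] at hy
  have h := norm_H_le (w := s R + y * I) (by simpa using hy.1.le) (by simpa using hy.2)
  simpa using h

/-- Towards `z = ∞` the exponential decay of `g` dominates. -/
lemma tendsto_right :
    Tendsto (fun R : ℝ => ∫ y in (0 : ℝ)..(Real.pi / 6), H (R + y * I)) atTop (𝓝 0) := by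
  refine tendsto_side (s := fun R => R) ?_
  have h := (Real.tendsto_pow_mul_exp_neg_atTop_nhds_zero 1).comp
    (Real.tendsto_exp_atTop.atTop_div_const (two_pos))
  convert h.const_mul 40 using 2
  · simp; ring
  · simp

/-- Towards `z = 0` the function `g` is bounded and `dz = eʷ dw` is small. -/
lemma tendsto_left :
    Tendsto (fun R : ℝ => ∫ y in (0 : ℝ)..(Real.pi / 6), H ((-R : ℝ) + y * I)) atTop (𝓝 0) := by
  refine tendsto_side (s := fun R => -R) ?_
  have h : Continuous fun x : ℝ => 20 * (x * Real.exp (-(x / 2))) := by fun_prop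
  simpa [Function.comp_def] using (h.tendsto 0).comp (Real.tendsto_exp_neg_atTop_nhds_zero)

/-- The substitution `x = eˢ` identifies the lower side with the integral over the positive
half-line. -/
lemma tendsto_bottom :
    Tendsto (fun R : ℝ => ∫ x in (-R)..R, H (x + (0 : ℝ) * I)) atTop
      (𝓝 (∫ x in Set.Ioi 0, F x)) := by
  have hsub : ∀ R : ℝ, ∫ x in (-R)..R, H (x + (0 : ℝ) * I) =
      (∫ x in (0 : ℝ)..Real.exp R, F x) - ∫ x in (0 : ℝ)..Real.exp (-R), F x := by
    intro R
    rw [intervalIntegral.integral_interval_sub_left (continuous_F.intervalIntegrable _ _)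
      (continuous_F.intervalIntegrable _ _),
      ← intervalIntegral.integral_deriv_smul_comp (fun x _ => Real.hasDerivAt_exp x)
        Real.continuous_exp.continuousOn continuous_F]
    refine intervalIntegral.integral_congr fun x _ => ?_
    simp only [Function.comp, F_eq_g (Real.exp_pos x).le, H, real_smul, ofReal_exp, ofReal_zero,
      zero_mul, add_zero]
    ring
  simp_rw [hsub]
  have h1 := intervalIntegral_tendsto_integral_Ioi 0 integrableOn_F_Ioi Real.tendsto_exp_atTop
  have h2 : Tendsto (fun R : ℝ => ∫ x in (0 : ℝ)..Real.exp (-R), F x) atTop (𝓝 0) := by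
    have hc : Continuous fun b => ∫ x in (0 : ℝ)..b, F x :=
      intervalIntegral.continuous_primitive (fun a b => continuous_F.intervalIntegrable a b) 0
    simpa [Function.comp_def] using (hc.tendsto 0).comp Real.tendsto_exp_neg_atTop_nhds_zero
  simpa using h1.sub h2

lemma exp_top (x : ℝ) : exp (x + (Real.pi / 6 : ℝ) * I) = (Real.exp x : ℂ) * w₀ := by
  rw [exp_add, exp_mul_I, ← ofReal_cos, ← ofReal_sin, Real.cos_pi_div_six, Real.sin_pi_div_six,
    w₀, ofReal_exp]
  push_cast; ring

/-- The upper side is evaluated exactly by the fundamental theorem of calculus. -/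
lemma top_integral (R : ℝ) :
    (∫ x in (-R)..R, H (x + (Real.pi / 6 : ℝ) * I)).re =
      Real.arctan (v (Real.exp R)) - Real.arctan (v (Real.exp (-R))) := by
  have hc : Continuous fun x : ℝ => H (x + (Real.pi / 6 : ℝ) * I) := by
    rw [continuous_iff_continuousAt]
    intro x
    have hd : ContinuousAt H (x + (Real.pi / 6 : ℝ) * I) :=
      (differentiableAt_H (by simp; positivity) (by simp)).continuousAt
    exact ContinuousAt.comp (f := fun x : ℝ => (x + (Real.pi / 6 : ℝ) * I : ℂ)) hd (by fun_prop)
  rw [← reCLM_apply, ← reCLM.intervalIntegral_comp_comm (hc.intervalIntegrable _ _)]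
  refine intervalIntegral.integral_eq_sub_of_hasDerivAt
    (f := fun x => Real.arctan (v (Real.exp x))) (fun x _ => ?_)
    ((reCLM.continuous.comp hc).intervalIntegrable _ _)
  have h := (hasDerivAt_arctan_v (Real.exp_pos x).le).comp x (Real.hasDerivAt_exp x)
  have e : reCLM (H (x + (Real.pi / 6 : ℝ) * I)) =
      (g (Real.exp x * w₀) * w₀).re * Real.exp x := by
    rw [reCLM_apply, H, exp_top, ← re_mul_ofReal]
    congr 1; ring
  rw [e]
  exact h

lemma tendsto_top_edge :
    Tendsto (fun R : ℝ => (∫ x in (-R)..R, H (x + (Real.pi / 6 : ℝ) * I)).re) atTop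
      (𝓝 (Real.pi / 6)) := by
  simp_rw [top_integral]
  have hv0 : Real.arctan (v 0) = Real.pi / 3 := by
    have : v 0 = Real.sqrt 3 := by
      rw [v, q]; norm_num
    rw [this, Real.arctan_sqrt_three]
  have h2 : Tendsto (fun R : ℝ => Real.arctan (v (Real.exp (-R)))) atTop (𝓝 (Real.pi / 3)) := by
    rw [← hv0]
    exact (hasDerivAt_arctan_v le_rfl).continuousAt.tendsto.comp
      Real.tendsto_exp_neg_atTop_nhds_zero
  have hv : Tendsto v atTop atTop := by
    have h : Tendsto (fun t : ℝ => Real.exp (Real.sqrt 3 * t) * (1 / 5)) atTop atTop :=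
      (Real.tendsto_exp_atTop.comp (tendsto_id.const_mul_atTop (by positivity))).atTop_mul_const
        (by norm_num)
    refine tendsto_atTop_mono' _ ?_ h
    filter_upwards [eventually_ge_atTop 0] with t ht
    rw [v]
    gcongr
    apply Real.le_sqrt_of_sq_le
    linarith [q_pos ht]
  have h1 : Tendsto (fun R : ℝ => Real.arctan (v (Real.exp R))) atTop (𝓝 (Real.pi / 2)) :=
    (Real.tendsto_arctan_atTop.mono_right nhdsWithin_le_nhds).comp
      (hv.comp Real.tendsto_exp_atTop)
  convert h1.sub h2 using 2
  ring

lemma re_integral_F : (∫ x in Set.Ioi 0, F x).re = Real.pi / 6 := by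
  have hcauchy : ∀ R : ℝ, (∫ x in (-R)..R, H (x + (Real.pi / 6 : ℝ) * I)).re =
      ((∫ x in (-R)..R, H (x + (0 : ℝ) * I)) +
        I • (∫ y in (0 : ℝ)..(Real.pi / 6), H (R + y * I)) -
        I • (∫ y in (0 : ℝ)..(Real.pi / 6), H ((-R : ℝ) + y * I))).re := by
    intro R
    have h := integral_boundary_rect_eq_zero_of_differentiableOn H ⟨-R, 0⟩ ⟨R, Real.pi / 6⟩
      (fun w hw => by
        have hw' := hw.2
        simp only [Set.mem_preimage] at hw'
        rw [Set.uIcc_of_le (by positivity)] at hw'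
        exact (differentiableAt_H hw'.1 hw'.2).differentiableWithinAt)
    congr 1
    simp only at h
    linear_combination -h
  have h1 := (tendsto_bottom.add (tendsto_right.const_smul I)).sub (tendsto_left.const_smul I)
  have h2 := (continuous_re.tendsto _).comp h1
  have h3 := tendsto_top_edge
  simp_rw [hcauchy] at h3
  simpa using tendsto_nhds_unique h2 h3

end SechSqrt

/-- `∫_{-∞}^∞ sech x · e^{i√3 x/2} / √(eˣ + e⁻ˣ + e^{i√3 x}) dx = π/3`,
with the principal branch of the complex square root. -/
theorem stmt_3 :
    ∫ x : ℝ, (1 / Real.cosh x : ℂ) * Complex.exp (Complex.I * Real.sqrt 3 / 2 * x) /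
        (Complex.exp x + Complex.exp (-x) +
          Complex.exp (Complex.I * Real.sqrt 3 * x)) ^ ((1 : ℂ) / 2)
      = Real.pi / 3 := by
  have h := SechSqrt.integral_F
  rw [SechSqrt.re_integral_F] at h
  refine h.trans ?_
  push_cast; ring
end

section
/- $\int_{-\infty}^{\infty} \frac{dx}{\left(e^{x} + e^{-x} + e^{i\sqrt{3}\, x}\right)^{2}} = \frac{1}{3}$. -/
/-!
The exponents `1`, `-1`, `i√3` are the vertices of an equilateral triangle. Put
`D x = eˣ + e⁻ˣ + e^{i√3 x}` and `ω = e^{2πi/3}`. Turning the plane by `ω` permutes the three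
exponentials up to a common factor, and this symmetry evaluates the integral.

The left half-line contributes `∫₀^∞ dt / E(t)²`, where `E z = D (-z)` is `denom` below. In the
sector `-π/3 ≤ arg z ≤ 0` one has `|E z| ≥ e^{Re z} / 7` (`exp_le_norm_denom`), so the half-line of
integration may be turned clockwise by `π/3`, to the ray through `-ω` (`rayIntegral_const`). The
rotation is carried out by differentiating `∫₀^∞ w / E(w t)² dt` in the direction `w`: the
derivative of the integrand is a multiple of `d/dt (t / E(w t)²)`, whose integral vanishes.

By the symmetry, `D t = e^{(1 + i√3) t / 2} E(-ω t)` (`denom_neg`), so the whole integral is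
`∫₀^∞ (1 - ω e^{(1 + i√3) t}) / D(t)² dt`. This integrand is exactly the derivative of
`eᵗ / (2 D t)`, which goes from `1/6` at `0` to `1/2` at `∞`; the difference is `1/3`
(`integral_comb`).
-/

open MeasureTheory Set Filter Topology

/-- The denominator of the integrand (before squaring), reflected: `denom (-x)` is the expression
in the theorem. -/
noncomputable def denom (z : ℂ) : ℂ :=
  Complex.exp z + Complex.exp (-z) + Complex.exp (-(Complex.I * Real.sqrt 3 * z))

/-- The complex derivative of `denom`. -/
noncomputable def denom' (z : ℂ) : ℂ :=
  Complex.exp z - Complex.exp (-z)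
    - Complex.I * Real.sqrt 3 * Complex.exp (-(Complex.I * Real.sqrt 3 * z))

lemma hasDerivAt_denom (z : ℂ) : HasDerivAt denom (denom' z) z := by
  have h1 := Complex.hasDerivAt_exp z
  have h2 := (hasDerivAt_id z).neg.cexp
  have h3 := ((hasDerivAt_id z).const_mul (Complex.I * Real.sqrt 3)).neg.cexp
  refine ((h1.add h2).add h3).congr_deriv ?_
  simp only [denom', id, Pi.neg_apply]
  ring

lemma norm_third (z : ℂ) :
    ‖Complex.exp (-(Complex.I * Real.sqrt 3 * z))‖ = Real.exp (Real.sqrt 3 * z.im) := by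
  rw [Complex.norm_exp]
  simp

lemma norm_third_le {z : ℂ} (h : z.im ≤ 0) :
    ‖Complex.exp (-(Complex.I * Real.sqrt 3 * z))‖ ≤ 1 := by
  rw [norm_third, Real.exp_le_one_iff]
  exact mul_nonpos_of_nonneg_of_nonpos (Real.sqrt_nonneg 3) h

lemma norm_sq_exp_add (z : ℂ) :
    ‖Complex.exp z + Complex.exp (-z)‖ ^ 2
      = 4 * Real.sinh z.re ^ 2 + 4 * Real.cos z.im ^ 2 := by
  have h : Real.exp z.re * Real.exp (-z.re) = 1 := by rw [← Real.exp_add]; simp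
  rw [← Complex.normSq_eq_norm_sq, Complex.normSq_apply]
  simp only [Complex.add_re, Complex.add_im, Complex.exp_re, Complex.exp_im, Complex.neg_re,
    Complex.neg_im, Real.cos_neg, Real.sin_neg, Real.sinh_eq]
  linear_combination (Real.exp z.re - Real.exp (-z.re)) ^ 2 * Real.sin_sq_add_cos_sq z.im
    + 4 * Real.cos z.im ^ 2 * h

/-- Lower bound in the sector `-π/3 ≤ arg z ≤ 0`. The third exponential has modulus at most `1`,
while `|eᶻ + e⁻ᶻ| ≥ max (4/3) (e^{Re z} - 1)`. -/
lemma exp_le_norm_denom {z : ℂ} (hre : 0 ≤ z.re) (him : z.im ≤ 0)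
    (hsec : z.im ^ 2 ≤ 3 * z.re ^ 2) : Real.exp z.re / 7 ≤ ‖denom z‖ := by
  set m := ‖Complex.exp z + Complex.exp (-z)‖ with hm
  have hm0 : 0 ≤ m := norm_nonneg _
  have hsq := norm_sq_exp_add z
  rw [← hm] at hsq
  have hS : z.re ≤ Real.sinh z.re := Real.self_le_sinh_iff.2 hre
  have hS2 : z.re ^ 2 ≤ Real.sinh z.re ^ 2 := by gcongr
  have h1 : (4 / 3) ^ 2 ≤ m ^ 2 := by
    -- `1 - y² / 2 ≤ cos y` can only be squared when its left side is nonnegative.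
    rcases le_total 2 (z.im ^ 2) with h | h
    · nlinarith [sq_nonneg (Real.cos z.im)]
    · have hc := Real.one_sub_sq_div_two_le_cos (x := z.im)
      have hc2 : (1 - z.im ^ 2 / 2) ^ 2 ≤ Real.cos z.im ^ 2 := by
        have : 0 ≤ 1 - z.im ^ 2 / 2 := by linarith
        gcongr
      nlinarith [sq_nonneg (z.im ^ 2 - 4 / 3)]
  have h1' : 4 / 3 ≤ m := by nlinarith
  have h2 : 2 * Real.sinh z.re ≤ m := by
    have : 0 ≤ Real.sinh z.re := hre.trans hS
    nlinarith [sq_nonneg (Real.cos z.im)]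
  have h3 : Real.exp (-z.re) ≤ 1 := Real.exp_le_one_iff.2 (by linarith)
  rw [Real.sinh_eq] at h2
  have h4 : m - 1 ≤ ‖denom z‖ := by
    have := norm_sub_le_norm_add (Complex.exp z + Complex.exp (-z))
      (Complex.exp (-(Complex.I * Real.sqrt 3 * z)))
    have h5 := norm_third_le him
    unfold denom
    linarith
  linarith

lemma norm_denom'_le {z : ℂ} (hre : 0 ≤ z.re) (him : z.im ≤ 0) :
    ‖denom' z‖ ≤ 4 * Real.exp z.re := by
  have h1 : 1 ≤ Real.exp z.re := Real.one_le_exp hre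
  have h3 : Real.exp (-z.re) ≤ 1 := Real.exp_le_one_iff.2 (by linarith)
  have h5 := norm_third_le him
  have h6 : Real.sqrt 3 ≤ 2 := by rw [Real.sqrt_le_left (by norm_num)]; norm_num
  unfold denom'
  refine (norm_sub_le _ _).trans ?_
  have a1 := norm_sub_le (Complex.exp z) (Complex.exp (-z))
  rw [Complex.norm_exp, Complex.norm_exp, Complex.neg_re] at a1
  have a2 : ‖Complex.I * Real.sqrt 3 * Complex.exp (-(Complex.I * Real.sqrt 3 * z))‖ ≤ 2 * 1 := by
    rw [norm_mul, norm_mul, Complex.norm_I, one_mul, Complex.norm_real, Real.norm_eq_abs,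
      abs_of_nonneg (Real.sqrt_nonneg 3)]
    gcongr
  linarith

/-- The direction `1 + sin² s · ω²` with `ω² = -(1 + i√3) / 2`. It runs along the segment from `1`
to `-ω = (1 - i√3) / 2`; the parametrization by `sin²` keeps it on that segment for every real `s`,
so no boundary points of the parameter range need separate care. -/
noncomputable def dir (s : ℝ) : ℂ :=
  1 - (Real.sin s ^ 2 : ℝ) * ((1 + Complex.I * Real.sqrt 3) / 2)

lemma dir_re (s : ℝ) : (dir s).re = 1 - Real.sin s ^ 2 / 2 := by
  unfold dir
  rw [Complex.sub_re, Complex.re_ofReal_mul]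
  simp
  ring

lemma dir_im (s : ℝ) : (dir s).im = -(Real.sin s ^ 2 * Real.sqrt 3 / 2) := by
  unfold dir
  rw [Complex.sub_im, Complex.im_ofReal_mul]
  simp
  ring

lemma ray_mem (s : ℝ) {t : ℝ} (ht : 0 ≤ t) :
    t / 2 ≤ (dir s * t).re ∧ (dir s * t).im ≤ 0 ∧ (dir s * t).im ^ 2 ≤ 3 * (dir s * t).re ^ 2 := by
  have h0 := sq_nonneg (Real.sin s)
  have h1 := Real.sin_sq_le_one s
  have h3 : Real.sqrt 3 ^ 2 = 3 := Real.sq_sqrt (by norm_num)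
  rw [Complex.re_mul_ofReal, Complex.im_mul_ofReal, dir_re, dir_im]
  refine ⟨by nlinarith, ?_, ?_⟩
  · have : 0 ≤ Real.sin s ^ 2 * Real.sqrt 3 / 2 * t := by positivity
    linarith
  · set σ := Real.sin s ^ 2
    have : (-(σ * Real.sqrt 3 / 2) * t) ^ 2 = 3 * ((σ / 2) ^ 2 * t ^ 2) := by
      linear_combination (σ ^ 2 * t ^ 2 / 4) * h3
    rw [this, mul_pow]
    have : σ / 2 ≤ 1 - σ / 2 := by linarith
    gcongr

lemma norm_dir_le (s : ℝ) : ‖dir s‖ ≤ 2 := by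
  have h0 := sq_nonneg (Real.sin s)
  have h1 := Real.sin_sq_le_one s
  have h3 : Real.sqrt 3 ^ 2 = 3 := Real.sq_sqrt (by norm_num)
  have : ‖dir s‖ ^ 2 ≤ 2 ^ 2 := by
    rw [← Complex.normSq_eq_norm_sq, Complex.normSq_apply, dir_re, dir_im]
    set σ := Real.sin s ^ 2
    have : σ ^ 2 * Real.sqrt 3 ^ 2 = σ ^ 2 * 3 := by rw [h3]
    nlinarith
  exact (pow_le_pow_iff_left₀ (norm_nonneg _) (by norm_num) two_ne_zero).1 this

lemma denom_ray (s : ℝ) {t : ℝ} (ht : 0 ≤ t) : Real.exp (t / 2) / 7 ≤ ‖denom (dir s * t)‖ := by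
  obtain ⟨h1, h2, h3⟩ := ray_mem s ht
  refine le_trans ?_ (exp_le_norm_denom (by linarith) h2 h3)
  gcongr

lemma denom_ray_ne (s : ℝ) {t : ℝ} (ht : 0 ≤ t) : denom (dir s * t) ≠ 0 := by
  have := denom_ray s ht
  have h := Real.exp_pos (t / 2)
  exact norm_pos_iff.1 (by linarith)

lemma norm_inv_sq (s : ℝ) {t : ℝ} (ht : 0 ≤ t) :
    ‖1 / denom (dir s * t) ^ 2‖ ≤ 49 * Real.exp (-t) := by
  have h := denom_ray s ht
  have h0 := Real.exp_pos (t / 2)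
  have hpos : 0 < ‖denom (dir s * t)‖ := by linarith
  rw [norm_div, norm_one, norm_pow, div_le_iff₀ (by positivity)]
  have : (Real.exp (t / 2) / 7) ^ 2 ≤ ‖denom (dir s * t)‖ ^ 2 := by gcongr
  have h2 : Real.exp (-t) * Real.exp (t / 2) ^ 2 = 1 := by
    rw [← Real.exp_nat_mul, ← Real.exp_add]; simp; ring
  nlinarith [Real.exp_pos (-t)]

/-- The derivative of `t ↦ t / denom (dir s * t) ^ 2` for `t ≥ 0`. Times `dir' s`, it is also the
derivative in `s` of the integrand of `rayIntegral`. -/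
noncomputable def core (s t : ℝ) : ℂ :=
  1 / denom (dir s * t) ^ 2 - 2 * t * dir s * denom' (dir s * t) / denom (dir s * t) ^ 3

lemma norm_core (s : ℝ) {t : ℝ} (ht : 0 ≤ t) : ‖core s t‖ ≤ 12000 * Real.exp (-(1 / 2) * t) := by
  obtain ⟨h1, h2, h3⟩ := ray_mem s ht
  have hre : 0 ≤ (dir s * t).re := by linarith
  have hd := exp_le_norm_denom hre h2 h3
  have hd' := norm_denom'_le hre h2
  set p := (dir s * t).re
  have hp := Real.exp_pos p
  set a := Real.exp p
  have hquot : ‖2 * t * dir s * denom' (dir s * t) / denom (dir s * t) ^ 3‖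
      ≤ 4 * t * (1372 * Real.exp (-t)) := by
    have e1 : ‖denom' (dir s * t) / denom (dir s * t) ^ 3‖ ≤ (4 * a) / (a / 7) ^ 3 := by
      rw [norm_div, norm_pow]
      gcongr
    have e2 : (4 * a) / (a / 7) ^ 3 ≤ 1372 * Real.exp (-t) := by
      have : (4 * a) / (a / 7) ^ 3 = 1372 * (Real.exp (-p)) ^ 2 := by
        rw [Real.exp_neg]; simp only [a]; field_simp; norm_num
      rw [this, ← Real.exp_nat_mul]
      gcongr
      push_cast
      linarith
    rw [mul_div_assoc, norm_mul, norm_mul, norm_mul, Complex.norm_real, Real.norm_eq_abs,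
      abs_of_nonneg ht]
    have := norm_dir_le s
    calc _ ≤ ‖(2 : ℂ)‖ * t * 2 * (1372 * Real.exp (-t)) := by
          gcongr
          exact e1.trans e2
      _ = _ := by rw [Complex.norm_two]; ring
  have ht2 : t ≤ 2 * Real.exp (t / 2) - 2 := by
    have := Real.add_one_le_exp (t / 2); linarith
  have hs := norm_inv_sq s ht
  have hexp : Real.exp (-t) * Real.exp (t / 2) = Real.exp (-(1 / 2) * t) := by
    rw [← Real.exp_add]; congr 1; ring
  have hpos := Real.exp_pos (-t)
  have h7 : Real.exp (-t) ≤ Real.exp (-(1 / 2) * t) := by gcongr; linarith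
  refine (norm_sub_le _ _).trans ?_
  nlinarith

lemma integrable_bound (C : ℝ) :
    IntegrableOn (fun t : ℝ => C * Real.exp (-(1 / 2) * t)) (Ioi 0) :=
  (exp_neg_integrableOn_Ioi 0 (by norm_num)).const_mul C

lemma continuous_denom : Continuous denom := by unfold denom; fun_prop
lemma continuous_denom' : Continuous denom' := by unfold denom'; fun_prop

lemma continuousOn_inv_denom (s : ℝ) :
    ContinuousOn (fun t : ℝ => 1 / denom (dir s * t) ^ 2) (Ici 0) := by
  have := continuous_denom
  refine ContinuousOn.div (by fun_prop) (by fun_prop) fun t ht => pow_ne_zero _ (denom_ray_ne s ht)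

lemma continuousOn_core (s : ℝ) : ContinuousOn (core s) (Ici 0) := by
  have h1 := continuous_denom
  have h2 := continuous_denom'
  refine (continuousOn_inv_denom s).sub (ContinuousOn.div (by fun_prop) (by fun_prop)
    fun t ht => pow_ne_zero _ (denom_ray_ne s ht))

lemma integrable_inv (s : ℝ) :
    IntegrableOn (fun t : ℝ => 1 / denom (dir s * t) ^ 2) (Ioi 0) := by
  refine Integrable.mono' (integrable_bound 49) 
    (((continuousOn_inv_denom s).mono Ioi_subset_Ici_self).aestronglyMeasurable measurableSet_Ioi) ?_
  filter_upwards [ae_restrict_mem measurableSet_Ioi] with t ht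
  have ht : 0 < t := ht
  refine (norm_inv_sq s ht.le).trans ?_
  gcongr
  linarith

lemma integrable_core (s : ℝ) : IntegrableOn (core s) (Ioi 0) := by
  refine Integrable.mono' (integrable_bound 12000) 
    (((continuousOn_core s).mono Ioi_subset_Ici_self).aestronglyMeasurable measurableSet_Ioi) ?_
  filter_upwards [ae_restrict_mem measurableSet_Ioi] with t ht
  exact norm_core s (le_of_lt ht)

lemma tendsto_exp_half (C : ℝ) :
    Tendsto (fun t : ℝ => C * Real.exp (-(1 / 2) * t)) atTop (𝓝 0) := by
  have : Tendsto (fun t : ℝ => -(1 / 2) * t) atTop atBot :=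
    tendsto_id.const_mul_atTop_of_neg (by norm_num)
  simpa using (Real.tendsto_exp_atBot.comp this).const_mul C

lemma integral_core (s : ℝ) : ∫ t in Ioi (0 : ℝ), core s t = 0 := by
  have hder : ∀ t ∈ Ici (0 : ℝ),
      HasDerivAt (fun t : ℝ => (t : ℂ) / denom (dir s * t) ^ 2) (core s t) t := by
    intro t ht
    have hne := denom_ray_ne s ht
    have h1 : HasDerivAt (fun t : ℝ => (t : ℂ)) 1 t := Complex.ofRealCLM.hasDerivAt
    have h2 : HasDerivAt (fun t : ℝ => denom (dir s * t)) (denom' (dir s * t) * (dir s * 1)) t :=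
      (hasDerivAt_denom _).comp t (h1.const_mul (dir s))
    refine (h1.div (h2.pow 2) (pow_ne_zero _ hne)).congr_deriv ?_
    unfold core
    field_simp
    simp
    ring
  have hlim : Tendsto (fun t : ℝ => (t : ℂ) / denom (dir s * t) ^ 2) atTop (𝓝 0) := by
    refine squeeze_zero_norm' ?_ (tendsto_exp_half 98)
    filter_upwards [eventually_ge_atTop 0] with t ht
    have hs := norm_inv_sq s ht
    have ht2 : t ≤ 2 * Real.exp (t / 2) := by
      have := Real.add_one_le_exp (t / 2); linarith
    rw [div_eq_mul_one_div, norm_mul, Complex.norm_real, Real.norm_eq_abs, abs_of_nonneg ht]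
    calc t * _ ≤ (2 * Real.exp (t / 2)) * (49 * Real.exp (-t)) := by gcongr
      _ = 98 * (Real.exp (t / 2) * Real.exp (-t)) := by ring
      _ = _ := by rw [← Real.exp_add]; congr 2; ring
  rw [integral_Ioi_of_hasDerivAt_of_tendsto' hder (integrable_core s) hlim]
  simp

/-- The contour integral of `1 / denom²` over the ray from `0` in the direction `dir s`. -/
noncomputable def rayIntegral (s : ℝ) : ℂ :=
  ∫ t in Ioi (0 : ℝ), dir s * (1 / denom (dir s * t) ^ 2)

/-- The derivative of `dir`. -/
noncomputable def dir' (s : ℝ) : ℂ :=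
  -((2 * Real.sin s * Real.cos s : ℝ) * ((1 + Complex.I * Real.sqrt 3) / 2))

lemma hasDerivAt_dir (s : ℝ) : HasDerivAt dir (dir' s) s := by
  have h := (((Real.hasDerivAt_sin s).pow 2).ofReal_comp.mul_const
    ((1 + Complex.I * Real.sqrt 3) / 2)).const_sub 1
  refine h.congr_deriv ?_
  simp [dir']

lemma norm_dir'_le (s : ℝ) : ‖dir' s‖ ≤ 2 := by
  have h3 : ‖(1 + Complex.I * Real.sqrt 3) / 2‖ ≤ 2 := by
    have := norm_dir_le (Real.pi / 2)
    have e : (1 + Complex.I * Real.sqrt 3) / 2 = 1 - dir (Real.pi / 2) := by simp [dir]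
    have h6 : Real.sqrt 3 ≤ 2 := by rw [Real.sqrt_le_left (by norm_num)]; norm_num
    rw [norm_div, Complex.norm_two]
    have := norm_add_le 1 (Complex.I * Real.sqrt 3)
    rw [norm_mul, Complex.norm_I, one_mul, Complex.norm_real, Real.norm_eq_abs,
      abs_of_nonneg (Real.sqrt_nonneg 3), norm_one] at this
    linarith
  unfold dir'
  rw [norm_neg, norm_mul, Complex.norm_real, ← Real.sin_two_mul, Real.norm_eq_abs]
  have := Real.abs_sin_le_one (2 * s)
  calc _ ≤ 1 * 2 := by gcongr
    _ = (2 : ℝ) := by norm_num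

lemma hasDerivAt_rayIntegral (s : ℝ) : HasDerivAt rayIntegral 0 s := by
  have key := hasDerivAt_integral_of_dominated_loc_of_deriv_le (𝕜 := ℝ)
    (μ := volume.restrict (Ioi (0 : ℝ))) (x₀ := s) (s := univ)
    (F := fun s t => dir s * (1 / denom (dir s * t) ^ 2))
    (F' := fun s t => dir' s * core s t)
    (bound := fun t => 24000 * Real.exp (-(1 / 2) * t))
    univ_mem
    (Eventually.of_forall fun s => ((integrable_inv s).const_mul (dir s)).aestronglyMeasurable)
    ((integrable_inv s).const_mul (dir s))
    ((integrable_core s).const_mul (dir' s)).aestronglyMeasurable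
    ?_ (integrable_bound 24000) ?_
  · have := key.2
    rwa [integral_const_mul, integral_core, mul_zero] at this
  · filter_upwards [ae_restrict_mem measurableSet_Ioi] with t ht s _
    rw [norm_mul]
    calc _ ≤ 2 * (12000 * Real.exp (-(1 / 2) * t)) := by
          gcongr
          exacts [norm_dir'_le s, norm_core s (le_of_lt ht)]
      _ = _ := by ring
  · filter_upwards [ae_restrict_mem measurableSet_Ioi] with t ht s _
    have hne := denom_ray_ne s (le_of_lt ht)
    have h1 := hasDerivAt_dir s
    have h2 : HasDerivAt (fun s : ℝ => denom (dir s * t)) (denom' (dir s * t) * (dir' s * t)) s :=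
      (hasDerivAt_denom _).comp s (h1.mul_const (t : ℂ))
    have h3 := h1.mul ((hasDerivAt_const s (1 : ℂ)).div (h2.pow 2) (pow_ne_zero _ hne))
    refine h3.congr_deriv ?_
    unfold core
    simp only [Pi.div_apply, Pi.pow_apply]
    field_simp
    push_cast
    ring

lemma rayIntegral_const : rayIntegral 0 = rayIntegral (Real.pi / 2) :=
  is_const_of_deriv_eq_zero (fun s => (hasDerivAt_rayIntegral s).differentiableAt)
    (fun s => (hasDerivAt_rayIntegral s).deriv) _ _

lemma dir_zero : dir 0 = 1 := by simp [dir]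
lemma dir_pi_div_two : dir (Real.pi / 2) = (1 - Complex.I * Real.sqrt 3) / 2 := by
  simp [dir]; ring

lemma sqrt3_sq : ((Real.sqrt 3 : ℝ) : ℂ) ^ 2 = 3 := by
  rw [← Complex.ofReal_pow, Real.sq_sqrt (by norm_num)]; norm_num

/-- The threefold symmetry: multiplication by `e^{(1 + i√3) t / 2}` permutes the exponents
cyclically. -/
lemma denom_neg (t : ℝ) : denom (-t)
    = Complex.exp ((1 + Complex.I * Real.sqrt 3) / 2 * t) * denom (dir (Real.pi / 2) * t) := by
  rw [dir_pi_div_two]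
  unfold denom
  rw [mul_add, mul_add, ← Complex.exp_add, ← Complex.exp_add, ← Complex.exp_add]
  have e1 : (1 + Complex.I * Real.sqrt 3) / 2 * t + (1 - Complex.I * Real.sqrt 3) / 2 * t
    = (t : ℂ) := by ring
  have e2 : (1 + Complex.I * Real.sqrt 3) / 2 * t + -((1 - Complex.I * Real.sqrt 3) / 2 * t)
    = -(Complex.I * Real.sqrt 3 * -t) := by ring
  have e3 : (1 + Complex.I * Real.sqrt 3) / 2 * t
      + -(Complex.I * Real.sqrt 3 * ((1 - Complex.I * Real.sqrt 3) / 2 * t)) = -(t : ℂ) := by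
    linear_combination (t : ℂ) / 2 * (Real.sqrt 3 ^ 2 * Complex.I_sq - sqrt3_sq)
  rw [e1, e2, e3, neg_neg]
  ring

lemma norm_denom_neg (t : ℝ) (ht : 0 ≤ t) : Real.exp t / 7 ≤ ‖denom (-t)‖ := by
  have h := denom_ray (Real.pi / 2) ht
  rw [denom_neg, norm_mul, Complex.norm_exp, Complex.re_mul_ofReal]
  have : ((1 + Complex.I * Real.sqrt 3) / 2 : ℂ).re = 1 / 2 := by simp
  rw [this]
  calc Real.exp t / 7 = Real.exp (1 / 2 * t) * (Real.exp (t / 2) / 7) := by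
        rw [← mul_div_assoc, ← Real.exp_add]; congr 2; ring
    _ ≤ _ := by gcongr

lemma denom_neg_ne (t : ℝ) (ht : 0 ≤ t) : denom (-t) ≠ 0 := by
  have := norm_denom_neg t ht
  have h := Real.exp_pos t
  exact norm_pos_iff.1 (by linarith)

lemma integrable_neg : IntegrableOn (fun t : ℝ => 1 / denom (-t) ^ 2) (Ioi 0) := by
  have hc : ContinuousOn (fun t : ℝ => 1 / denom (-t) ^ 2) (Ioi 0) := by
    have := continuous_denom
    exact ContinuousOn.div (by fun_prop) (by fun_prop)
      fun t ht => pow_ne_zero _ (denom_neg_ne t (le_of_lt ht))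
  refine Integrable.mono' (integrable_bound 49) (hc.aestronglyMeasurable measurableSet_Ioi) ?_
  filter_upwards [ae_restrict_mem measurableSet_Ioi] with t ht
  have ht : 0 < t := ht
  have h := norm_denom_neg t ht.le
  have h0 := Real.exp_pos t
  calc ‖1 / denom (-t) ^ 2‖ ≤ 1 / (Real.exp t / 7) ^ 2 := by
        rw [norm_div, norm_one, norm_pow]; gcongr
    _ = 49 * Real.exp (-(2 * t)) := by
        rw [two_mul, Real.exp_neg, Real.exp_add]; field_simp; norm_num
    _ ≤ _ := by gcongr; linarith

/-- The integrand is the derivative of `eᵗ / (2 denom (-t))`. -/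
lemma integral_comb : ∫ t in Ioi (0 : ℝ), (1 / denom (-t) ^ 2
    + dir (Real.pi / 2) * (1 / denom (dir (Real.pi / 2) * t) ^ 2)) = 1 / 3 := by
  have hder : ∀ t ∈ Ici (0 : ℝ),
      HasDerivAt (fun t : ℝ => 1 / 2 * (Complex.exp t / denom (-t)))
      (1 / denom (-t) ^ 2 + dir (Real.pi / 2) * (1 / denom (dir (Real.pi / 2) * t) ^ 2)) t := by
    intro t ht
    have hne := denom_neg_ne t ht
    have hne' := denom_ray_ne (Real.pi / 2) ht
    have h1 : HasDerivAt (fun t : ℝ => (t : ℂ)) 1 t := Complex.ofRealCLM.hasDerivAt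
    have h2 : HasDerivAt (fun t : ℝ => denom (-t)) (denom' (-t) * -1) t :=
      (hasDerivAt_denom _).comp t h1.neg
    refine ((h1.cexp.div h2 hne).const_mul (1 / 2)).congr_deriv ?_
    have e : 1 / denom (dir (Real.pi / 2) * t) ^ 2
        = Complex.exp t * Complex.exp (Complex.I * Real.sqrt 3 * t) / denom (-t) ^ 2 := by
      have : Complex.exp t * Complex.exp (Complex.I * Real.sqrt 3 * t)
          = Complex.exp ((1 + Complex.I * Real.sqrt 3) / 2 * t) ^ 2 := by
        rw [← Complex.exp_add, ← Complex.exp_nat_mul]; congr 1; push_cast; ring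
      rw [this, denom_neg, mul_pow]
      have := Complex.exp_ne_zero ((1 + Complex.I * Real.sqrt 3) / 2 * t)
      field_simp
    rw [e]
    field_simp
    rw [dir_pi_div_two]
    have h4 : Complex.exp t * Complex.exp (-t) = 1 := by rw [← Complex.exp_add]; simp
    unfold denom denom'
    simp only [neg_neg, mul_neg]
    ring_nf
    ring_nf at h4
    linear_combination 2 * h4
  have hlim : Tendsto (fun t : ℝ => 1 / 2 * (Complex.exp t / denom (-t))) atTop (𝓝 (1 / 2)) := by
    -- The reciprocal `denom (-t) / eᵗ` is `1` plus two decaying exponentials.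
    have h0 : Tendsto (fun t : ℝ => (Complex.exp t / denom (-t))⁻¹ - 1) atTop (𝓝 0) := by
      refine squeeze_zero_norm' ?_ (tendsto_exp_half 2)
      filter_upwards [eventually_ge_atTop 0] with t ht
      have e : (Complex.exp t / denom (-t))⁻¹ - 1 = Complex.exp (-(2 * t : ℝ))
          + Complex.exp (Complex.I * Real.sqrt 3 * t - t) := by
        rw [inv_div, sub_eq_iff_eq_add, div_eq_iff (Complex.exp_ne_zero _), add_mul, add_mul,
          ← Complex.exp_add, ← Complex.exp_add]
        unfold denom
        push_cast
        ring_nf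
      rw [e]
      refine (norm_add_le _ _).trans ?_
      rw [Complex.norm_exp, Complex.norm_exp]
      have r1 : (-((2 * t : ℝ) : ℂ)).re = -(2 * t) := by simp
      have r2 : (Complex.I * Real.sqrt 3 * t - t : ℂ).re = -t := by simp
      rw [r1, r2]
      have a1 : Real.exp (-(2 * t)) ≤ Real.exp (-(1 / 2) * t) := by gcongr; linarith
      have a2 : Real.exp (-t) ≤ Real.exp (-(1 / 2) * t) := by gcongr; linarith
      linarith
    have h1 := (h0.add_const 1).inv₀ (by simp)
    simpa using h1.const_mul (1 / 2 : ℂ)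
  rw [integral_Ioi_of_hasDerivAt_of_tendsto' hder
    (integrable_neg.add ((integrable_inv _).const_mul _)) hlim]
  norm_num [denom]

/-- `∫_{-∞}^∞ dx / (eˣ + e⁻ˣ + e^{i√3 x})² = 1/3`. -/
theorem stmt_4 :
    ∫ x : ℝ, 1 / (Complex.exp x + Complex.exp (-x) +
        Complex.exp (Complex.I * Real.sqrt 3 * x)) ^ 2
      = (1 / 3 : ℂ) := by
  have hf : ∀ x : ℝ, 1 / (Complex.exp x + Complex.exp (-x) +
        Complex.exp (Complex.I * Real.sqrt 3 * x)) ^ 2 = 1 / denom (-x) ^ 2 := by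
    intro x
    simp only [denom, neg_neg, mul_neg]
    rw [add_comm (Complex.exp x)]
  simp_rw [hf]
  have hpos := integrable_inv 0
  simp only [dir_zero, one_mul] at hpos
  have hneg : IntegrableOn (fun t : ℝ => 1 / denom (-t) ^ 2) (Iic 0) := by
    rw [integrableOn_Iic_iff_integrableOn_Iio]
    have h := ((Measure.measurePreserving_neg (volume : Measure ℝ)).integrableOn_comp_preimage
      (Homeomorph.neg ℝ).measurableEmbedding).2 hpos
    have e : (Neg.neg : ℝ → ℝ) ⁻¹' Ioi 0 = Iio 0 := by ext x; simp
    rw [e] at h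
    refine h.congr_fun (fun x _ => ?_) measurableSet_Iio
    simp
  rw [← intervalIntegral.integral_Iic_add_Ioi hneg integrable_neg]
  have h0 : ∫ t in Iic (0 : ℝ), 1 / denom (-t) ^ 2 = rayIntegral 0 := by
    have := integral_comp_neg_Iic 0 (fun t : ℝ => 1 / denom t ^ 2)
    simp only [Complex.ofReal_neg, neg_zero] at this
    rw [this, rayIntegral]
    simp only [dir_zero, one_mul]
  rw [h0, rayIntegral_const, rayIntegral, add_comm, ← integral_add integrable_neg
    ((integrable_inv _).const_mul _), integral_comb]
end

section
/- $\int_{-\infty}^{\infty} \frac{e^{i\sqrt{3}\, x} \cosh x}{\left(e^{x} + e^{-x} + e^{i\sqrt{3}\, x}\right)^{2}}\, dx = \frac{1}{12}$. -/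
/-!
Write `w = i√3`, `D z = e^z + e^{-z} + e^{wz}` and let `h` be the integrand, so that the integral is
`∫_0^∞ (h(t) + h(-t)) dt`. The exponents `1, -1, w` are the vertices of an equilateral triangle, so
`D` is, up to an exponential factor, invariant under rotation by `2π/3`. This turns `h(-t)` into
`ζ k(ζ t)`, where `ζ = e^{iπ/3} = (1 + w) / 2` and `k z = ζ⁻¹ (1 + e^{(w-1)z}) / (2 (D z)²)`
(`integrand_neg`).

`D` has no zeros in the closed sector between the rays `[0, ∞)` and `ζ[0, ∞)` (`den_ne_zero`) and `k`
decays there, so the second ray may be rotated back onto the first: `k` has a primitive `P` on the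
convex sector, and `P(ζR) - P(R) → 0` (`tendsto_primitive_sub`). Finally `h + k` is an exact
derivative on the real line, of `q = ((1 + w)/8 · e^t + w/4 · e^{-t}) / D` (`hasDerivAt_exact`). The
integral is therefore `q(∞) - q(0) = (1 + w)/8 - ((1 + w)/8 + w/4)/3 = 1/12`.
-/

open Complex Set Filter Topology MeasureTheory

namespace RotInt

/-- The third exponent `w = i√3`. -/
noncomputable def w : ℂ := Complex.I * Real.sqrt 3

lemma w_sq : w ^ 2 = -3 := by
  have : ((Real.sqrt 3 : ℝ) : ℂ) ^ 2 = 3 := by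
    rw [← Complex.ofReal_pow, Real.sq_sqrt (by norm_num)]; norm_num
  rw [w, mul_pow, this, Complex.I_sq]; norm_num

lemma w_re : w.re = 0 := by simp [w]

lemma w_im : w.im = Real.sqrt 3 := by simp [w]

/-- The denominator `e^z + e^{-z} + e^{i√3 z}` before squaring, on all of `ℂ`. -/
noncomputable def D (z : ℂ) : ℂ := exp z + exp (-z) + exp (w * z)

/-- The integrand, with `cosh` expanded. -/
noncomputable def h (x : ℝ) : ℂ :=
  exp (w * x) * ((exp x + exp (-x)) / 2) / D x ^ 2

/-- The function whose integral along the ray through `e^{iπ/3} = (1 + w) / 2` is `∫_0^∞ h(-t) dt`;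
the prefactor `(1 - w) / 2` is `e^{-iπ/3}`. -/
noncomputable def k (z : ℂ) : ℂ :=
  (1 - w) / 2 * ((1 + exp ((w - 1) * z)) / 2) / D z ^ 2

/-- The closed sector `0 ≤ arg z ≤ π/3`, including the origin. -/
def S : Set ℂ := {z | 0 ≤ z.im ∧ z.im ≤ Real.sqrt 3 * z.re}

lemma convex_S : Convex ℝ S := by
  rintro x ⟨hx, hx'⟩ y ⟨hy, hy'⟩ a b ha hb -
  simp only [S, mem_ofPred_eq, add_im, add_re, real_smul, re_ofReal_mul, im_ofReal_mul]
  constructor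
  · positivity
  · nlinarith [mul_le_mul_of_nonneg_left hx' ha, mul_le_mul_of_nonneg_left hy' hb]

lemma re_nonneg {z : ℂ} (hz : z ∈ S) : 0 ≤ z.re := by
  have h3 : 0 < Real.sqrt 3 := by positivity
  exact nonneg_of_mul_nonneg_right (hz.1.trans hz.2) h3

lemma ofReal_mem_S {t : ℝ} (ht : 0 ≤ t) : (t : ℂ) ∈ S := by
  simp only [S, mem_ofPred_eq, ofReal_im, ofReal_re]
  exact ⟨le_rfl, by positivity⟩

lemma ray_re (t : ℝ) : ((1 + w) / 2 * t).re = t / 2 := by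
  rw [re_mul_ofReal]; simp [w_re]; ring

lemma ray_im (t : ℝ) : ((1 + w) / 2 * t).im = Real.sqrt 3 * (t / 2) := by
  rw [im_mul_ofReal]; simp [w_im]; ring

lemma ray_mem_S {t : ℝ} (ht : 0 ≤ t) : (1 + w) / 2 * (t : ℂ) ∈ S := by
  simp only [S, mem_ofPred_eq, ray_re, ray_im]
  exact ⟨by positivity, le_rfl⟩

lemma norm_exp_w_le {z : ℂ} (hz : z ∈ S) : ‖exp (w * z)‖ ≤ 1 := by
  rw [norm_exp, mul_re, w_re, w_im, Real.exp_le_one_iff]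
  have := mul_nonneg (Real.sqrt_nonneg 3) hz.1
  linarith

/-- With `z = a + bi`, a zero would force `4 (sinh² a + cos² b) = |e^z + e^{-z}|² ≤ 1`; but
`sinh² a ≥ a² ≥ b²/3` on the sector, which beats `1/4` for `b > 1`, and so does `cos² b` for
`b ≤ 1`. -/
lemma den_ne_zero {z : ℂ} (hz : z ∈ S) : D z ≠ 0 := by
  intro h0
  have h1 : exp z + exp (-z) = -exp (w * z) := by
    rw [D] at h0; linear_combination h0
  have h2 : ‖exp z + exp (-z)‖ ≤ 1 := by rw [h1, norm_neg]; exact norm_exp_w_le hz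
  have h3 : exp z + exp (-z) = 2 * cosh z := (Complex.two_cosh z).symm
  have h4 : normSq (exp z + exp (-z)) = 4 * (Real.sinh z.re ^ 2 + Real.cos z.im ^ 2) := by
    rw [h3, normSq_mul]
    conv_lhs => rw [← re_add_im z, Complex.cosh_add, Complex.cosh_mul_I, Complex.sinh_mul_I]
    rw [← ofReal_cosh, ← ofReal_sinh, ← ofReal_cos, ← ofReal_sin, normSq_apply, normSq_apply]
    simp only [add_re, add_im, mul_re, mul_im, ofReal_re, ofReal_im, I_re, I_im, re_ofNat, im_ofNat]
    have e1 := Real.cosh_sq z.re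
    have e2 := Real.sin_sq_add_cos_sq z.im
    linear_combination 4 * Real.cos z.im ^ 2 * e1 + 4 * Real.sinh z.re ^ 2 * e2
  have h5 : normSq (exp z + exp (-z)) ≤ 1 := by
    rw [normSq_eq_norm_sq]; exact pow_le_one₀ (norm_nonneg _) h2
  have ha := re_nonneg hz
  have h6 : z.re ^ 2 ≤ Real.sinh z.re ^ 2 := by
    gcongr; exact Real.self_le_sinh_iff.2 ha
  have h7 : z.im ^ 2 ≤ 3 * z.re ^ 2 := by
    have := pow_le_pow_left₀ hz.1 hz.2 2
    rwa [mul_pow, Real.sq_sqrt (by norm_num)] at this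
  by_cases hb : z.im ^ 2 ≤ 1
  · have h8 := Real.one_sub_sq_div_two_le_cos (x := z.im)
    have h9 : (1 - z.im ^ 2 / 2) ^ 2 ≤ Real.cos z.im ^ 2 := by
      apply pow_le_pow_left₀ _ h8; linarith
    nlinarith
  · nlinarith [sq_nonneg (Real.cos z.im)]

lemma le_norm_D {z : ℂ} (hz : z ∈ S) : 2 * z.re - 1 ≤ ‖D z‖ := by
  have h1 : ‖exp z‖ - ‖exp (-z)‖ = 2 * Real.sinh z.re := by
    rw [norm_exp, norm_exp, neg_re, Real.sinh_eq]; ring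
  have h2 := Real.self_le_sinh_iff.2 (re_nonneg hz)
  have h3 := norm_exp_w_le hz
  have h4 : ‖exp z‖ ≤ ‖D z‖ + ‖exp (-z)‖ + ‖exp (w * z)‖ := by
    have : exp z = D z - exp (-z) - exp (w * z) := by rw [D]; ring
    calc ‖exp z‖ = ‖D z - exp (-z) - exp (w * z)‖ := by rw [← this]
      _ ≤ _ := (norm_sub_le _ _).trans (by gcongr; exact norm_sub_le _ _)
  linarith

lemma norm_w_le : ‖w‖ ≤ 2 := by
  have : ‖w‖ ^ 2 = 3 := by rw [← norm_pow, w_sq]; norm_num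
  nlinarith [norm_nonneg w]

lemma norm_k_le {z : ℂ} (hz : z ∈ S) {m : ℝ} (hm : 0 < m) (hD : m ≤ ‖D z‖) :
    ‖k z‖ ≤ 2 / m ^ 2 := by
  have h1 : ‖exp ((w - 1) * z)‖ ≤ 1 := by
    rw [sub_mul, one_mul, sub_eq_add_neg, exp_add, norm_mul]
    refine mul_le_one₀ (norm_exp_w_le hz) (norm_nonneg _) ?_
    rw [norm_exp, Real.exp_le_one_iff, neg_re]
    linarith [re_nonneg hz]
  have h2 : ‖(1 - w) / 2‖ ≤ 2 := by
    rw [norm_div, RCLike.norm_ofNat]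
    have := norm_sub_le 1 w
    rw [norm_one] at this
    linarith [norm_w_le]
  have h3 : ‖(1 + exp ((w - 1) * z)) / 2‖ ≤ 1 := by
    rw [norm_div, RCLike.norm_ofNat]
    have := norm_add_le 1 (exp ((w - 1) * z))
    rw [norm_one] at this
    linarith
  rw [k, norm_div, norm_mul, norm_pow]
  gcongr
  calc _ ≤ (2 : ℝ) * 1 := by gcongr
    _ = 2 := by norm_num

lemma differentiable_D : Differentiable ℂ D := by
  unfold D; fun_prop

lemma differentiableOn_k : DifferentiableOn ℂ k S := by
  unfold k
  refine DifferentiableOn.div (by fun_prop) (differentiable_D.pow 2).differentiableOn ?_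
  exact fun z hz => pow_ne_zero 2 (den_ne_zero hz)

/-- The arc from `R` to `e^{iπ/3} R` is replaced by the chord, on which `Re z ≥ R/2`, hence
`‖D z‖ ≥ R - 1 ≥ R/2` and `‖k z‖ ≤ 8 / R²`
once `R ≥ 2`. -/
lemma tendsto_primitive_sub {P : ℂ → ℂ} (hP : ∀ a ∈ S, HasDerivWithinAt P (k a) S a) :
    Tendsto (fun t : ℝ => P ((1 + w) / 2 * t) - P t) atTop (𝓝 0) := by
  have hbound : ∀ᶠ t : ℝ in atTop, ‖P ((1 + w) / 2 * t) - P t‖ ≤ 16 / t := by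
    filter_upwards [eventually_ge_atTop 2] with t ht
    have ht0 : 0 ≤ t := by linarith
    have hconv : Convex ℝ (S ∩ {z : ℂ | t / 2 ≤ z.re}) :=
      convex_S.inter (convex_halfSpace_re_ge _)
    have hk : ∀ z ∈ S ∩ {z : ℂ | t / 2 ≤ z.re}, ‖k z‖ ≤ 2 / (t / 2) ^ 2 := by
      rintro z ⟨hz, hz'⟩
      apply norm_k_le hz (by linarith)
      have := le_norm_D hz
      simp only [mem_ofPred_eq] at hz'
      linarith
    have := hconv.norm_image_sub_le_of_norm_hasDerivWithin_le
      (f := P) (f' := k) (x := (t : ℂ)) (y := (1 + w) / 2 * t)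
      (fun z hz => (hP z hz.1).mono inter_subset_left) hk
      ⟨ofReal_mem_S ht0, by simp; linarith⟩
      ⟨ray_mem_S ht0, by simp only [mem_ofPred_eq, ray_re]; exact le_rfl⟩
    refine this.trans ?_
    have e : (1 + w) / 2 * (t : ℂ) - t = (w - 1) / 2 * t := by ring
    have hn : ‖(w - 1) / 2 * (t : ℂ)‖ ≤ 2 * t := by
      rw [norm_mul, norm_div, RCLike.norm_ofNat, norm_real, Real.norm_of_nonneg ht0]
      have := norm_sub_le w 1
      rw [norm_one] at this
      gcongr
      linarith [norm_w_le]
    rw [e]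
    calc _ ≤ 2 / (t / 2) ^ 2 * (2 * t) := by gcongr
      _ = 16 / t := by field_simp; norm_num
  exact squeeze_zero_norm' hbound (tendsto_const_nhds.div_atTop tendsto_id)

/-- The rotation identity: `D(-t) = e^{(1-w)t/2} D(ζ t)` for `ζ = (1 + w) / 2`. -/
lemma integrand_neg (t : ℝ) : h (-t) = (1 + w) / 2 * k ((1 + w) / 2 * t) := by
  have hw := w_sq
  have hD : D (-t) = exp ((1 - w) / 2 * t) * D ((1 + w) / 2 * t) := by
    simp only [D, mul_add, ← exp_add]
    have e1 : (1 - w) / 2 * (t : ℂ) + (1 + w) / 2 * t = t := by ring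
    have e2 : (1 - w) / 2 * (t : ℂ) + -((1 + w) / 2 * t) = w * -t := by ring
    have e3 : (1 - w) / 2 * (t : ℂ) + w * ((1 + w) / 2 * t) = -t := by
      linear_combination (t : ℂ) / 2 * hw
    rw [e1, e2, e3, neg_neg]; ring
  have hN : exp (w * -t) * ((exp (-t) + exp (- -t)) / 2)
      = exp ((1 - w) / 2 * t) ^ 2 * ((1 + exp ((w - 1) * ((1 + w) / 2 * t))) / 2) := by
    have e1 : (w - 1) * ((1 + w) / 2 * (t : ℂ)) = -t + -t := by
      linear_combination (t : ℂ) / 2 * hw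
    have e2 : exp ((1 - w) / 2 * t) ^ 2 = exp (t : ℂ) * exp (w * -t) := by
      rw [← exp_nat_mul, ← exp_add]; congr 1; push_cast; ring
    have e3 : exp (t : ℂ) * exp (-t) = 1 := by rw [← exp_add]; simp
    rw [e1, e2, exp_add, neg_neg]
    linear_combination -exp (w * -t) * exp (-t) / 2 * e3
  have hz : (1 + w) / 2 * ((1 - w) / 2) = 1 := by linear_combination -hw / 4
  have hE := pow_ne_zero 2 (exp_ne_zero ((1 - w) / 2 * (t : ℂ)))
  simp only [h, k, ofReal_neg]
  rw [hN, hD, mul_pow, mul_div_mul_left _ _ hE, ← mul_div_assoc,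
    ← mul_assoc ((1 + w) / 2) ((1 - w) / 2), hz, one_mul]

/-- An antiderivative of `h + k` on the real line. -/
noncomputable def q (t : ℝ) : ℂ :=
  ((1 + w) / 8 * exp t + w / 4 * exp (-t)) / D t

lemma D_ofReal_ne_zero {t : ℝ} (ht : 0 ≤ t) : D t ≠ 0 := den_ne_zero (ofReal_mem_S ht)

lemma hasDerivAt_exact {t : ℝ} (ht : 0 ≤ t) : HasDerivAt q (h t + k t) t := by
  have hid : HasDerivAt (fun z : ℂ => z) 1 (t : ℂ) := hasDerivAt_id _
  have hE := hid.cexp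
  have hE' := hid.neg.cexp
  have hG := (hid.const_mul w).cexp
  have hq := (((hE.const_mul ((1 + w) / 8)).add (hE'.const_mul (w / 4))).div
    ((hE.add hE').add hG) (D_ofReal_ne_zero ht)).comp_ofReal
  refine hq.congr_deriv ?_
  have hD : exp (t : ℂ) + exp (-t) + exp (w * t) ≠ 0 := D_ofReal_ne_zero ht
  have e3 : exp (t : ℂ) * exp (-t) = 1 := by rw [← exp_add]; simp
  have e4 : exp ((w - 1) * (t : ℂ)) = exp (w * t) * exp (-t) := by
    rw [← exp_add]; congr 1; ring
  have hw := w_sq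
  simp only [h, k, D, e4, Pi.add_apply, Pi.neg_apply]
  rw [← add_div]
  congr 1
  generalize exp (t : ℂ) = E at *
  generalize exp (-(t : ℂ)) = E' at *
  generalize exp (w * (t : ℂ)) = G at *
  linear_combination (1 - w) / 4 * e3 + (-E * G / 8 - E' * G / 4) * hw

lemma tendsto_q : Tendsto q atTop (𝓝 ((1 + w) / 8)) := by
  rw [tendsto_iff_norm_sub_tendsto_zero]
  have hbound : ∀ᶠ t : ℝ in atTop, ‖q t - (1 + w) / 8‖ ≤ 3 / t := by
    filter_upwards [eventually_ge_atTop 1] with t ht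
    have ht0 : 0 ≤ t := by linarith
    have hD := D_ofReal_ne_zero ht0
    have e : q t - (1 + w) / 8
        = (w / 4 * exp (-t) - (1 + w) / 8 * exp (-t) - (1 + w) / 8 * exp (w * t)) / D t := by
      rw [q, eq_div_iff hD, sub_mul, div_mul_cancel₀ _ hD, D]; ring
    have h1 : ‖exp (-(t : ℂ))‖ ≤ 1 := by
      rw [norm_exp, Real.exp_le_one_iff]; simpa using ht0
    have h2 := norm_exp_w_le (ofReal_mem_S ht0)
    have h3 := le_norm_D (ofReal_mem_S ht0)
    rw [ofReal_re] at h3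
    have h4 : ‖w / 4‖ ≤ 1 := by
      rw [norm_div, RCLike.norm_ofNat]; linarith [norm_w_le]
    have h5 : ‖(1 + w) / 8‖ ≤ 1 := by
      rw [norm_div, RCLike.norm_ofNat]
      have := norm_add_le 1 w
      rw [norm_one] at this
      linarith [norm_w_le]
    rw [e, norm_div]
    gcongr
    · calc _ ≤ ‖w / 4 * exp (-t)‖ + ‖(1 + w) / 8 * exp (-t)‖ + ‖(1 + w) / 8 * exp (w * t)‖ :=
            (norm_sub_le _ _).trans (by gcongr; exact norm_sub_le _ _)
        _ ≤ 1 * 1 + 1 * 1 + 1 * 1 := by simp only [norm_mul]; gcongr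
        _ = 3 := by norm_num
    · linarith
  refine squeeze_zero' (Eventually.of_forall fun _ => norm_nonneg _) hbound
    (tendsto_const_nhds.div_atTop tendsto_id)

lemma cosh_le_norm_D (x : ℝ) : Real.cosh x ≤ ‖D x‖ := by
  have h1 : exp (x : ℂ) + exp (-x) = ((2 * Real.cosh x : ℝ) : ℂ) := by
    push_cast; rw [two_cosh]
  have h2 : ‖exp (w * (x : ℂ))‖ = 1 := by
    rw [norm_exp, re_mul_ofReal, w_re]; simp
  have h3 : ((2 * Real.cosh x : ℝ) : ℂ) = D x - exp (w * x) := by rw [← h1, D]; ring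
  have h4 := norm_sub_le (D x) (exp (w * x))
  rw [← h3, norm_real, Real.norm_of_nonneg (by positivity), h2] at h4
  linarith [Real.one_le_cosh x]

lemma integrable_h : Integrable h := by
  have hD : ∀ x : ℝ, D x ≠ 0 := fun x hx => by
    have := cosh_le_norm_D x
    rw [hx, norm_zero] at this
    linarith [Real.cosh_pos x]
  have hc : Continuous h := by
    unfold h
    refine Continuous.div (by fun_prop) ?_ (fun x => pow_ne_zero 2 (hD x))
    exact (differentiable_D.continuous.comp continuous_ofReal).pow 2
  refine (integrable_inv_one_add_sq.const_mul 2).mono' hc.aestronglyMeasurable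
    (Eventually.of_forall fun x => ?_)
  have h1 : (exp (x : ℂ) + exp (-x)) / 2 = (Real.cosh x : ℂ) := by
    rw [← two_cosh]; push_cast; ring
  have h2 : ‖exp (w * (x : ℂ))‖ = 1 := by
    rw [norm_exp, re_mul_ofReal, w_re]; simp
  have h3 := Real.cosh_pos x
  have h4 : 1 + x ^ 2 ≤ 2 * Real.cosh x := by
    have e1 := Real.cosh_two_mul (x / 2)
    have e2 := Real.cosh_sq (x / 2)
    have e3 : (x / 2) ^ 2 ≤ Real.sinh (x / 2) ^ 2 := by
      rw [sq_le_sq, Real.abs_sinh]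
      exact Real.self_le_sinh_iff.2 (abs_nonneg _)
    rw [mul_div_cancel₀ x two_ne_zero] at e1
    nlinarith
  rw [h, h1, norm_div, norm_mul, h2, norm_pow, norm_real, Real.norm_of_nonneg h3.le, one_mul]
  calc Real.cosh x / ‖D x‖ ^ 2 ≤ Real.cosh x / Real.cosh x ^ 2 := by
        gcongr; exact cosh_le_norm_D x
    _ = 2 / (2 * Real.cosh x) := by field_simp
    _ ≤ 2 / (1 + x ^ 2) := by gcongr
    _ = _ := by ring

lemma integral_h : ∫ x : ℝ, h x = 1 / 12 := by
  obtain ⟨P, hP⟩ := convex_S.exists_forall_hasDerivWithinAt differentiableOn_k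
  have hneg : Integrable fun x : ℝ => h (-x) := integrable_h.comp_neg
  have hsplit : ∫ x : ℝ, h x = ∫ x in Ioi (0 : ℝ), (h x + h (-x)) := by
    rw [integral_add integrable_h.integrableOn hneg.integrableOn, integral_comp_neg_Ioi, neg_zero,
      add_comm, intervalIntegral.integral_Iic_add_Ioi integrable_h.integrableOn
        integrable_h.integrableOn]
  -- Derivative of `t ↦ P (c t)` along a ray in the sector, one-sided at the origin.
  have hray : ∀ c : ℂ, (∀ t : ℝ, 0 ≤ t → c * t ∈ S) → ∀ t : ℝ, 0 ≤ t →
      HasDerivWithinAt (fun t : ℝ => P (c * t)) (c * k (c * t)) (Ici 0) t := by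
    intro c hc t ht
    have h1 : HasDerivWithinAt (fun t : ℝ => c * (t : ℂ)) c (Ici 0) t := by
      simpa using ((hasDerivAt_id t).ofReal_comp.const_mul c).hasDerivWithinAt
    have h2 := (hP (c * t) (hc t ht)).scomp t h1 (fun u hu => hc u hu)
    rw [smul_eq_mul] at h2
    exact h2
  set Q : ℝ → ℂ := fun t => q t + (P ((1 + w) / 2 * t) - P (1 * t)) with hQ
  have hderiv : ∀ t : ℝ, 0 ≤ t → HasDerivWithinAt Q (h t + h (-t)) (Ici 0) t := by
    intro t ht
    have h1 := (hasDerivAt_exact ht).hasDerivWithinAt (s := Ici 0)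
    have h2 := hray ((1 + w) / 2) (fun t ht => ray_mem_S ht) t ht
    have h3 := hray 1 (fun t ht => by simpa using ofReal_mem_S ht) t ht
    refine (h1.add (h2.sub h3)).congr_deriv ?_
    rw [integrand_neg]; ring_nf
  have hlim : Tendsto Q atTop (𝓝 ((1 + w) / 8 + 0)) := by
    refine tendsto_q.add ?_
    simpa using tendsto_primitive_sub hP
  rw [hsplit, integral_Ioi_of_hasDerivAt_of_tendsto (hderiv 0 le_rfl).continuousWithinAt
    (fun t ht => (hderiv t (le_of_lt ht)).hasDerivAt (Ici_mem_nhds ht))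
    (integrable_h.add hneg).integrableOn hlim]
  simp only [hQ, q, D, ofReal_zero, mul_zero, neg_zero, exp_zero]
  ring

end RotInt

/-- `∫_{-∞}^∞ e^{i√3 x} cosh x / (eˣ + e⁻ˣ + e^{i√3 x})² dx = 1/12`. -/
theorem stmt_5 :
    ∫ x : ℝ, Complex.exp (Complex.I * Real.sqrt 3 * x) * Real.cosh x /
        (Complex.exp x + Complex.exp (-x) + Complex.exp (Complex.I * Real.sqrt 3 * x)) ^ 2
      = (1 / 12 : ℂ) := by
  rw [← RotInt.integral_h]
  congr 1
  funext x
  have h1 : (Complex.exp (x : ℂ) + Complex.exp (-x)) / 2 = (Real.cosh x : ℂ) := by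
    rw [← Complex.two_cosh]; push_cast; ring
  rw [RotInt.h, h1, RotInt.D, RotInt.w]
end

section
/- $\int_{-\infty}^{\infty} \frac{e^{i\sqrt{3}\, x} \sinh x}{\left(2\cosh x + e^{i\sqrt{3}\, x}\right)^{2}}\, dx = \frac{i\sqrt{3}}{12}$. -/
/-!
Write `ω = (-1 + i√3)/2`, `A z = exp (2 ω z)`, `B z = exp (-2 z)`, `E = 1 + A + B`, and let `g` be
the integrand. Pulling `e^{|x|}` out of the denominator gives, for `x ≥ 0`,
`g x = k₁ x` and `g (-x) = k₂ ((1 + ω) x)`, where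
`k₁ = (A - A B) / (2 E²)` and `k₂ = (A B - B) / (2 E²)`.
Both follow from the fact that `1`, `-1`, `i√3` are the vertices of an equilateral triangle, so
that rotating `z` by `1 + ω = e^{iπ/3}` permutes the three exponentials up to a common factor.

On the closed sector `0 ≤ arg z ≤ π/3` one has `Re E ≥ 1/10`, so `k₂` is holomorphic there and
bounded by `100 e^{-2 Re z}`. It has a primitive `P` on this convex set, and
`P ((1 + ω) R) - P R → 0`: the contour `arg z = π/3` may be rotated to the positive real axis.
There the contributions of the two half-lines add up to an exact derivative,
`k₁ + (1 + ω)⁻¹ k₂ = Q'` with `Q = (ω - A) / (4 E)`, whence the integral is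
`Q(∞) - Q(0) = ω/4 - (ω - 1)/12 = i√3/12`.
-/

open Filter Topology MeasureTheory

namespace SqrtThree

/-- The primitive cube root of unity `e^{2πi/3}`. -/
noncomputable def om : ℂ := (-1 + Complex.I * Real.sqrt 3) / 2

noncomputable def A (z : ℂ) : ℂ := Complex.exp (2 * om * z)

noncomputable def B (z : ℂ) : ℂ := Complex.exp (-2 * z)

/-- The denominator `2 cosh x + e^{i√3 x}` divided by `e^x`, extended to complex arguments. -/
noncomputable def E (z : ℂ) : ℂ := 1 + A z + B z

/-- The integrand on the positive half-line, extended to complex arguments. -/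
noncomputable def k₁ (z : ℂ) : ℂ := (A z - A z * B z) / (2 * E z ^ 2)

/-- The integrand on the negative half-line, parametrized by `x = -(1 + ω)⁻¹ z`. -/
noncomputable def k₂ (z : ℂ) : ℂ := (A z * B z - B z) / (2 * E z ^ 2)

/-- A primitive of `k₁ + (1 + ω)⁻¹ k₂`; note `(1 + ω)⁻¹ = -ω`. -/
noncomputable def Q (z : ℂ) : ℂ := (om - A z) / (4 * E z)

/-- The closed sector `0 ≤ arg z ≤ π/3`, with its vertex. -/
def S : Set ℂ := {z | 0 ≤ z.im ∧ z.im ≤ Real.sqrt 3 * z.re}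

/-- The integrand. -/
noncomputable def g (x : ℝ) : ℂ :=
  Complex.exp (Complex.I * Real.sqrt 3 * x) * Real.sinh x /
    (2 * Real.cosh x + Complex.exp (Complex.I * Real.sqrt 3 * x)) ^ 2

lemma sqrt3_sq : ((Real.sqrt 3 : ℝ) : ℂ) ^ 2 = 3 := by
  rw [← Complex.ofReal_pow, Real.sq_sqrt (by norm_num)]; norm_num

lemma om_sq : om ^ 2 = -1 - om := by
  unfold om
  linear_combination (1 / 4 : ℂ) * ((Real.sqrt 3 : ℝ) : ℂ) ^ 2 * Complex.I_sq
    - (1 / 4 : ℂ) * sqrt3_sq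

lemma S_convex : Convex ℝ S := by
  intro z hz w hw a b ha hb _
  obtain ⟨h1, h2⟩ := hz
  obtain ⟨h3, h4⟩ := hw
  constructor
  · simp; positivity
  · simp
    nlinarith [mul_le_mul_of_nonneg_left h2 ha, mul_le_mul_of_nonneg_left h4 hb]

lemma S_re {z : ℂ} (hz : z ∈ S) : 0 ≤ z.re := by
  have h3 : 0 < Real.sqrt 3 := by positivity
  have := hz.1.trans hz.2
  exact nonneg_of_mul_nonneg_right this h3

/-- If the cosine is negative then `θ > π/2`, so that `r ≥ π/(2√3) > 0.9`. -/
lemma exp_mul_cos_ge {r θ : ℝ} (hθ : 0 ≤ θ) (h : θ ≤ Real.sqrt 3 * r) :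
    -(9 / 20) ≤ Real.exp (-r) * Real.cos θ := by
  by_cases hc : θ ≤ Real.pi / 2
  · have : 0 ≤ Real.cos θ := Real.cos_nonneg_of_neg_pi_div_two_le_of_le
      (by linarith [Real.pi_pos]) hc
    have := mul_nonneg (Real.exp_pos (-r)).le this
    linarith
  · push Not at hc
    have h3 : Real.sqrt 3 ≤ 1.74 := by
      rw [Real.sqrt_le_left (by norm_num)]; norm_num
    have hpi := Real.pi_gt_d2
    have h30 : 0 < Real.sqrt 3 := by positivity
    have hr : 0.9 ≤ r := by
      by_contra! hr
      nlinarith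
    have he : 20 / 9 ≤ Real.exp r := by
      have := Real.quadratic_le_exp_of_nonneg (x := r) (by linarith)
      nlinarith
    have he' : Real.exp (-r) ≤ 9 / 20 := by
      rw [Real.exp_neg, inv_le_comm₀ (Real.exp_pos r) (by norm_num)]
      linarith
    nlinarith [Real.neg_one_le_cos θ, Real.exp_pos (-r)]

lemma om_mul_re (z : ℂ) : (2 * om * z).re = -(z.re + Real.sqrt 3 * z.im) := by
  simp [om]; ring

lemma om_mul_im (z : ℂ) : (2 * om * z).im = Real.sqrt 3 * z.re - z.im := by
  simp [om]; ring

lemma E_re {z : ℂ} (hz : z ∈ S) : 1 / 10 ≤ (E z).re := by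
  have h3 : 0 < Real.sqrt 3 := by positivity
  have hre := S_re hz
  obtain ⟨h1, h2⟩ := hz
  have hA := exp_mul_cos_ge (r := z.re + Real.sqrt 3 * z.im) (θ := Real.sqrt 3 * z.re - z.im)
    (by linarith) (by nlinarith [mul_nonneg (mul_nonneg h3.le h3.le) h1])
  have hB := exp_mul_cos_ge (r := 2 * z.re) (θ := 2 * z.im) (by linarith) (by linarith)
  have hA' : (A z).re = Real.exp (-(z.re + Real.sqrt 3 * z.im)) *
      Real.cos (Real.sqrt 3 * z.re - z.im) := by
    rw [A, Complex.exp_re, om_mul_re, om_mul_im]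
  have hB' : (B z).re = Real.exp (-(2 * z.re)) * Real.cos (2 * z.im) := by
    rw [B, Complex.exp_re]; simp
  simp only [E, Complex.add_re, Complex.one_re, hA', hB']
  linarith

lemma E_norm {z : ℂ} (hz : z ∈ S) : 1 / 10 ≤ ‖E z‖ := (E_re hz).trans (Complex.re_le_norm _)

lemma E_ne {z : ℂ} (hz : z ∈ S) : E z ≠ 0 := by
  rw [← norm_pos_iff]; linarith [E_norm hz]

lemma norm_A (z : ℂ) : ‖A z‖ = Real.exp (-(z.re + Real.sqrt 3 * z.im)) := by
  rw [A, Complex.norm_exp, om_mul_re]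

lemma norm_B (z : ℂ) : ‖B z‖ = Real.exp (-(2 * z.re)) := by
  rw [B, Complex.norm_exp]; simp

lemma k₂_norm {z : ℂ} (hz : z ∈ S) : ‖k₂ z‖ ≤ 100 * Real.exp (-(2 * z.re)) := by
  have hE := E_norm hz
  have hA : ‖A z‖ ≤ 1 := by
    rw [norm_A, Real.exp_le_one_iff]
    have := S_re hz
    have := mul_nonneg (Real.sqrt_nonneg 3) hz.1
    linarith
  have hN : ‖A z * B z - B z‖ ≤ 2 * ‖B z‖ := by
    have h := norm_sub_le (A z * B z) (B z)
    rw [norm_mul] at h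
    nlinarith [norm_nonneg (B z)]
  rw [k₂, norm_div, norm_mul, norm_pow, ← norm_B, div_le_iff₀ (by simp; positivity)]
  have : (1 / 10 : ℝ) ^ 2 ≤ ‖E z‖ ^ 2 := by gcongr
  have h2 : ‖(2 : ℂ)‖ = 2 := by simp
  rw [h2]
  nlinarith [norm_nonneg (B z)]

lemma hasDerivAt_A (z : ℂ) : HasDerivAt A (2 * om * A z) z := by
  have := ((hasDerivAt_id z).const_mul (2 * om)).cexp
  exact this.congr_deriv (by simp [A, mul_comm])

lemma hasDerivAt_B (z : ℂ) : HasDerivAt B (-2 * B z) z := by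
  have := ((hasDerivAt_id z).const_mul (-2 : ℂ)).cexp
  exact this.congr_deriv (by simp [B, mul_comm])

lemma hasDerivAt_E (z : ℂ) : HasDerivAt E (2 * om * A z + -2 * B z) z :=
  ((hasDerivAt_A z).const_add 1).add (hasDerivAt_B z)

lemma hasDerivAt_Q {z : ℂ} (hz : E z ≠ 0) : HasDerivAt Q (k₁ z - om * k₂ z) z := by
  have h := ((hasDerivAt_A z).const_sub om).div ((hasDerivAt_E z).const_mul 4)
    (mul_ne_zero (by norm_num) hz)
  refine h.congr_deriv ?_
  rw [k₁, k₂]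
  field_simp
  rw [E]
  linear_combination (-4 * A z) * om_sq

lemma exists_primitive : ∃ P : ℂ → ℂ, ∀ z ∈ S, HasDerivWithinAt P (k₂ z) S z := by
  apply S_convex.exists_forall_hasDerivWithinAt
  intro z hz
  have hE := E_ne hz
  have hA := (hasDerivAt_A z).differentiableAt
  have hB := (hasDerivAt_B z).differentiableAt
  have hEd := (hasDerivAt_E z).differentiableAt
  apply DifferentiableAt.differentiableWithinAt
  exact ((hA.mul hB).sub hB).div ((hEd.pow 2).const_mul 2)
    (mul_ne_zero (by norm_num) (pow_ne_zero 2 hE))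

lemma one_add_om_mul_mem {x : ℝ} (hx : 0 ≤ x) : (1 + om) * x ∈ S := by
  have h3 := Real.sqrt_nonneg 3
  have := mul_nonneg h3 hx
  constructor
  · simp [om]; positivity
  · simp [om]; linarith

lemma ofReal_mem {x : ℝ} (hx : 0 ≤ x) : (x : ℂ) ∈ S :=
  ⟨by simp, by simp; positivity⟩

lemma g_eq_k₁ (x : ℝ) : g x = k₁ x := by
  have hA : Complex.exp (Complex.I * Real.sqrt 3 * x) = A x * Complex.exp x := by
    rw [A, ← Complex.exp_add]; congr 1; rw [om]; ring
  have hB : Complex.exp (-x) = B x * Complex.exp x := by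
    rw [B, ← Complex.exp_add]; congr 1; ring
  have hs : ((Real.sinh x : ℝ) : ℂ) = Complex.exp x * (1 - B x) / 2 := by
    rw [Complex.ofReal_sinh, Complex.sinh, hB]; ring
  have hd : 2 * ((Real.cosh x : ℝ) : ℂ) + A x * Complex.exp x = Complex.exp x * E x := by
    rw [Complex.ofReal_cosh, Complex.cosh, hB, E]; ring
  rw [g, hA, hs, hd, k₁, mul_pow,
    ← mul_div_mul_left (A x - A x * B x) _ (pow_ne_zero 2 (Complex.exp_ne_zero (x : ℂ)))]
  rw [← mul_div_mul_left _ (Complex.exp (x : ℂ) ^ 2 * E x ^ 2) (two_ne_zero)]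
  congr 1 <;> ring

lemma g_neg_eq_k₂ (x : ℝ) : g (-x) = k₂ ((1 + om) * x) := by
  set z : ℂ := (1 + om) * x with hz
  have hA : Complex.exp (-x) = A z * Complex.exp x := by
    rw [A, ← Complex.exp_add]; congr 1; rw [hz]
    linear_combination (-2 * (x : ℂ)) * om_sq
  have hB : Complex.exp (Complex.I * Real.sqrt 3 * (-x : ℝ)) = B z * Complex.exp x := by
    rw [B, ← Complex.exp_add]; congr 1; rw [hz, om]; push_cast; ring
  have hs : ((Real.sinh (-x) : ℝ) : ℂ) = Complex.exp x * (A z - 1) / 2 := by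
    rw [Real.sinh_neg, Complex.ofReal_neg, Complex.ofReal_sinh, Complex.sinh, hA]; ring
  have hd : 2 * ((Real.cosh (-x) : ℝ) : ℂ) + B z * Complex.exp x = Complex.exp x * E z := by
    rw [Real.cosh_neg, Complex.ofReal_cosh, Complex.cosh, hA, E]; ring
  rw [g, hB, hs, hd, k₂, mul_pow,
    ← mul_div_mul_left (A z * B z - B z) _ (pow_ne_zero 2 (Complex.exp_ne_zero (x : ℂ)))]
  rw [← mul_div_mul_left _ (Complex.exp (x : ℂ) ^ 2 * E z ^ 2) (two_ne_zero)]
  congr 1 <;> ring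

lemma cosh_le_norm_den (x : ℝ) :
    Real.cosh x ≤ ‖2 * (Real.cosh x : ℂ) + Complex.exp (Complex.I * Real.sqrt 3 * x)‖ := by
  have h1 : ‖Complex.exp (Complex.I * Real.sqrt 3 * x)‖ = 1 := by
    rw [Complex.norm_exp]; simp
  have h2 : ‖2 * (Real.cosh x : ℂ)‖ = 2 * Real.cosh x := by
    rw [norm_mul, Complex.norm_real, Real.norm_of_nonneg (Real.cosh_pos x).le]; simp
  have h := norm_sub_le_norm_add (2 * (Real.cosh x : ℂ))
    (Complex.exp (Complex.I * Real.sqrt 3 * x))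
  rw [h1, h2] at h
  linarith [Real.one_le_cosh x]

lemma g_continuous : Continuous g := by
  unfold g
  refine Continuous.div ?_ ?_ ?_
  · exact (by fun_prop : Continuous fun x : ℝ => Complex.exp (Complex.I * Real.sqrt 3 * x)).mul
      (Complex.continuous_ofReal.comp Real.continuous_sinh)
  · exact ((continuous_const.mul (Complex.continuous_ofReal.comp Real.continuous_cosh)).add
      (by fun_prop)).pow 2
  · intro x
    refine pow_ne_zero 2 ?_
    rw [← norm_pos_iff]
    exact (Real.cosh_pos x).trans_le (cosh_le_norm_den x)

/-- Uses `|sinh| ≤ cosh`, `cosh x ≤ |denominator|` and `cosh x ≥ (1 + x²) / 4`. -/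
lemma g_norm (x : ℝ) : ‖g x‖ ≤ 4 * (1 + x ^ 2)⁻¹ := by
  have hc := Real.cosh_pos x
  have h1 : ‖Complex.exp (Complex.I * Real.sqrt 3 * x)‖ = 1 := by
    rw [Complex.norm_exp]; simp
  have hs : |Real.sinh x| ≤ Real.cosh x := by
    apply abs_le_of_sq_le_sq _ hc.le
    linarith [Real.cosh_sq x]
  have hq : (1 + x ^ 2) / 4 ≤ Real.cosh x := by
    have := Real.quadratic_le_exp_of_nonneg (abs_nonneg x)
    rw [← Real.cosh_abs, Real.cosh_eq]
    rw [sq_abs] at this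
    linarith [Real.exp_pos (-|x|), abs_nonneg x]
  have hd := cosh_le_norm_den x
  rw [g, norm_div, norm_mul, norm_pow, h1, one_mul, Complex.norm_real, Real.norm_eq_abs]
  calc _ ≤ Real.cosh x / Real.cosh x ^ 2 := by gcongr
    _ = (Real.cosh x)⁻¹ := by field_simp
    _ ≤ ((1 + x ^ 2) / 4)⁻¹ := by gcongr
    _ = _ := by rw [inv_div]; rfl

lemma g_integrable : Integrable g := by
  refine (integrable_inv_one_add_sq.const_mul 4).mono' g_continuous.aestronglyMeasurable ?_
  exact Eventually.of_forall g_norm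

lemma hasDerivWithinAt_ray {P : ℂ → ℂ} (hP : ∀ z ∈ S, HasDerivWithinAt P (k₂ z) S z)
    {c : ℂ} (hc : ∀ x : ℝ, 0 ≤ x → c * x ∈ S) {x : ℝ} (hx : 0 ≤ x) :
    HasDerivWithinAt (fun y : ℝ => P (c * y)) (k₂ (c * x) * c) (Set.Ici 0) x := by
  have h1 : HasDerivWithinAt (fun y : ℝ => c * (y : ℂ)) c (Set.Ici 0) x := by
    simpa using ((Complex.ofRealCLM.hasDerivAt (x := x)).const_mul c).hasDerivWithinAt
  exact (hP _ (hc x hx)).comp x h1 (fun y hy => hc y hy)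

lemma integral_neg_half {P : ℂ → ℂ} (hP : ∀ z ∈ S, HasDerivWithinAt P (k₂ z) S z)
    {R : ℝ} (hR : 0 ≤ R) :
    ∫ x in (-R)..0, g x = -om * (P ((1 + om) * R) - P 0) := by
  -- `-om = (1 + om)⁻¹` cancels the speed `1 + om` of the ray.
  have hray : ∀ x : ℝ, 0 ≤ x → HasDerivWithinAt (fun y : ℝ => -om * P ((1 + om) * y))
      (g (-x)) (Set.Ici 0) x := by
    intro x hx
    have h := (hasDerivWithinAt_ray hP (fun x hx => one_add_om_mul_mem hx) hx).const_mul (-om)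
    refine h.congr_deriv ?_
    rw [g_neg_eq_k₂]
    linear_combination (-k₂ ((1 + om) * x)) * om_sq
  have h := intervalIntegral.integral_comp_neg (a := 0) (b := R) g
  rw [neg_zero] at h
  rw [← h, intervalIntegral.integral_eq_sub_of_hasDerivAt_of_le hR
    (f := fun y : ℝ => -om * P ((1 + om) * y))]
  · simp; ring
  · exact fun x hx => (hray x hx.1).continuousWithinAt.mono Set.Icc_subset_Ici_self
  · exact fun x hx => (hray x hx.1.le).hasDerivAt (Ici_mem_nhds hx.1)
  · exact (g_continuous.comp continuous_neg).intervalIntegrable _ _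

lemma integral_pos_half {P : ℂ → ℂ} (hP : ∀ z ∈ S, HasDerivWithinAt P (k₂ z) S z)
    {R : ℝ} (hR : 0 ≤ R) :
    ∫ x in (0)..R, g x = (Q R - Q 0) + om * (P R - P 0) := by
  have hray : ∀ x : ℝ, 0 ≤ x → HasDerivWithinAt (fun y : ℝ => Q y + om * P y)
      (g x) (Set.Ici 0) x := by
    intro x hx
    have h := (hasDerivWithinAt_ray hP (c := 1) (fun x hx => by simpa using ofReal_mem hx)
      hx).const_mul om
    have hQ := (hasDerivAt_Q (E_ne (ofReal_mem hx))).comp_ofReal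
    have h' := hQ.hasDerivWithinAt (s := Set.Ici 0).add h
    simp only [one_mul, mul_one] at h'
    refine h'.congr_deriv ?_
    rw [g_eq_k₁]
    ring
  rw [intervalIntegral.integral_eq_sub_of_hasDerivAt_of_le hR
    (f := fun y : ℝ => Q y + om * P y)]
  · simp; ring
  · exact fun x hx => (hray x hx.1).continuousWithinAt.mono Set.Icc_subset_Ici_self
  · exact fun x hx => (hray x hx.1.le).hasDerivAt (Ici_mem_nhds hx.1)
  · exact g_continuous.intervalIntegrable _ _

/-- The integral of `k₂` over the chord from `R` to `(1 + ω) R` is small, since `Re z ≥ R/2` on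
this chord, which has length `R`. -/
lemma norm_chord_le {P : ℂ → ℂ} (hP : ∀ z ∈ S, HasDerivWithinAt P (k₂ z) S z)
    {R : ℝ} (hR : 0 ≤ R) :
    ‖P ((1 + om) * R) - P R‖ ≤ 100 * Real.exp (-R) * R := by
  have hconv : Convex ℝ (S ∩ {z : ℂ | R / 2 ≤ z.re}) :=
    S_convex.inter (convex_halfSpace_re_ge _)
  have h := hconv.norm_image_sub_le_of_norm_hasDerivWithin_le (f := P) (f' := k₂)
    (C := 100 * Real.exp (-R)) (x := (R : ℂ)) (y := (1 + om) * R)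
    (fun z hz => (hP z hz.1).mono Set.inter_subset_left) ?_ ⟨ofReal_mem hR, by simp; linarith⟩
    ⟨one_add_om_mul_mem hR, by simp [om]; linarith⟩
  · have hom : ‖om‖ = 1 := by
      have h3 : om ^ 3 = 1 := by linear_combination (om - 1) * om_sq
      have := congrArg norm h3
      rw [norm_pow, norm_one] at this
      exact (pow_eq_one_iff_of_nonneg (norm_nonneg _) (by norm_num)).1 this
    have hlen : ‖(1 + om) * (R : ℂ) - R‖ = R := by
      rw [show (1 + om) * (R : ℂ) - R = om * R by ring, norm_mul, hom, one_mul,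
        Complex.norm_real, Real.norm_of_nonneg hR]
    rwa [hlen] at h
  · intro z hz
    refine (k₂_norm hz.1).trans ?_
    have : R / 2 ≤ z.re := hz.2
    gcongr
    linarith

lemma tendsto_Q : Tendsto (fun R : ℝ => Q R) atTop (𝓝 (om / 4)) := by
  have hA : Tendsto (fun R : ℝ => A R) atTop (𝓝 0) := by
    rw [tendsto_zero_iff_norm_tendsto_zero]
    simp only [norm_A, Complex.ofReal_re, Complex.ofReal_im, mul_zero, add_zero]
    exact Real.tendsto_exp_neg_atTop_nhds_zero
  have hB : Tendsto (fun R : ℝ => B R) atTop (𝓝 0) := by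
    rw [tendsto_zero_iff_norm_tendsto_zero]
    simp only [norm_B, Complex.ofReal_re]
    exact Real.tendsto_exp_neg_atTop_nhds_zero.comp (tendsto_id.const_mul_atTop two_pos)
  have h := (hA.const_sub om).div (((hA.const_add 1).add hB).const_mul 4) (by norm_num)
  simp only [sub_zero, add_zero, mul_one] at h
  exact h

lemma Q_zero : Q 0 = (om - 1) / 12 := by
  simp [Q, E, A, B]; ring

lemma integral_g : ∫ x, g x = Complex.I * Real.sqrt 3 / 12 := by
  obtain ⟨P, hP⟩ := exists_primitive
  have h1 := intervalIntegral_tendsto_integral g_integrable tendsto_neg_atTop_atBot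
    (tendsto_id (α := ℝ) (x := atTop))
  have hchord : Tendsto (fun R : ℝ => P ((1 + om) * R) - P R) atTop (𝓝 0) := by
    have h := (Real.tendsto_pow_mul_exp_neg_atTop_nhds_zero 1).const_mul 100
    rw [mul_zero] at h
    refine squeeze_zero_norm' ?_ h
    filter_upwards [eventually_ge_atTop 0] with R hR
    refine (norm_chord_le hP hR).trans_eq ?_
    ring
  have h2 : Tendsto (fun R : ℝ => (Q R - Q 0) - om * (P ((1 + om) * R) - P R)) atTop
      (𝓝 ((om / 4 - Q 0) - om * 0)) :=
    (tendsto_Q.sub_const _).sub (hchord.const_mul om)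
  have h3 : (fun R : ℝ => (Q R - Q 0) - om * (P ((1 + om) * R) - P R)) =ᶠ[atTop]
      fun R : ℝ => ∫ x in (-R)..(id R), g x := by
    filter_upwards [eventually_ge_atTop 0] with R hR
    rw [id, ← intervalIntegral.integral_add_adjacent_intervals (b := 0)
      (g_continuous.intervalIntegrable _ _) (g_continuous.intervalIntegrable _ _),
      integral_neg_half hP hR, integral_pos_half hP hR]
    ring
  rw [tendsto_nhds_unique h1 (h2.congr' h3), Q_zero, om]
  ring

end SqrtThree

/-- `∫_{-∞}^∞ e^{i√3 x} sinh x / (2 cosh x + e^{i√3 x})² dx = i√3/12`. -/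
theorem stmt_6 :
    ∫ x : ℝ, Complex.exp (Complex.I * Real.sqrt 3 * x) * Real.sinh x /
        (2 * Real.cosh x + Complex.exp (Complex.I * Real.sqrt 3 * x)) ^ 2
      = Complex.I * Real.sqrt 3 / 12 :=
  SqrtThree.integral_g
end
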